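/- arXiv:math/9912143 — 4 statements merged into one kernel-verified Lean document; each statement's English description precedes it below -/
import Mathlib

section
/- Let ℓ ≥ 1 be an integer. Then, as x → 0⁺, log E_{U(ℓ)}[ exp( √x · (tr M + conj(tr M)) ) ] − ( x − x^{ℓ+1}/((ℓ+1)!)² ) = O(x^{ℓ+2}). -/
/-!
The Taylor coefficients of `E[exp (√x (tr M + conj (tr M)))]` are governed by the moments
`E|tr M|^{2k}`: mixed moments of unequal orders vanish by invariance under scalar matrices, so the
coefficient of `x^k` is `E|tr M|^{2k} / (k!)²`. The estimate follows from `E|tr M|^{2k} = k!` for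
`k ≤ ℓ` and `E|tr M|^{2(ℓ+1)} = (ℓ+1)! - 1`: the expectation is then
`exp x - x^{ℓ+1}/((ℓ+1)!)² + O(x^{ℓ+2})`, and taking logarithms is elementary (`log_isBigO`).

The moments come from the Schwinger-Dyson equations of the unitary group. For a permutation `σ` of
`k` letters put `p_σ(M) = ∑_b ∏ᵣ M (b (σ r)) (b r)` and `v_k(σ) = E[p_σ(M) conj (tr M)^k]`
(`permMom`), so that `v_k(1) = E|tr M|^{2k}`. Differentiating the left invariance of the mixed
moments of the entries along `exp (tA)`, `A` skew-Hermitian, and contracting indices gives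
(`permMom_rec`), for `σ = (0 p) ∘ e` with `e` fixing `0`,
`ℓ v_{n+1}(σ) + ∑_{r ≠ 0} v_{n+1}(σ (0 r)) = (n+1) · (ℓ if p = 0, else 1) · v_n(e)`.
If `v_n = n! · 1_{id}`, then `(n+1)! · 1_{id}` is a solution (`delta_rec`). The difference `u` of two
solutions satisfies `ℓ u + J u = 0` with `J` a sum of `n` involutions, and expanding
`∑_σ ∑_r (u(σ) + u(σ (0 r)))² = 2 (n - ℓ) ∑_σ u(σ)²` (`energy_identity`) shows that `u = 0` if
`n < ℓ`, and that `u` is a multiple of the sign character if `n = ℓ`. In the latter case the multiple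
is determined by `∑_σ sign(σ) p_σ(M) = 0`, a sum of determinants with repeated rows
(`sum_sign_permMom`), and equals `-1`.
-/

open MeasureTheory Matrix

noncomputable section

instance (n : ℕ) : MeasurableSpace (Matrix.unitaryGroup (Fin n) ℂ) := borel _

namespace UnitaryMoments

set_option linter.unusedSectionVars false

open scoped ComplexConjugate

local instance instBorelUnitary (n : ℕ) : BorelSpace (Matrix.unitaryGroup (Fin n) ℂ) := ⟨rfl⟩

local instance instCompactUnitary (n : ℕ) : CompactSpace (Matrix.unitaryGroup (Fin n) ℂ) := by
  suffices h : IsCompact (Matrix.unitaryGroup (Fin n) ℂ : Set (Matrix (Fin n) (Fin n) ℂ)) from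
    isCompact_iff_compactSpace.mp h
  have hK : IsCompact (Set.pi Set.univ (fun _ : Fin n =>
      Set.pi Set.univ (fun _ : Fin n => Metric.closedBall (0 : ℂ) 1))) :=
    isCompact_univ_pi fun _ => isCompact_univ_pi fun _ => isCompact_closedBall 0 1
  refine IsCompact.of_isClosed_subset hK ?_ ?_
  · have : (Matrix.unitaryGroup (Fin n) ℂ : Set (Matrix (Fin n) (Fin n) ℂ))
        = {M | M * star M = 1} := by
      ext M
      exact Matrix.mem_unitaryGroup_iff
    rw [this]
    exact isClosed_eq (by fun_prop) continuous_const
  · intro M hM i _ j _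
    simpa using entry_norm_bound_of_unitary hM i j

lemma continuous_entry {n : ℕ} (i j : Fin n) :
    Continuous fun M : Matrix.unitaryGroup (Fin n) ℂ => (M : Matrix (Fin n) (Fin n) ℂ) i j :=
  (continuous_subtype_val.matrix_elem i j)

lemma integrable_of_continuous {n : ℕ} (μ : Measure (Matrix.unitaryGroup (Fin n) ℂ))
    [IsProbabilityMeasure μ] {E : Type*} [NormedAddCommGroup E]
    [SecondCountableTopologyEither (Matrix.unitaryGroup (Fin n) ℂ) E]
    {f : Matrix.unitaryGroup (Fin n) ℂ → E} (hf : Continuous f) : Integrable f μ :=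
  hf.integrable_of_hasCompactSupport (HasCompactSupport.of_compactSpace f)

/-! ### Mixed moments of matrix entries -/

section Moments

variable {ℓ : ℕ} {ι κ : Type*} [Fintype ι] [Fintype κ]

/-- The monomial `∏ᵣ M (a r) (b r) · ∏ₛ conj (M (c s) (d s))` in the entries of a unitary
matrix and their conjugates. -/
def mono (a b : ι → Fin ℓ) (c d : κ → Fin ℓ) (M : Matrix.unitaryGroup (Fin ℓ) ℂ) : ℂ :=
  (∏ r, (M : Matrix (Fin ℓ) (Fin ℓ) ℂ) (a r) (b r)) *
    ∏ s, conj ((M : Matrix (Fin ℓ) (Fin ℓ) ℂ) (c s) (d s))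

lemma continuous_mono (a b : ι → Fin ℓ) (c d : κ → Fin ℓ) : Continuous (mono a b c d) := by
  unfold mono
  refine Continuous.mul ?_ ?_
  · exact continuous_finsetProd _ fun r _ => continuous_entry _ _
  · exact continuous_finsetProd _ fun r _ => Complex.continuous_conj.comp (continuous_entry _ _)

variable (μ : Measure (Matrix.unitaryGroup (Fin ℓ) ℂ))

/-- The mixed moment `E[∏ᵣ M (a r) (b r) · ∏ₛ conj (M (c s) (d s))]`. -/
def mom (a b : ι → Fin ℓ) (c d : κ → Fin ℓ) : ℂ := ∫ M, mono a b c d M ∂μ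

variable [IsProbabilityMeasure μ] [μ.IsMulLeftInvariant]

/-- Left invariance of the measure: the mixed moments form an invariant tensor. -/
lemma mom_invariant [DecidableEq ι] [DecidableEq κ] (g : Matrix.unitaryGroup (Fin ℓ) ℂ)
    (a b : ι → Fin ℓ) (c d : κ → Fin ℓ) :
    ∑ s : ι → Fin ℓ, ∑ s' : κ → Fin ℓ,
      ((∏ r, (g : Matrix (Fin ℓ) (Fin ℓ) ℂ) (a r) (s r)) *
        ∏ r, conj ((g : Matrix (Fin ℓ) (Fin ℓ) ℂ) (c r) (s' r))) * mom μ s b s' d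
      = mom μ a b c d := by
  unfold mom
  rw [← integral_mul_left_eq_self (mono a b c d) g]
  simp_rw [← integral_const_mul]
  have hi : ∀ (s : ι → Fin ℓ) (s' : κ → Fin ℓ) (z : ℂ),
      Integrable (fun M => z * mono s b s' d M) μ := fun s s' z =>
    integrable_of_continuous μ (continuous_const.mul (continuous_mono s b s' d))
  simp_rw [← integral_finsetSum Finset.univ (fun s' _ => hi _ s' _)]
  rw [← integral_finsetSum Finset.univ
    (fun s _ => integrable_finsetSum _ (fun s' _ => hi s s' _))]
  congr 1
  ext M
  simp only [mono, Submonoid.coe_mul, Matrix.mul_apply, map_sum, map_mul,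
    Finset.prod_univ_sum, Fintype.piFinset_univ]
  rw [Finset.sum_mul_sum]
  refine Finset.sum_congr rfl fun s _ => Finset.sum_congr rfl fun s' _ => ?_
  simp only [Finset.prod_mul_distrib]
  ring

/-- Every skew-Hermitian matrix is the velocity at the identity of a curve of unitary matrices. -/
lemma exists_curve (A : Matrix (Fin ℓ) (Fin ℓ) ℂ) (hA : Aᴴ = -A) :
    ∃ g : ℝ → Matrix.unitaryGroup (Fin ℓ) ℂ, g 0 = 1 ∧
      ∀ i j, HasDerivAt (fun t => (g t : Matrix (Fin ℓ) (Fin ℓ) ℂ) i j) (A i j) 0 := by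
  let _ : NormedRing (Matrix (Fin ℓ) (Fin ℓ) ℂ) := Matrix.linftyOpNormedRing
  let _ : NormedAlgebra ℝ (Matrix (Fin ℓ) (Fin ℓ) ℂ) := Matrix.linftyOpNormedAlgebra
  have hu : ∀ t : ℝ, NormedSpace.exp (t • A) ∈ Matrix.unitaryGroup (Fin ℓ) ℂ := by
    intro t
    rw [Matrix.mem_unitaryGroup_iff, Matrix.star_eq_conjTranspose, ← Matrix.exp_conjTranspose,
      Matrix.conjTranspose_smul, hA, ← Matrix.exp_add_of_commute]
    · simp
    · simp
  refine ⟨fun t => ⟨_, hu t⟩, ?_, ?_⟩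
  · ext1
    simp
  · intro i j
    have h := hasDerivAt_exp_smul_const (𝕂 := ℝ) A (0 : ℝ)
    simp only [zero_smul, NormedSpace.exp_zero, one_mul] at h
    exact ((Matrix.entryLinearMap ℝ ℂ i j).toContinuousLinearMap.hasFDerivAt.comp_hasDerivAt
      (0 : ℝ) h)

/-- The derivative at the identity of `g ↦ ∏ᵣ g (a r) (s r)`, summed against a function of `s`,
only sees the multi-indices `s` that differ from `a` in at most one place. -/
lemma sum_one_slot [DecidableEq ι] (A : Matrix (Fin ℓ) (Fin ℓ) ℂ) (a : ι → Fin ℓ) (r : ι)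
    (f : (ι → Fin ℓ) → ℂ) :
    ∑ s : ι → Fin ℓ, ((∏ j ∈ Finset.univ.erase r, (1 : Matrix (Fin ℓ) (Fin ℓ) ℂ) (a j) (s j))
      * A (a r) (s r)) * f s = ∑ q, A (a r) q * f (Function.update a r q) := by
  symm
  refine Finset.sum_of_injOn (fun q => Function.update a r q) ?_ (by simp) ?_ ?_
  · intro q _ q' _ h
    simpa using congrFun h r
  · intro s _ hs
    have : ∃ j ∈ Finset.univ.erase r, a j ≠ s j := by
      by_contra hcon
      push Not at hcon
      refine hs ⟨s r, by simp, ?_⟩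
      ext1 j
      by_cases hj : j = r
      · subst hj; simp
      · simp [hj, hcon j (by simp [hj])]
    obtain ⟨j, hj, hne⟩ := this
    have h0 : ∏ j ∈ Finset.univ.erase r, (1 : Matrix (Fin ℓ) (Fin ℓ) ℂ) (a j) (s j) = 0 :=
      Finset.prod_eq_zero hj (Matrix.one_apply_ne hne)
    simp [h0]
  · intro q _
    rw [Finset.prod_eq_one]
    · simp
    · intro j hj
      rw [Function.update_of_ne (Finset.ne_of_mem_erase hj), Matrix.one_apply_eq]

lemma sum_delta [DecidableEq ι] (a : ι → Fin ℓ) (f : (ι → Fin ℓ) → ℂ) :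
    ∑ s : ι → Fin ℓ, (∏ r, (1 : Matrix (Fin ℓ) (Fin ℓ) ℂ) (a r) (s r)) * f s = f a := by
  rw [Finset.sum_eq_single a]
  · simp
  · intro s _ hs
    obtain ⟨r, hr⟩ := Function.ne_iff.mp hs
    have h0 : ∏ r, (1 : Matrix (Fin ℓ) (Fin ℓ) ℂ) (a r) (s r) = 0 :=
      Finset.prod_eq_zero (Finset.mem_univ r) (Matrix.one_apply_ne hr.symm)
    simp [h0]
  · simp

/-- The action of the Lie algebra element `A` on the mixed moments, with the conjugated entries
transforming by `-Aᵀ`. -/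
def lieAct [DecidableEq ι] [DecidableEq κ] (a b : ι → Fin ℓ) (c d : κ → Fin ℓ)
    (A : Matrix (Fin ℓ) (Fin ℓ) ℂ) : ℂ :=
  ∑ r, ∑ q, A (a r) q * mom μ (Function.update a r q) b c d -
    ∑ r, ∑ q, A q (c r) * mom μ a b (Function.update c r q) d

lemma lieAct_skew [DecidableEq ι] [DecidableEq κ] (a b : ι → Fin ℓ) (c d : κ → Fin ℓ)
    (A : Matrix (Fin ℓ) (Fin ℓ) ℂ) (hA : Aᴴ = -A) : lieAct μ a b c d A = 0 := by
  obtain ⟨g, hg0, hg⟩ := exists_curve A hA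
  have hconj : ∀ i j, HasDerivAt (fun t => conj ((g t : Matrix (Fin ℓ) (Fin ℓ) ℂ) i j))
      (-A j i) 0 := by
    intro i j
    have h1 : -A j i = conj (A i j) := by
      have := congrFun (congrFun hA j) i
      simpa [Matrix.conjTranspose_apply] using this.symm
    rw [h1]
    exact (Complex.conjCLE.toContinuousLinearMap.hasFDerivAt.comp_hasDerivAt (0 : ℝ) (hg i j))
  have hg0' : (g 0 : Matrix (Fin ℓ) (Fin ℓ) ℂ) = 1 := by rw [hg0]; rfl
  have hD : HasDerivAt (fun t => ∑ s : ι → Fin ℓ, ∑ s' : κ → Fin ℓ,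
      ((∏ r, (g t : Matrix (Fin ℓ) (Fin ℓ) ℂ) (a r) (s r)) *
        ∏ r, conj ((g t : Matrix (Fin ℓ) (Fin ℓ) ℂ) (c r) (s' r))) * mom μ s b s' d)
      (∑ s : ι → Fin ℓ, ∑ s' : κ → Fin ℓ,
        ((∑ r, (∏ j ∈ Finset.univ.erase r, (g 0 : Matrix (Fin ℓ) (Fin ℓ) ℂ) (a j) (s j)) •
            A (a r) (s r)) *
          (∏ r, conj ((g 0 : Matrix (Fin ℓ) (Fin ℓ) ℂ) (c r) (s' r))) +
        (∏ r, (g 0 : Matrix (Fin ℓ) (Fin ℓ) ℂ) (a r) (s r)) *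
          (∑ r, (∏ j ∈ Finset.univ.erase r,
            conj ((g 0 : Matrix (Fin ℓ) (Fin ℓ) ℂ) (c j) (s' j))) • (-A (s' r) (c r)))) *
          mom μ s b s' d) 0 := by
    refine HasDerivAt.fun_sum fun s _ => HasDerivAt.fun_sum fun s' _ => ?_
    refine HasDerivAt.mul_const ?_ _
    exact (HasDerivAt.fun_finsetProd fun r _ => hg _ _).mul
      (HasDerivAt.fun_finsetProd fun r _ => hconj _ _)
  have hz : HasDerivAt (fun t => ∑ s : ι → Fin ℓ, ∑ s' : κ → Fin ℓ,
      ((∏ r, (g t : Matrix (Fin ℓ) (Fin ℓ) ℂ) (a r) (s r)) *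
        ∏ r, conj ((g t : Matrix (Fin ℓ) (Fin ℓ) ℂ) (c r) (s' r))) * mom μ s b s' d)
      0 (0 : ℝ) := by
    simp_rw [mom_invariant μ]
    exact hasDerivAt_const _ _
  have key := hD.unique hz
  have h1conj : ∀ i j, conj ((1 : Matrix (Fin ℓ) (Fin ℓ) ℂ) i j)
      = (1 : Matrix (Fin ℓ) (Fin ℓ) ℂ) i j := by
    intro i j
    by_cases h : i = j <;> simp [Matrix.one_apply, h]
  rw [← key]
  simp only [hg0', h1conj, add_mul, Finset.sum_add_distrib, smul_eq_mul, mul_neg,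
    Finset.sum_neg_distrib, neg_mul]
  unfold lieAct
  rw [sub_eq_add_neg]
  congr 1
  · simp_rw [mul_assoc, ← Finset.mul_sum, sum_delta, Finset.sum_mul]
    symm
    rw [Finset.sum_comm]
    exact Finset.sum_congr rfl fun r _ => sum_one_slot A a r fun s => mom μ s b c d
  · simp_rw [mul_assoc, ← Finset.mul_sum, sum_delta, Finset.sum_mul]
    rw [neg_inj]
    symm
    rw [Finset.sum_comm]
    exact Finset.sum_congr rfl fun r _ => sum_one_slot Aᵀ c r fun s => mom μ a b s d

lemma lieAct_eq_zero [DecidableEq ι] [DecidableEq κ] (a b : ι → Fin ℓ) (c d : κ → Fin ℓ)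
    (A : Matrix (Fin ℓ) (Fin ℓ) ℂ) : lieAct μ a b c d A = 0 := by
  have hlin : ∀ (B D : Matrix (Fin ℓ) (Fin ℓ) ℂ) (z w : ℂ), lieAct μ a b c d (z • B + w • D)
      = z * lieAct μ a b c d B + w * lieAct μ a b c d D := by
    intro B D z w
    simp only [lieAct, Matrix.add_apply, Matrix.smul_apply, smul_eq_mul, add_mul,
      Finset.sum_add_distrib, mul_assoc, ← Finset.mul_sum]
    ring
  -- `A` is a complex combination of the skew-Hermitian matrices `A - Aᴴ` and `i (A + Aᴴ)`.
  have hdec : A = (1 / 2 : ℂ) • (A - Aᴴ) + (-Complex.I / 2) • (Complex.I • (A + Aᴴ)) := by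
    have : -Complex.I / 2 * Complex.I = 1 / 2 := by
      rw [div_mul_eq_mul_div, neg_mul, Complex.I_mul_I]; norm_num
    rw [smul_smul, this, ← smul_add, sub_add_add_cancel, ← two_smul ℂ, smul_smul]
    norm_num
  rw [hdec, hlin, lieAct_skew, lieAct_skew]
  · simp
  · simp [add_comm]
  · simp

/-- Invariance of the mixed moments under the elementary matrix with a one at place `(p, q)`. -/
lemma mom_elementary [DecidableEq ι] [DecidableEq κ] (a b : ι → Fin ℓ) (c d : κ → Fin ℓ)
    (p q : Fin ℓ) :
    ∑ r, (if a r = p then mom μ (Function.update a r q) b c d else 0) =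
      ∑ r, (if c r = q then mom μ a b (Function.update c r p) d else 0) := by
  have h := lieAct_eq_zero μ a b c d (Matrix.single p q 1)
  rw [lieAct, sub_eq_zero] at h
  convert h using 2 with r _ r _
  · rw [Finset.sum_eq_single q]
    · by_cases hp : a r = p
      · simp [hp]
      · simp [hp, Ne.symm hp]
    · intro j _ hj
      simp [Ne.symm hj]
    · simp
  · rw [Finset.sum_eq_single p]
    · by_cases hp : c r = q
      · simp [hp]
      · simp [hp, Ne.symm hp]
    · intro j _ hj
      simp [Ne.symm hj]
    · simp

/-- Summing the elementary invariances over `p` with `q = a 0` produces the operator `ℓ + J` on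
the left, where `J` adds up the transpositions of slot `0` with the other slots of `a`, and
contractions of slot `0` with the conjugated slots on the right. -/
lemma mom_casimir [DecidableEq κ] {n : ℕ} (a b : Fin (n + 1) → Fin ℓ) (c d : κ → Fin ℓ) :
    ℓ * mom μ a b c d + ∑ r : Fin n, mom μ (a ∘ Equiv.swap 0 r.succ) b c d =
      ∑ r, (if c r = a 0 then
        ∑ p, mom μ (Function.update a 0 p) b (Function.update c r p) d else 0) := by
  have h := Finset.sum_congr rfl fun p (_ : p ∈ (Finset.univ : Finset (Fin ℓ))) =>
    mom_elementary μ (Function.update a 0 p) b c d p (a 0)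
  rw [Finset.sum_comm (f := fun p r => if c r = a 0 then _ else _)] at h
  convert h using 1
  · simp_rw [Fin.sum_univ_succ, Finset.sum_add_distrib]
    congr 1
    · simp
    · rw [Finset.sum_comm]
      refine Finset.sum_congr rfl fun r _ => ?_
      simp only [ne_eq, Fin.succ_ne_zero, not_false_eq_true, Function.update_of_ne,
        Finset.sum_ite_eq, Finset.mem_univ, if_true]
      congr 1
      ext1 j
      simp only [Function.comp, Equiv.swap_apply_def, Function.update_apply]
      split_ifs <;> simp_all
  · refine Finset.sum_congr rfl fun r _ => ?_
    split_ifs <;> simp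
/-- Contracting the left indices of a slot of `M` and a slot of `conj M` uses `Mᴴ M = 1`. -/
lemma mom_contract {n m : ℕ} (a b : Fin (n + 1) → Fin ℓ) (c d : Fin (m + 1) → Fin ℓ)
    (r : Fin (m + 1)) :
    ∑ p, mom μ (Function.update a 0 p) b (Function.update c r p) d =
      if b 0 = d r then mom μ (a ∘ Fin.succ) (b ∘ Fin.succ) (c ∘ r.succAbove) (d ∘ r.succAbove)
      else 0 := by
  unfold mom
  rw [← integral_finsetSum _ fun p _ => integrable_of_continuous μ (continuous_mono _ _ _ _)]
  have hpt : ∀ M : Matrix.unitaryGroup (Fin ℓ) ℂ,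
      ∑ p, mono (Function.update a 0 p) b (Function.update c r p) d M =
      (if b 0 = d r then 1 else 0) *
        mono (a ∘ Fin.succ) (b ∘ Fin.succ) (c ∘ r.succAbove) (d ∘ r.succAbove) M := by
    intro M
    have hM : ∑ p, (M : Matrix (Fin ℓ) (Fin ℓ) ℂ) p (b 0) *
        conj ((M : Matrix (Fin ℓ) (Fin ℓ) ℂ) p (d r)) = if b 0 = d r then 1 else 0 := by
      have h := congrFun (congrFun (Matrix.mem_unitaryGroup_iff'.mp M.2) (d r)) (b 0)
      rw [Matrix.mul_apply, Matrix.one_apply] at h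
      simp only [eq_comm (a := b 0)]
      rw [← h]
      refine Finset.sum_congr rfl fun p _ => ?_
      rw [mul_comm]
      rfl
    rw [← hM, Finset.sum_mul]
    refine Finset.sum_congr rfl fun p _ => ?_
    simp only [mono, Fin.prod_univ_succ (n := n), Fin.prod_univ_succAbove _ r,
      Function.update_self, ne_eq, Fin.succ_ne_zero, not_false_eq_true, Function.update_of_ne,
      Fin.succAbove_ne, Function.comp]
    ring
  simp_rw [hpt]
  rw [integral_const_mul]
  split_ifs <;> simp

/-- The moment `E[p_σ(M) · conj (tr M)ᵏ]`, where `p_σ(M) = ∑_b ∏ᵣ M (b (σ r)) (b r)` is the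
power-sum function attached to the permutation `σ` of `k` letters. -/
def permMom (k : ℕ) (σ : Equiv.Perm (Fin k)) : ℂ :=
  ∑ b : Fin k → Fin ℓ, ∑ c : Fin k → Fin ℓ, mom μ (b ∘ σ) b c c

/-- The recursion for `permMom` in the number of letters, with `σ = (0 p) ∘ e` decomposed
according to the image `p` of `0`. -/
lemma permMom_rec (n : ℕ) (p : Fin (n + 1)) (e : Equiv.Perm (Fin n)) :
    ℓ * permMom μ (n + 1) (Equiv.Perm.decomposeFin.symm (p, e)) +
      ∑ r : Fin n, permMom μ (n + 1)
        (Equiv.Perm.decomposeFin.symm (p, e) * Equiv.swap 0 r.succ) =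
    (n + 1) * ((if p = 0 then (ℓ : ℂ) else 1) * permMom μ n e) := by
  set σ := Equiv.Perm.decomposeFin.symm (p, e) with hσ
  have h1 : ℓ * permMom μ (n + 1) σ + ∑ r : Fin n, permMom μ (n + 1) (σ * Equiv.swap 0 r.succ)
      = ∑ b : Fin (n + 1) → Fin ℓ, ∑ c : Fin (n + 1) → Fin ℓ, ∑ r : Fin (n + 1),
        (if c r = b (σ 0) then if b 0 = c r then
          mom μ ((b ∘ σ) ∘ Fin.succ) (b ∘ Fin.succ) (c ∘ r.succAbove) (c ∘ r.succAbove)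
          else 0 else 0) := by
    unfold permMom
    rw [Finset.sum_comm (s := (Finset.univ : Finset (Fin n))), Finset.mul_sum, ← Finset.sum_add_distrib]
    refine Finset.sum_congr rfl fun b _ => ?_
    rw [Finset.sum_comm (s := (Finset.univ : Finset (Fin n))), Finset.mul_sum, ← Finset.sum_add_distrib]
    refine Finset.sum_congr rfl fun c _ => ?_
    have h := mom_casimir μ (b ∘ σ) b c c
    simp_rw [mom_contract] at h
    exact h
  have h2 : ∀ b : Fin (n + 1) → Fin ℓ, ∀ r : Fin (n + 1), ∑ c : Fin (n + 1) → Fin ℓ,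
        (if c r = b (σ 0) then if b 0 = c r then
          mom μ ((b ∘ σ) ∘ Fin.succ) (b ∘ Fin.succ) (c ∘ r.succAbove) (c ∘ r.succAbove)
          else 0 else 0) =
        if b 0 = b p then ∑ c : Fin n → Fin ℓ,
          mom μ ((b ∘ σ) ∘ Fin.succ) (b ∘ Fin.succ) c c else 0 := by
    intro b r
    rw [← (Fin.insertNthEquiv (fun _ => Fin ℓ) r).sum_comp, Fintype.sum_prod_type]
    have hσ0 : σ 0 = p := by simp [hσ]
    have hc : ∀ (x : Fin ℓ) (c : Fin n → Fin ℓ),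
        (Fin.insertNthEquiv (fun _ => Fin ℓ) r (x, c)) ∘ r.succAbove = c := by
      intro x c; ext1 j; simp [Fin.insertNthEquiv]
    have hx : ∀ (x : Fin ℓ) (c : Fin n → Fin ℓ),
        (Fin.insertNthEquiv (fun _ => Fin ℓ) r (x, c)) r = x := by
      intro x c; simp [Fin.insertNthEquiv]
    simp only [hc, hx, hσ0]
    rw [Finset.sum_eq_single (b p)]
    · simp only [if_true]
      split_ifs <;> simp
    · intro x _ hxp
      simp [hxp]
    · simp
  have h3 : ∑ b : Fin (n + 1) → Fin ℓ, (if b 0 = b p then ∑ c : Fin n → Fin ℓ,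
          mom μ ((b ∘ σ) ∘ Fin.succ) (b ∘ Fin.succ) c c else 0)
        = (if p = 0 then (ℓ : ℂ) else 1) * permMom μ n e := by
    rw [← (Fin.consEquiv (fun _ => Fin ℓ)).sum_comp, Fintype.sum_prod_type, Finset.sum_comm]
    unfold permMom
    rw [Finset.mul_sum]
    refine Finset.sum_congr rfl fun b _ => ?_
    have hs : ∀ x : Fin ℓ, (Fin.consEquiv (fun _ => Fin ℓ) (x, b)) ∘ Fin.succ = b := by
      intro x; ext1 j; simp [Fin.consEquiv]
    have h0 : ∀ x : Fin ℓ, (Fin.consEquiv (fun _ => Fin ℓ) (x, b)) 0 = x := by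
      intro x; simp [Fin.consEquiv]
    -- A multi-index with equal entries at `0` and `p` does not see the factor `swap 0 p` of `σ`.
    have hσs : ∀ x : Fin ℓ, x = (Fin.consEquiv (fun _ => Fin ℓ) (x, b)) p →
        ((Fin.consEquiv (fun _ => Fin ℓ) (x, b)) ∘ σ) ∘ Fin.succ = b ∘ e := by
      intro x hx
      ext1 j
      have hsw : ∀ y, (Fin.consEquiv (fun _ => Fin ℓ) (x, b)) (Equiv.swap 0 p y)
          = (Fin.consEquiv (fun _ => Fin ℓ) (x, b)) y := by
        intro y
        rw [Equiv.swap_apply_def]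
        split_ifs with hy hy
        · rw [hy, h0, ← hx]
        · rw [hy, h0, ← hx]
        · rfl
      simp only [Function.comp, hσ, Equiv.Perm.decomposeFin_symm_apply_succ, hsw]
      exact congrFun (hs x) (e j)
    have hterm : ∀ x : Fin ℓ, (if (Fin.consEquiv (fun _ => Fin ℓ) (x, b)) 0
          = (Fin.consEquiv (fun _ => Fin ℓ) (x, b)) p then ∑ c : Fin n → Fin ℓ,
          mom μ (((Fin.consEquiv (fun _ => Fin ℓ) (x, b)) ∘ σ) ∘ Fin.succ)
            ((Fin.consEquiv (fun _ => Fin ℓ) (x, b)) ∘ Fin.succ) c c else 0) =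
        if x = (Fin.consEquiv (fun _ => Fin ℓ) (x, b)) p then
          ∑ c : Fin n → Fin ℓ, mom μ (b ∘ e) b c c else 0 := by
      intro x
      rw [h0]
      split_ifs with hx
      · rw [hσs x hx, hs]
      · rfl
    rw [Finset.sum_congr rfl fun x _ => hterm x]
    refine Fin.cases ?_ (fun p => ?_) p
    · simp [h0]
    · have h4 : ∀ x : Fin ℓ, (Fin.consEquiv (fun _ => Fin ℓ) (x, b)) p.succ = b p :=
        fun x => congrFun (hs x) p
      simp [h4, Fin.succ_ne_zero]
  rw [h1, ← h3, Finset.mul_sum]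
  refine Finset.sum_congr rfl fun b _ => ?_
  rw [Finset.sum_comm]
  simp only [h2]
  simp

lemma permMom_zero (σ : Equiv.Perm (Fin 0)) : permMom μ 0 σ = 1 := by
  simp [permMom, mom, mono]

/-- The antisymmetrizer on more than `ℓ` letters kills `(ℂ^ℓ)^{⊗ k}`. -/
lemma sum_sign_permMom (k : ℕ) (hk : ℓ < k) :
    ∑ σ : Equiv.Perm (Fin k), ((Equiv.Perm.sign σ : ℤ) : ℂ) * permMom μ k σ = 0 := by
  unfold permMom
  simp_rw [Finset.mul_sum]
  rw [Finset.sum_comm]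
  refine Finset.sum_eq_zero fun b _ => ?_
  rw [Finset.sum_comm]
  refine Finset.sum_eq_zero fun c _ => ?_
  unfold mom
  simp_rw [← integral_const_mul]
  have hi : ∀ σ ∈ (Finset.univ : Finset (Equiv.Perm (Fin k))), Integrable (fun M =>
      ((Equiv.Perm.sign σ : ℤ) : ℂ) * mono (b ∘ σ) b c c M) μ := fun σ _ =>
    integrable_of_continuous μ (continuous_const.mul (continuous_mono _ _ _ _))
  rw [← integral_finsetSum _ hi]
  refine integral_eq_zero_of_ae (Filter.Eventually.of_forall fun M => ?_)
  have hninj : ¬ Function.Injective b := fun h => by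
    have := Fintype.card_le_of_injective b h
    simp only [Fintype.card_fin] at this
    omega
  obtain ⟨i, j, hij, hne⟩ := Function.not_injective_iff.mp hninj
  have hdet : ((M : Matrix (Fin ℓ) (Fin ℓ) ℂ).submatrix b b).det = 0 :=
    Matrix.det_zero_of_row_eq hne (by ext x; simp [hij])
  rw [Matrix.det_apply'] at hdet
  simp only [mono, Pi.zero_apply, ← mul_assoc, ← Finset.sum_mul]
  simp only [Matrix.submatrix_apply] at hdet
  simp only [Function.comp]
  rw [hdet, zero_mul]

lemma permMom_one (k : ℕ) : permMom μ k 1 =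
    ∫ M : Matrix.unitaryGroup (Fin ℓ) ℂ, (Matrix.trace (M : Matrix (Fin ℓ) (Fin ℓ) ℂ)) ^ k *
      conj (Matrix.trace (M : Matrix (Fin ℓ) (Fin ℓ) ℂ)) ^ k ∂μ := by
  unfold permMom mom
  simp_rw [← integral_finsetSum Finset.univ fun c _ =>
    integrable_of_continuous μ (continuous_mono (_ : Fin k → Fin ℓ) _ (c : Fin k → Fin ℓ) c)]
  rw [← integral_finsetSum _ fun b _ => integrable_finsetSum _ fun c _ =>
    integrable_of_continuous μ (continuous_mono _ _ _ _)]
  congr 1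
  ext M
  simp only [mono, Matrix.trace, Matrix.diag_apply, map_sum]
  rw [Finset.sum_pow', Finset.sum_pow', Finset.sum_mul_sum]
  simp
end Moments

/-! ### The equation `(ℓ + J) u = 0` on the symmetric group -/

/-- If `u` is annihilated by `ℓ + J`, with `J` the sum of the `n` right translations by the
transpositions `(0 r)`, then expanding squares gives this energy identity. -/
lemma energy_identity {n : ℕ} (L : ℝ) (u : Equiv.Perm (Fin (n + 1)) → ℝ)
    (hu : ∀ σ, L * u σ + ∑ r : Fin n, u (σ * Equiv.swap 0 r.succ) = 0) :
    ∑ σ, ∑ r : Fin n, (u σ + u (σ * Equiv.swap 0 r.succ)) ^ 2 = 2 * (n - L) * ∑ σ, u σ ^ 2 := by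
  have h1 : ∀ r : Fin n, ∑ σ, u (σ * Equiv.swap 0 r.succ) ^ 2 = ∑ σ, u σ ^ 2 := fun r =>
    Equiv.sum_comp (Equiv.mulRight (Equiv.swap 0 r.succ)) fun σ => u σ ^ 2
  have h2 : ∀ σ, ∑ r : Fin n, u (σ * Equiv.swap 0 r.succ) = -L * u σ := fun σ => by
    linarith [hu σ]
  have h3 : ∀ σ, ∑ r : Fin n, (u σ + u (σ * Equiv.swap 0 r.succ)) ^ 2 =
      (n - 2 * L) * u σ ^ 2 + ∑ r : Fin n, u (σ * Equiv.swap 0 r.succ) ^ 2 := by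
    intro σ
    simp only [add_sq, Finset.sum_add_distrib, ← Finset.mul_sum, h2, Finset.sum_const,
      Finset.card_univ, Fintype.card_fin, nsmul_eq_mul]
    ring
  simp_rw [h3, Finset.sum_add_distrib]
  rw [Finset.sum_comm (s := (Finset.univ : Finset (Equiv.Perm (Fin (n + 1)))))]
  simp_rw [h1, ← Finset.mul_sum, Finset.sum_const, Finset.card_univ, Fintype.card_fin,
    nsmul_eq_mul]
  ring

lemma eq_zero_of_lt {n : ℕ} {L : ℝ} (hL : n < L) (u : Equiv.Perm (Fin (n + 1)) → ℝ)
    (hu : ∀ σ, L * u σ + ∑ r : Fin n, u (σ * Equiv.swap 0 r.succ) = 0) (σ) : u σ = 0 := by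
  have h := energy_identity L u hu
  have h0 : 0 ≤ ∑ σ, ∑ r : Fin n, (u σ + u (σ * Equiv.swap 0 r.succ)) ^ 2 := by positivity
  have h1 : u σ ^ 2 ≤ ∑ σ, u σ ^ 2 :=
    Finset.single_le_sum (f := fun σ => u σ ^ 2) (fun _ _ => sq_nonneg _) (Finset.mem_univ σ)
  have h2 : ∑ σ, u σ ^ 2 ≤ 0 := by
    by_contra hcon
    have := mul_pos (sub_pos.mpr hL) (not_le.mp hcon)
    linarith
  exact pow_eq_zero_iff two_ne_zero |>.mp (le_antisymm (h1.trans h2) (sq_nonneg _))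

/-- At the critical size `n = ℓ` the kernel of `ℓ + J` is spanned by the sign character. -/
lemma eq_sign_of_eq {n : ℕ} (u : Equiv.Perm (Fin (n + 1)) → ℝ)
    (hu : ∀ σ, n * u σ + ∑ r : Fin n, u (σ * Equiv.swap 0 r.succ) = 0) (σ) :
    u σ = ((Equiv.Perm.sign σ : ℤ) : ℝ) * u 1 := by
  have h := energy_identity (n : ℝ) u hu
  rw [sub_self, mul_zero, zero_mul,
    Finset.sum_eq_zero_iff_of_nonneg (fun _ _ => Finset.sum_nonneg fun _ _ => sq_nonneg _)] at h
  have h0 : ∀ (σ) (x : Fin (n + 1)), x ≠ 0 → u (σ * Equiv.swap 0 x) = -u σ := by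
    intro σ x hx
    obtain ⟨r, rfl⟩ := Fin.exists_succ_eq_of_ne_zero hx
    have h1 := h σ (Finset.mem_univ σ)
    rw [Finset.sum_eq_zero_iff_of_nonneg (fun _ _ => sq_nonneg _)] at h1
    have h2 := pow_eq_zero_iff (two_ne_zero) |>.mp (h1 r (Finset.mem_univ r))
    linarith
  have hsw : ∀ (σ) (x y : Fin (n + 1)), x ≠ y → u (σ * Equiv.swap x y) = -u σ := by
    intro σ x y hxy
    by_cases hx : x = 0
    · subst hx; exact h0 σ y hxy.symm
    by_cases hy : y = 0
    · subst hy; rw [Equiv.swap_comm]; exact h0 σ x hx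
    have : Equiv.swap x y = Equiv.swap 0 x * Equiv.swap 0 y * Equiv.swap 0 x := by
      rw [Equiv.swap_comm 0 y]
      exact (Equiv.swap_mul_swap_mul_swap hy (Ne.symm hxy)).symm
    rw [this, ← mul_assoc, ← mul_assoc, h0 _ x hx, h0 _ y hy, h0 _ x hx]
    ring
  induction σ using Equiv.Perm.swap_induction_on' with
  | one => simp
  | mul_swap f x y hxy ih =>
    rw [hsw f x y hxy, ih, Equiv.Perm.sign_mul, Equiv.Perm.sign_swap hxy]
    simp

/-- The indicator of the identity satisfies the same recursion as `permMom`, up to the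
normalization `n + 1`. -/
lemma delta_rec {n : ℕ} (L : ℝ) (p : Fin (n + 1)) (e : Equiv.Perm (Fin n)) :
    L * (if Equiv.Perm.decomposeFin.symm (p, e) = 1 then 1 else 0) +
      ∑ r : Fin n, (if Equiv.Perm.decomposeFin.symm (p, e) * Equiv.swap 0 r.succ = 1
        then (1 : ℝ) else 0) =
    (if p = 0 then L else 1) * (if e = 1 then 1 else 0) := by
  have hiff : ∀ q : Fin (n + 1), Equiv.Perm.decomposeFin.symm (p, e) * Equiv.swap 0 q = 1 ↔
      p = q ∧ e = 1 := by
    intro q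
    rw [mul_eq_one_iff_eq_inv, Equiv.swap_inv, ← Equiv.Perm.decomposeFin_symm_of_one,
      Equiv.apply_eq_iff_eq, Prod.mk.injEq]
  have h0 := hiff 0
  rw [Equiv.swap_self] at h0
  have h0' : Equiv.Perm.decomposeFin.symm (p, e) = 1 ↔ p = 0 ∧ e = 1 := h0
  simp only [hiff, h0']
  by_cases he : e = 1
  · refine Fin.cases ?_ (fun p => ?_) p
    · simp [he, (Fin.succ_ne_zero _).symm]
    · simp [he, Fin.succ_ne_zero]
  · simp [he]

/-! ### Moments of the trace -/

section Trace

variable {ℓ : ℕ} (μ : Measure (Matrix.unitaryGroup (Fin ℓ) ℂ)) [IsProbabilityMeasure μ]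
  [μ.IsMulLeftInvariant]

/-- Given the moments of order `n`, the function `permMom μ (n + 1)` agrees with the multiple
`(n + 1)!` of the indicator of the identity up to the kernel of `ℓ + J`. -/
lemma permMom_kernel (n : ℕ)
    (ih : ∀ e, (permMom μ n e).re = if e = 1 then (n.factorial : ℝ) else 0)
    (σ : Equiv.Perm (Fin (n + 1))) :
    (ℓ : ℝ) * ((permMom μ (n + 1) σ).re - (n + 1).factorial * if σ = 1 then 1 else 0) +
      ∑ r : Fin n, ((permMom μ (n + 1) (σ * Equiv.swap 0 r.succ)).re -
        (n + 1).factorial * if σ * Equiv.swap 0 r.succ = 1 then 1 else 0) = 0 := by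
  obtain ⟨⟨p, e⟩, rfl⟩ := Equiv.Perm.decomposeFin.symm.surjective σ
  have h1 := congrArg Complex.re (permMom_rec μ n p e)
  have h2 := delta_rec (ℓ : ℝ) p e
  have hc : (if p = 0 then (ℓ : ℂ) else 1) = ((if p = 0 then (ℓ : ℝ) else 1 : ℝ) : ℂ) := by
    split_ifs <;> simp
  have hn : ((n : ℂ) + 1) = ((n + 1 : ℝ) : ℂ) := by push_cast; rfl
  have hl : (ℓ : ℂ) = ((ℓ : ℝ) : ℂ) := by simp
  rw [hc, hn, Complex.add_re, Complex.re_sum, Complex.re_ofReal_mul, Complex.re_ofReal_mul, hl,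
    Complex.re_ofReal_mul, ih] at h1
  have h3 : (if e = 1 then (n.factorial : ℝ) else 0)
      = n.factorial * if e = 1 then 1 else 0 := by split_ifs <;> simp
  rw [h3] at h1
  rw [Finset.sum_sub_distrib, ← Finset.mul_sum, Nat.factorial_succ]
  push_cast
  linear_combination h1 - ((n : ℝ) + 1) * n.factorial * h2

lemma permMom_re (k : ℕ) (hk : k ≤ ℓ) (σ : Equiv.Perm (Fin k)) :
    (permMom μ k σ).re = if σ = 1 then (k.factorial : ℝ) else 0 := by
  induction k with
  | zero => simp [permMom_zero, Subsingleton.elim σ 1]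
  | succ n ih =>
    have h := eq_zero_of_lt (L := (ℓ : ℝ)) (by exact_mod_cast hk) _
      (permMom_kernel μ n (ih (by omega))) σ
    rw [sub_eq_zero] at h
    simpa using h

/-- The first moment that differs from its Gaussian value: the sign component of `permMom` is
fixed by the vanishing of the antisymmetrizer on `ℓ + 1` letters. -/
lemma permMom_re_succ : (permMom μ (ℓ + 1) 1).re = (ℓ + 1).factorial - 1 := by
  have h := eq_sign_of_eq _ (permMom_kernel μ ℓ (permMom_re μ ℓ le_rfl))
  have hs := congrArg Complex.re (sum_sign_permMom μ (ℓ + 1) (Nat.lt_succ_self ℓ))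
  have hc : ∀ σ : Equiv.Perm (Fin (ℓ + 1)), ((Equiv.Perm.sign σ : ℤ) : ℂ)
      = (((Equiv.Perm.sign σ : ℤ) : ℝ) : ℂ) := by intro σ; simp
  have hsq : ∀ σ : Equiv.Perm (Fin (ℓ + 1)),
      ((Equiv.Perm.sign σ : ℤ) : ℝ) * ((Equiv.Perm.sign σ : ℤ) : ℝ) = 1 := by
    intro σ
    rcases Int.units_eq_one_or (Equiv.Perm.sign σ) with h | h <;> simp [h]
  set w : ℝ := (permMom μ (ℓ + 1) 1).re - (ℓ + 1).factorial with hw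
  have hterm : ∀ σ : Equiv.Perm (Fin (ℓ + 1)),
      ((Equiv.Perm.sign σ : ℤ) : ℝ) * (permMom μ (ℓ + 1) σ).re =
        (if σ = 1 then ((ℓ + 1).factorial : ℝ) else 0) + w := by
    intro σ
    have h1 := h σ
    simp only [if_true, mul_one] at h1
    rw [← hw] at h1
    rw [sub_eq_iff_eq_add.mp h1, mul_add, ← mul_assoc, hsq]
    by_cases hσ : σ = 1 <;> simp [hσ, add_comm]
  simp only [Complex.re_sum, hc, Complex.re_ofReal_mul, hterm, Complex.zero_re] at hs
  rw [Finset.sum_add_distrib, Finset.sum_const, Finset.card_univ, Fintype.card_perm,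
    Fintype.card_fin, nsmul_eq_mul, Finset.sum_ite_eq'] at hs
  simp only [Finset.mem_univ, if_true] at hs
  have hpos : ((ℓ + 1).factorial : ℝ) ≠ 0 := by positivity
  have hw1 : 1 + w = 0 := by
    apply mul_left_cancel₀ hpos
    linarith
  linarith

/-- The trace of a unitary matrix, as a function on the unitary group. -/
def utr (M : Matrix.unitaryGroup (Fin ℓ) ℂ) : ℂ := Matrix.trace (M : Matrix (Fin ℓ) (Fin ℓ) ℂ)

lemma continuous_utr : Continuous (utr (ℓ := ℓ)) := by
  unfold utr Matrix.trace
  exact continuous_finsetSum _ fun i _ => continuous_entry i i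

lemma norm_utr_le (M : Matrix.unitaryGroup (Fin ℓ) ℂ) : ‖utr M‖ ≤ ℓ := by
  unfold utr Matrix.trace
  refine (norm_sum_le _ _).trans ?_
  refine (Finset.sum_le_sum fun i _ => entry_norm_bound_of_unitary M.2 i i).trans ?_
  simp

/-- Mixed moments of the trace of unequal orders vanish by invariance under scalar matrices. -/
lemma integral_utr_of_ne {i j : ℕ} (hij : i ≠ j) :
    ∫ M : Matrix.unitaryGroup (Fin ℓ) ℂ, utr M ^ i * conj (utr M) ^ j ∂μ = 0 := by
  -- The phase is chosen so that the integrand changes sign.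
  set θ : ℝ := Real.pi / ((i : ℝ) - j) with hθ
  set z : ℂ := Complex.exp (θ * Complex.I) with hz
  have hne : ((i : ℝ) - j) ≠ 0 := sub_ne_zero.mpr (by exact_mod_cast hij)
  have hzc : conj z = Complex.exp (-(θ * Complex.I)) := by
    rw [hz, ← Complex.exp_conj]
    simp
  have hzz : z * conj z = 1 := by
    rw [hzc, hz, ← Complex.exp_add]
    simp
  have hzij : z ^ i * conj z ^ j = -1 := by
    rw [hzc, hz, ← Complex.exp_nat_mul, ← Complex.exp_nat_mul, ← Complex.exp_add,
      ← Complex.exp_pi_mul_I]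
    congr 1
    have : ((i : ℝ) - j) * θ = Real.pi := by rw [hθ]; field_simp
    have h' := congrArg (fun x : ℝ => (x : ℂ)) this
    push_cast at h'
    linear_combination Complex.I * h'
  have hg : z • (1 : Matrix (Fin ℓ) (Fin ℓ) ℂ) ∈ Matrix.unitaryGroup (Fin ℓ) ℂ := by
    rw [Matrix.mem_unitaryGroup_iff]
    simp [smul_smul, mul_comm, hzz]
  have h := integral_mul_left_eq_self (μ := μ) (fun M => utr M ^ i * conj (utr M) ^ j) ⟨_, hg⟩
  have hpt : ∀ M : Matrix.unitaryGroup (Fin ℓ) ℂ,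
      utr (⟨_, hg⟩ * M) ^ i * conj (utr (⟨_, hg⟩ * M)) ^ j =
        -(utr M ^ i * conj (utr M) ^ j) := by
    intro M
    have : utr (⟨_, hg⟩ * M) = z * utr M := by
      simp [utr]
    rw [this, map_mul, mul_pow, mul_pow]
    linear_combination (utr M ^ i * conj (utr M) ^ j) * hzij
  simp_rw [hpt, integral_neg] at h
  exact self_eq_neg.mp h.symm

/-- The moments of `2 Re tr M`, by binomial expansion of `(tr M + conj (tr M))ᵐ`. -/
lemma integral_two_re_pow (m : ℕ) :
    ((∫ M : Matrix.unitaryGroup (Fin ℓ) ℂ, (2 * (utr M).re) ^ m ∂μ : ℝ) : ℂ) =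
      ∑ i ∈ Finset.range (m + 1), (∫ M : Matrix.unitaryGroup (Fin ℓ) ℂ,
        utr M ^ i * conj (utr M) ^ (m - i) ∂μ) * (m.choose i : ℂ) := by
  rw [← integral_complex_ofReal]
  simp_rw [← integral_mul_const]
  rw [← integral_finsetSum]
  · congr 1
    ext M
    rw [Complex.ofReal_pow, ← Complex.add_conj, add_pow]
  · intro i _
    exact integrable_of_continuous μ (((continuous_utr.pow _).mul
      ((Complex.continuous_conj.comp continuous_utr).pow _)).mul continuous_const)

lemma integral_two_re_pow_odd (k : ℕ) :
    ∫ M : Matrix.unitaryGroup (Fin ℓ) ℂ, (2 * (utr M).re) ^ (2 * k + 1) ∂μ = 0 := by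
  have h := integral_two_re_pow μ (2 * k + 1)
  rw [Finset.sum_eq_zero] at h
  · exact_mod_cast h
  · intro i hi
    rw [integral_utr_of_ne μ (by omega), zero_mul]

lemma integral_two_re_pow_even (k : ℕ) :
    ∫ M : Matrix.unitaryGroup (Fin ℓ) ℂ, (2 * (utr M).re) ^ (2 * k) ∂μ =
      (permMom μ k 1).re * (2 * k).choose k := by
  have h := integral_two_re_pow μ (2 * k)
  rw [Finset.sum_eq_single_of_mem k (by simp; omega)] at h
  · rw [show 2 * k - k = k by omega] at h
    have h1 := permMom_one μ k
    unfold utr at h ⊢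
    rw [← h1] at h
    have h2 := congrArg Complex.re h
    rw [Complex.ofReal_re] at h2
    rw [h2]
    simp
  · intro i hi hik
    rw [integral_utr_of_ne μ (by simp at hi; omega), zero_mul]

/-- The even Taylor coefficients of `t ↦ E[exp (t · 2 Re tr M)]`. -/
lemma taylor_coeff (k : ℕ) :
    (∫ M : Matrix.unitaryGroup (Fin ℓ) ℂ, (2 * (utr M).re) ^ (2 * k) ∂μ) / (2 * k).factorial
      = (permMom μ k 1).re / (k.factorial : ℝ) ^ 2 := by
  rw [integral_two_re_pow_even]
  have h := Nat.choose_mul_factorial_mul_factorial (show k ≤ 2 * k by omega)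
  rw [show 2 * k - k = k by omega] at h
  have h' : ((2 * k).choose k : ℝ) * k.factorial * k.factorial = (2 * k).factorial := by
    exact_mod_cast h
  rw [div_eq_div_iff (by positivity) (by positivity), ← h']
  ring

end Trace

/-! ### Asymptotics near zero -/

section Asymptotics

open Filter Topology Asymptotics

lemma log_isBigO (ℓ : ℕ) (G : ℝ → ℝ) (c : ℝ)
    (hG : (fun x => G x - (Real.exp x - c * x ^ (ℓ + 1))) =O[𝓝[>] 0] fun x => x ^ (ℓ + 2)) :
    (fun x => Real.log (G x) - (x - c * x ^ (ℓ + 1))) =O[𝓝[>] 0] fun x => x ^ (ℓ + 2) := by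
  -- `h` is the relative deviation of `G` from `exp`.
  set h : ℝ → ℝ := fun x => G x * Real.exp (-x) - 1 with hh
  have hid : Tendsto (fun x : ℝ => x) (𝓝[>] 0) (𝓝 0) := nhdsWithin_le_nhds
  have hexp1 : (fun x : ℝ => Real.exp (-x)) =O[𝓝[>] 0] fun _ => (1 : ℝ) := by
    refine Tendsto.isBigO_one (c := Real.exp (-0)) ℝ ?_
    exact (Real.continuous_exp.comp continuous_neg).continuousAt.tendsto.comp hid
  have hexp2 : (fun x : ℝ => 1 - Real.exp (-x)) =O[𝓝[>] 0] fun x => x := by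
    have hd : HasDerivAt (fun x : ℝ => 1 - Real.exp (-x)) (-(Real.exp (-0) * (-1))) 0 :=
      ((hasDerivAt_neg (0 : ℝ)).exp).const_sub 1
    have := hd.isBigO_sub.mono (nhdsWithin_le_nhds (s := Set.Ioi (0 : ℝ)))
    simpa using this
  have hpow : ∀ {i j : ℕ}, i ≤ j →
      (fun x : ℝ => x ^ j) =O[𝓝[>] 0] fun x : ℝ => x ^ i := by
    intro i j hij
    refine IsBigO.of_bound 1 ?_
    filter_upwards [Ioo_mem_nhdsGT (zero_lt_one' ℝ)] with x hx
    rw [norm_pow, norm_pow, one_mul, Real.norm_eq_abs, abs_of_pos hx.1]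
    exact pow_le_pow_of_le_one hx.1.le hx.2.le hij
  have hy : (fun x : ℝ => c * x ^ (ℓ + 1)) =O[𝓝[>] 0] fun x : ℝ => x ^ (ℓ + 1) :=
    isBigO_const_mul_self c _ _
  have hhy : (fun x => h x + c * x ^ (ℓ + 1)) =O[𝓝[>] 0] fun x => x ^ (ℓ + 2) := by
    have e1 := (hexp1.mul hG)
    have e2 := (hy.mul hexp2)
    simp only [one_mul] at e1
    simp only [← pow_succ] at e2
    refine (e1.add e2).congr_left fun x => ?_
    have : Real.exp (-x) * Real.exp x = 1 := by rw [← Real.exp_add]; simp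
    simp only [hh]
    linear_combination -this
  have hh1 : h =O[𝓝[>] 0] fun x => x ^ (ℓ + 1) := by
    refine ((hhy.trans (hpow (Nat.le_succ _))).sub hy).congr_left fun x => by ring
  have hh0 : Tendsto h (𝓝[>] 0) (𝓝 0) := by
    refine hh1.trans_tendsto ?_
    simpa using hid.pow (ℓ + 1)
  have hlog : (fun x => Real.log (1 + h x) - h x) =O[𝓝[>] 0] fun x => x ^ (ℓ + 2) := by
    have hsq : (fun x => h x ^ 2) =O[𝓝[>] 0] fun x => x ^ (ℓ + 2) := by
      have := hh1.pow 2
      simp only [← pow_mul] at this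
      exact this.trans (hpow (by omega))
    refine IsBigO.trans ?_ hsq
    refine IsBigO.of_bound 2 ?_
    have hsmall : ∀ᶠ x in 𝓝[>] (0 : ℝ), |h x| < 1 / 2 := by
      have := hh0.abs
      rw [abs_zero] at this
      exact this.eventually_lt_const (by norm_num)
    filter_upwards [hsmall] with x hx
    have hb := Real.abs_log_sub_add_sum_range_le (x := -h x) (by rw [abs_neg]; linarith) 1
    simp only [Finset.sum_range_one, abs_neg] at hb
    norm_num at hb
    rw [Real.norm_eq_abs, Real.norm_eq_abs, abs_pow, sq_abs]
    calc |Real.log (1 + h x) - h x| = |-h x + Real.log (1 + h x)| := by ring_nf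
      _ ≤ h x ^ 2 / (1 - |h x|) := hb
      _ ≤ 2 * h x ^ 2 := by
        rw [div_le_iff₀ (by linarith)]
        nlinarith [sq_nonneg (h x)]
  refine (hlog.add hhy).congr' ?_ EventuallyEq.rfl
  have hne : ∀ᶠ x in 𝓝[>] (0 : ℝ), -1 < h x := hh0.eventually_const_lt (by norm_num)
  filter_upwards [hne] with x hx
  have hGx : G x = Real.exp x * (1 + h x) := by
    have : Real.exp (-x) * Real.exp x = 1 := by rw [← Real.exp_add]; simp
    simp only [hh]
    linear_combination -(G x) * this
  rw [hGx, Real.log_mul (Real.exp_ne_zero x) (by linarith), Real.log_exp]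
  ring

variable {ℓ : ℕ} (μ : Measure (Matrix.unitaryGroup (Fin ℓ) ℂ)) [IsProbabilityMeasure μ]
  [μ.IsMulLeftInvariant]

lemma sum_range_two_mul (f : ℕ → ℝ) (K : ℕ) :
    ∑ m ∈ Finset.range (2 * K), f m = ∑ k ∈ Finset.range K, (f (2 * k) + f (2 * k + 1)) := by
  induction K with
  | zero => simp
  | succ K ih =>
    rw [show 2 * (K + 1) = 2 * K + 1 + 1 by ring, Finset.sum_range_succ, Finset.sum_range_succ, ih,
      Finset.sum_range_succ]
    ring

/-- The expectation of the Taylor polynomial of degree `2 ℓ + 3` of the integrand. -/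
lemma integral_taylor {x : ℝ} (hx : 0 ≤ x) :
    ∫ M : Matrix.unitaryGroup (Fin ℓ) ℂ, ∑ m ∈ Finset.range (2 * (ℓ + 2)),
      (Real.sqrt x * (2 * (utr M).re)) ^ m / (m.factorial : ℝ) ∂μ =
    ∑ k ∈ Finset.range (ℓ + 2), x ^ k / (k.factorial : ℝ)
      - 1 / ((ℓ + 1).factorial : ℝ) ^ 2 * x ^ (ℓ + 1) := by
  have hre : Continuous fun M : Matrix.unitaryGroup (Fin ℓ) ℂ => (utr M).re :=
    Complex.continuous_re.comp continuous_utr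
  rw [integral_finsetSum _ fun m _ => integrable_of_continuous μ (by fun_prop)]
  have hterm : ∀ m : ℕ, ∫ M : Matrix.unitaryGroup (Fin ℓ) ℂ,
      (Real.sqrt x * (2 * (utr M).re)) ^ m / (m.factorial : ℝ) ∂μ =
      Real.sqrt x ^ m * ((∫ M : Matrix.unitaryGroup (Fin ℓ) ℂ, (2 * (utr M).re) ^ m ∂μ) /
        (m.factorial : ℝ)) := by
    intro m
    simp_rw [mul_pow (Real.sqrt x), mul_div_assoc]
    rw [integral_const_mul, integral_div]
  simp_rw [hterm]
  rw [sum_range_two_mul]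
  simp_rw [taylor_coeff, integral_two_re_pow_odd, zero_div, mul_zero, add_zero, pow_mul,
    Real.sq_sqrt hx]
  rw [Finset.sum_range_succ, Finset.sum_range_succ _ (ℓ + 1), permMom_re_succ]
  have hlow : ∑ k ∈ Finset.range (ℓ + 1), x ^ k * ((permMom μ k 1).re / (k.factorial : ℝ) ^ 2)
      = ∑ k ∈ Finset.range (ℓ + 1), x ^ k / (k.factorial : ℝ) := by
    refine Finset.sum_congr rfl fun k hk => ?_
    rw [permMom_re μ k (Nat.lt_succ_iff.mp (Finset.mem_range.mp hk)), if_pos rfl]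
    have : (k.factorial : ℝ) ≠ 0 := by positivity
    field_simp
  rw [hlow]
  have : ((ℓ + 1).factorial : ℝ) ≠ 0 := by positivity
  field_simp
  ring

lemma integral_exp_isBigO :
    (fun x => (∫ M : Matrix.unitaryGroup (Fin ℓ) ℂ,
      Real.exp (Real.sqrt x * (2 * (utr M).re)) ∂μ) -
        (Real.exp x - 1 / ((ℓ + 1).factorial : ℝ) ^ 2 * x ^ (ℓ + 1)))
      =O[𝓝[>] 0] fun x : ℝ => x ^ (ℓ + 2) := by
  have hre : Continuous fun M : Matrix.unitaryGroup (Fin ℓ) ℂ => (utr M).re :=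
    Complex.continuous_re.comp continuous_utr
  have hexp : (fun x : ℝ => Real.exp x - ∑ k ∈ Finset.range (ℓ + 2), x ^ k / (k.factorial : ℝ))
      =O[𝓝[>] 0] fun x : ℝ => x ^ (ℓ + 2) :=
    (Real.exp_sub_sum_range_isBigO_pow (ℓ + 2)).mono nhdsWithin_le_nhds
  set N := 2 * (ℓ + 2) with hN
  set K : ℝ := (N.succ : ℝ) / ((N.factorial : ℝ) * N) with hK
  have hmain : (fun x => (∫ M : Matrix.unitaryGroup (Fin ℓ) ℂ,
      Real.exp (Real.sqrt x * (2 * (utr M).re)) ∂μ) -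
        ∫ M : Matrix.unitaryGroup (Fin ℓ) ℂ, ∑ m ∈ Finset.range N,
          (Real.sqrt x * (2 * (utr M).re)) ^ m / (m.factorial : ℝ) ∂μ)
      =O[𝓝[>] 0] fun x : ℝ => x ^ (ℓ + 2) := by
    refine IsBigO.of_bound ((2 * ℓ : ℝ) ^ N * K) ?_
    have hsmall : ∀ᶠ x in 𝓝[>] (0 : ℝ), Real.sqrt x * (2 * ℓ) < 1 := by
      have : Tendsto (fun x : ℝ => Real.sqrt x * (2 * ℓ)) (𝓝[>] 0)
          (𝓝 (Real.sqrt 0 * (2 * ℓ))) :=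
        ((Real.continuous_sqrt.mul continuous_const).tendsto 0).mono_left nhdsWithin_le_nhds
      exact this.eventually_lt_const (by simp)
    filter_upwards [hsmall, self_mem_nhdsWithin] with x hx hx0
    have hx0' : (0 : ℝ) < x := hx0
    rw [← integral_sub (integrable_of_continuous μ (by fun_prop))
      (integrable_of_continuous μ (by fun_prop))]
    have hbound : ∀ M : Matrix.unitaryGroup (Fin ℓ) ℂ,
        ‖Real.exp (Real.sqrt x * (2 * (utr M).re)) - ∑ m ∈ Finset.range N,
          (Real.sqrt x * (2 * (utr M).re)) ^ m / (m.factorial : ℝ)‖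
        ≤ (2 * ℓ : ℝ) ^ N * K * x ^ (ℓ + 2) := by
      intro M
      have hy : |Real.sqrt x * (2 * (utr M).re)| ≤ Real.sqrt x * (2 * ℓ) := by
        rw [abs_mul, abs_mul, abs_of_nonneg (Real.sqrt_nonneg x), abs_two]
        gcongr
        exact (Complex.abs_re_le_norm _).trans (norm_utr_le M)
      have hb := Real.exp_bound (hy.trans hx.le) (n := N) (by omega)
      rw [Real.norm_eq_abs]
      refine hb.trans ?_
      calc |Real.sqrt x * (2 * (utr M).re)| ^ N * K ≤ (Real.sqrt x * (2 * ℓ)) ^ N * K := by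
            gcongr
        _ = (2 * ℓ : ℝ) ^ N * K * x ^ (ℓ + 2) := by
            have : Real.sqrt x ^ N = x ^ (ℓ + 2) := by
              rw [hN, pow_mul, Real.sq_sqrt hx0'.le]
            rw [mul_pow, this]
            ring
    refine (norm_integral_le_of_norm_le_const (Eventually.of_forall hbound)).trans ?_
    simp [abs_of_pos hx0']
  refine (hmain.sub hexp).congr' ?_ EventuallyEq.rfl
  filter_upwards [self_mem_nhdsWithin] with x hx0
  rw [integral_taylor μ (le_of_lt hx0)]
  ring

end Asymptotics

end UnitaryMoments

theorem unitary_integral_estimate_near_zero (ℓ : ℕ) (hℓ : 1 ≤ ℓ)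
    (μ : Measure (Matrix.unitaryGroup (Fin ℓ) ℂ)) [IsProbabilityMeasure μ]
    [μ.IsMulLeftInvariant]
    (F : ℝ → ℝ)
    -- `F(x) = log E_{U(ℓ)}[exp(√x·(tr M + conj(tr M)))]`; the integrand is the positive real
    -- number `exp(√x · 2·Re(tr M))` since `tr M + conj(tr M) = 2·Re(tr M)`.
    (hF : ∀ x, F x = Real.log (∫ M : Matrix.unitaryGroup (Fin ℓ) ℂ,
      Real.exp (Real.sqrt x *
        (2 * (Matrix.trace (M : Matrix (Fin ℓ) (Fin ℓ) ℂ)).re)) ∂μ)) :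
    ∃ C > (0 : ℝ), ∃ δ > (0 : ℝ), ∀ x : ℝ, 0 < x → x < δ →
      |F x - (x - x ^ (ℓ + 1) / (Nat.factorial (ℓ + 1) : ℝ) ^ 2)| ≤ C * x ^ (ℓ + 2) := by
  have h := UnitaryMoments.log_isBigO ℓ _ _ (UnitaryMoments.integral_exp_isBigO μ)
  obtain ⟨C, hC, hb⟩ := h.exists_pos
  obtain ⟨δ, hδ, hsub⟩ := mem_nhdsGT_iff_exists_Ioo_subset.mp hb.bound
  refine ⟨C, hC, δ, hδ, fun x hx0 hxδ => ?_⟩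
  have hx := hsub ⟨hx0, hxδ⟩
  simp only [Set.mem_ofPred_eq, Real.norm_eq_abs, abs_of_pos (pow_pos hx0 (ℓ + 2))] at hx
  rw [one_div_mul_eq_div] at hx
  rw [hF]
  exact hx

end
end

section
/- For an integer m ≥ 0 define I_m(x, y) := E_{U(m)}[ exp( x·tr M − y·conj(tr M) ) ] for (x, y) ∈ ℝ², a complex-valued smooth function of (x, y), with the convention I₀ ≡ 1. Then for every integer ℓ ≥ 1 and all (x, y) ∈ ℝ²: I_ℓ · ∂²I_ℓ/∂x∂y − (∂I_ℓ/∂x)·(∂I_ℓ/∂y) = −I_{ℓ+1} · I_{ℓ−1}. (Here ∂²I/∂x∂y denotes the derivative in x of the function x ↦ derivative in y of y ↦ I(x,y).) Equivalently, q_ℓ := log(I_{ℓ+1}/I_ℓ) satisfies the discrete sinh-Gordon equation ∂²q_ℓ/∂x∂y = e^{q_ℓ − q_{ℓ−1}} − e^{q_{ℓ+1} − q_ℓ}. -/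
/-!
Write `T k = ∫ zᵏ exp (x z - y z̄)` for the Fourier coefficients of the symbol over the unit circle
(`symbolCoeff`). The integral `I n x y` equals the Toeplitz determinant `det (T (i - j))` of size
`n` (`integral_unitary_exp`). Since `∂ₓ T k = T (k + 1)` and `∂_y T k = -T (k - 1)`, differentiating
the determinant in `x` moves only its last row and in `y` only its last column, so the asserted
equation is the Desnanot–Jacobi identity (`toda_toeplitz`).

The determinant formula is obtained without the Weyl integration formula. Integrating over the torus
against `∑ σ, sgn σ ∏ zᵢ ^ (σ i - i)` yields the Toeplitz determinant directly
(`integral_torus_exp`), and an exponential integral is determined by the mixed moments of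
`t = tr M` and `t̄` (`hasSum_exp_moments`), so it suffices that all moments `∫ tᵃ t̄ᵇ` on `U(n)` agree
with the weighted moments on the torus.

The torus moments are signed counts of words by orthogonality of characters
(`integral_torus_moment`). On `U(n)`, the power `tᵃ` is a sum of Jacobi–Trudi determinants in the
traces of the symmetric powers of `M` (`trace_pow_eq_sum_det`); this follows for diagonal matrices
from the recurrence of the complete homogeneous symmetric polynomials, and in general from the
spectral theorem and the Zariski density of Hermitian matrices. The integral of `t̄ᵇ` against a
product of symmetric power traces is a count of words (`integral_conj_trace_pow_mul_symTr`), proved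
from left invariance of the measure and the Zariski density of the unitary group.
-/

open MeasureTheory Matrix

noncomputable section

/-! ### Toeplitz determinants and the Toda equation -/

/-- Replacing the rows of `A` by those of `B` one at a time: the first-order term of
`det (A + ε B)`. -/
theorem sum_det_updateRow {n : ℕ} (A B : Matrix (Fin n) (Fin n) ℂ) :
    ∑ i, (A.updateRow i (B i)).det = (B * A.adjugate).trace := by
  simp only [Matrix.trace, Matrix.diag, Matrix.mul_apply]
  refine Finset.sum_congr rfl fun i _ => ?_
  have h := congrFun (Matrix.cramer_eq_adjugate_mulVec Aᵀ (B i)) i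
  rw [Matrix.cramer_apply, Matrix.updateCol_transpose, Matrix.det_transpose] at h
  rw [h, ← Matrix.adjugate_transpose]
  simp [Matrix.mulVec, dotProduct, mul_comm]

theorem hasDerivAt_det_rows {n : ℕ} {A : ℝ → Matrix (Fin n) (Fin n) ℂ}
    {A' : Matrix (Fin n) (Fin n) ℂ} {x : ℝ}
    (h : ∀ i j, HasDerivAt (fun t => A t i j) (A' i j) x) :
    HasDerivAt (fun t => (A t).det) (∑ i, ((A x).updateRow i (A' i)).det) x := by
  have key : ∑ i, ((A x).updateRow i (A' i)).det =
      ∑ σ : Equiv.Perm (Fin n), Equiv.Perm.sign σ •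
        ∑ i, (∏ j ∈ Finset.univ.erase i, A x j (σ j)) • A' i (σ i) := by
    simp only [Finset.smul_sum]
    rw [Finset.sum_comm]
    refine Finset.sum_congr rfl fun i _ => ?_
    rw [← Matrix.det_transpose, Matrix.det_apply]
    refine Finset.sum_congr rfl fun σ _ => ?_
    congr 1
    rw [← Finset.mul_prod_erase _ _ (Finset.mem_univ i), smul_eq_mul, mul_comm]
    congr 1
    · refine Finset.prod_congr rfl fun j hj => ?_
      simp [Matrix.updateRow_ne (Finset.ne_of_mem_erase hj)]
    · simp
  rw [key]
  have hd : (fun t => (A t).det) = fun t => ∑ σ : Equiv.Perm (Fin n),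
      Equiv.Perm.sign σ • ∏ i, A t i (σ i) := by
    funext t
    rw [← Matrix.det_transpose, Matrix.det_apply]
    rfl
  rw [hd]
  refine HasDerivAt.fun_sum fun σ _ => ?_
  simp only [Units.smul_def, zsmul_eq_mul]
  refine HasDerivAt.const_mul _ ?_
  exact HasDerivAt.fun_finsetProd fun i _ => h i (σ i)

/-- Desnanot–Jacobi identity in block form, read off from the `2 × 2` Schur complement of an
invertible corner `A`. -/
theorem desnanot_blocks_of_isUnit {m : ℕ} (A : Matrix (Fin m) (Fin m) ℂ) (hA : IsUnit A.det)
    (B : Matrix (Fin m) (Fin 2) ℂ) (C : Matrix (Fin 2) (Fin m) ℂ) (D : Matrix (Fin 2) (Fin 2) ℂ) :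
    let E : Fin 2 → Fin 2 → ℂ := fun p q => (fromBlocks A (B.submatrix id fun _ : Fin 1 => q)
      (C.submatrix (fun _ : Fin 1 => p) id) (D.submatrix (fun _ => p) fun _ => q)).det
    E 0 0 * E 1 1 - E 1 0 * E 0 1 = (fromBlocks A B C D).det * A.det := by
  intro E
  have := Matrix.invertibleOfIsUnitDet A hA
  have hE : ∀ p q, E p q = A.det * (D - C * ⅟A * B) p q := by
    intro p q
    simp only [E]
    rw [Matrix.det_fromBlocks₁₁, Matrix.det_fin_one]
    simp [Matrix.mul_apply]
  rw [hE, hE, hE, hE, Matrix.det_fromBlocks₁₁, Matrix.det_fin_two]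
  ring

/-- Desnanot–Jacobi identity in block form without invertibility, by continuity in `A + s • 1`. -/
theorem desnanot_blocks {m : ℕ} (A : Matrix (Fin m) (Fin m) ℂ)
    (B : Matrix (Fin m) (Fin 2) ℂ) (C : Matrix (Fin 2) (Fin m) ℂ) (D : Matrix (Fin 2) (Fin 2) ℂ) :
    let E : Fin 2 → Fin 2 → ℂ := fun p q => (fromBlocks A (B.submatrix id fun _ : Fin 1 => q)
      (C.submatrix (fun _ : Fin 1 => p) id) (D.submatrix (fun _ => p) fun _ => q)).det
    E 0 0 * E 1 1 - E 1 0 * E 0 1 = (fromBlocks A B C D).det * A.det := by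
  intro E
  let As : ℂ → Matrix (Fin m) (Fin m) ℂ := fun s => s • 1 + A
  have hAs : Continuous As := by fun_prop
  let Es : ℂ → Fin 2 → Fin 2 → ℂ := fun s p q =>
    (fromBlocks (As s) (B.submatrix id fun _ : Fin 1 => q)
      (C.submatrix (fun _ : Fin 1 => p) id) (D.submatrix (fun _ => p) fun _ => q)).det
  have hEs : ∀ p q, Continuous fun s => Es s p q := fun p q =>
    (hAs.matrix_fromBlocks continuous_const continuous_const continuous_const).matrix_det
  have hN : Continuous fun s => (fromBlocks (As s) B C D).det :=
    (hAs.matrix_fromBlocks continuous_const continuous_const continuous_const).matrix_det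
  -- `s • 1 + A` is singular only at the finitely many roots of a monic polynomial.
  have hdense : Dense {s : ℂ | (As s).det ≠ 0} := by
    have hfin : {s : ℂ | (As s).det = 0}.Finite := by
      have hne : (-A).charpoly ≠ 0 := (Matrix.charpoly_monic _).ne_zero
      refine ((-A).charpoly.rootSet_finite ℂ).subset fun s hs => ?_
      rw [Polynomial.mem_rootSet]
      refine ⟨hne, ?_⟩
      rw [Polynomial.coe_aeval_eq_eval, Matrix.eval_charpoly]
      rw [← hs]
      congr 1
      simp [As, Matrix.scalar_apply, Matrix.smul_one_eq_diagonal]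
    have := hfin.countable.dense_compl ℂ
    exact this
  have heq := Continuous.ext_on hdense (f := fun s => Es s 0 0 * Es s 1 1 - Es s 1 0 * Es s 0 1)
    (g := fun s => (fromBlocks (As s) B C D).det * (As s).det)
    (((hEs 0 0).mul (hEs 1 1)).sub ((hEs 1 0).mul (hEs 0 1))) (hN.mul hAs.matrix_det)
    (fun s hs => desnanot_blocks_of_isUnit (As s) (isUnit_iff_ne_zero.2 hs) B C D)
  have h0 := congrFun heq 0
  have : As 0 = A := by simp [As]
  simpa [Es, this, E] using h0

/-- The indices `0, …, m - 1, m + 1`: the last of `0, …, m` is moved up by one. -/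
def skipIdx (m : ℕ) (i : Fin (m + 1)) : ℤ := if i = Fin.last m then m + 1 else i

/-- Desnanot–Jacobi identity for the minors of an infinite array on the index sets
`{0, …, m}` and `{0, …, m - 1, m + 1}`. -/
theorem desnanot_int (m : ℕ) (a : ℤ → ℤ → ℂ) :
    (of fun i j : Fin (m + 1) => a i j).det *
        (of fun i j : Fin (m + 1) => a (skipIdx m i) (skipIdx m j)).det -
      (of fun i j : Fin (m + 1) => a (skipIdx m i) j).det *
        (of fun i j : Fin (m + 1) => a i (skipIdx m j)).det =
    (of fun i j : Fin (m + 2) => a i j).det * (of fun i j : Fin m => a i j).det := by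
  have h := desnanot_blocks (of fun i j : Fin m => a i j)
    (of fun (i : Fin m) (q : Fin 2) => a i (m + q)) (of fun (p : Fin 2) (j : Fin m) => a (m + p) j)
    (of fun p q : Fin 2 => a (m + p) (m + q))
  have key : ∀ (r c : Fin (m + 1) → ℤ) (p q : Fin 2), (∀ i : Fin m, r i.castSucc = i) →
      (∀ i : Fin m, c i.castSucc = i) → r (Fin.last m) = m + p → c (Fin.last m) = m + q →
      (fromBlocks (of fun i j : Fin m => a i j)
        ((of fun (i : Fin m) (q : Fin 2) => a i (m + q)).submatrix id fun _ : Fin 1 => q)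
        ((of fun (p : Fin 2) (j : Fin m) => a (m + p) j).submatrix (fun _ : Fin 1 => p) id)
        ((of fun p q : Fin 2 => a (m + p) (m + q)).submatrix (fun _ => p) fun _ => q)).det
      = (of fun i j : Fin (m + 1) => a (r i) (c j)).det := by
    intro r c p q hr hc hr' hc'
    rw [← Matrix.det_submatrix_equiv_self (finSumFinEquiv (m := m) (n := 1))]
    congr 1
    have e : ∀ i : Fin m, Fin.castAdd 1 i = i.castSucc := fun _ => rfl
    have e' : ∀ i : Fin 1, Fin.natAdd m i = Fin.last m := fun i => by ext; simp
    ext (i | i) (j | j) <;> simp [hr, hc, hr', hc', e, e']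
  have hN : (fromBlocks (of fun i j : Fin m => a i j)
      (of fun (i : Fin m) (q : Fin 2) => a i (m + q))
      (of fun (p : Fin 2) (j : Fin m) => a (m + p) j)
      (of fun p q : Fin 2 => a (m + p) (m + q))).det
      = (of fun i j : Fin (m + 2) => a i j).det := by
    rw [← Matrix.det_submatrix_equiv_self (finSumFinEquiv (m := m) (n := 2))]
    congr 1
    ext (i | i) (j | j) <;> simp
  have s1 : ∀ i : Fin m, skipIdx m i.castSucc = i := fun i => by
    simp [skipIdx, Fin.castSucc_ne_last]
  have s2 : skipIdx m (Fin.last m) = m + 1 := by simp [skipIdx]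
  simp only [] at h
  rw [hN, key (fun i => i) (fun i => i) 0 0 (by simp) (by simp) (by simp) (by simp),
    key (skipIdx m) (skipIdx m) 1 1 s1 s1 (by simp [s2]) (by simp [s2]),
    key (skipIdx m) (fun i => i) 1 0 s1 (by simp) (by simp [s2]) (by simp),
    key (fun i => i) (skipIdx m) 0 1 (by simp) s1 (by simp) (by simp [s2])] at h
  exact h

/-- If differentiation raises the index of `T` by one, then differentiating the determinant moves
only the last row: moving any other row up makes it equal to the next one. -/
theorem hasDerivAt_shift_rows (m : ℕ) (T : ℝ → ℤ → ℂ) (x : ℝ)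
    (hT : ∀ k, HasDerivAt (fun t => T t k) (T x (k + 1)) x) (c : Fin (m + 1) → ℤ) :
    HasDerivAt (fun t => (of fun i j : Fin (m + 1) => T t (i - c j)).det)
      (of fun i j : Fin (m + 1) => T x (skipIdx m i - c j)).det x := by
  have h := hasDerivAt_det_rows (A := fun t => of fun i j : Fin (m + 1) => T t (i - c j))
    (A' := of fun i j : Fin (m + 1) => T x (i - c j + 1)) (x := x) (fun i j => hT _)
  convert h using 1
  rw [Fin.sum_univ_castSucc, Finset.sum_eq_zero, zero_add]
  · congr 1
    ext i j
    rcases Fin.eq_castSucc_or_eq_last i with ⟨i, rfl⟩ | rfl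
    · simp [skipIdx, Matrix.updateRow_ne, Fin.castSucc_ne_last]
    · simp only [of_apply, updateRow_self, skipIdx, if_true, Fin.val_last]
      congr 1; ring
  · intro i _
    refine Matrix.det_zero_of_row_eq (i := i.castSucc) (j := i.succ) ?_ ?_
    · exact (Fin.castSucc_lt_succ).ne
    · rw [Matrix.updateRow_self, Matrix.updateRow_ne (Fin.castSucc_lt_succ).ne']
      ext j
      simp only [of_apply, Fin.val_castSucc, Fin.val_succ]
      congr 1; push_cast; ring

/-- Toda equation for the Toeplitz determinants of a family with `∂ₓ T k = T (k + 1)` and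
`∂_y T k = -T (k - 1)`: the derivatives are the shifted minors of the Desnanot–Jacobi identity. -/
theorem toda_toeplitz (m : ℕ) (T : ℤ → ℝ → ℝ → ℂ)
    (hx : ∀ k x y, HasDerivAt (fun t => T k t y) (T (k + 1) x y) x)
    (hy : ∀ k x y, HasDerivAt (fun t => T k x t) (-T (k - 1) x y) y) (x y : ℝ) :
    let τ : ℕ → ℝ → ℝ → ℂ := fun n x y => (of fun i j : Fin n => T (i - j) x y).det
    τ (m + 1) x y * deriv (fun x' => deriv (fun y' => τ (m + 1) x' y') y) x
      - deriv (fun x' => τ (m + 1) x' y) x * deriv (fun y' => τ (m + 1) x y') y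
    = -(τ (m + 2) x y * τ m x y) := by
  intro τ
  have hyy : ∀ x, deriv (fun y' => τ (m + 1) x y') y =
      - (of fun i j : Fin (m + 1) => T (i - skipIdx m j) x y).det := by
    intro x
    -- Reflecting `y` and the index turns the column shift into a row shift.
    have h := hasDerivAt_shift_rows m (fun t k => T (-k) x (-t)) (-y)
      (fun k => by
        have h1 := (hy (-k) x (- -y)).scomp (-y) (hasDerivAt_neg (-y))
        simp only [neg_neg, smul_neg, neg_smul, one_smul] at h1 ⊢
        have e : -(k + 1) = -k - 1 := by ring
        rw [e]
        exact h1) (fun j => j)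
    have h2 := h.scomp y (hasDerivAt_neg y)
    have h3 : ((fun t => (of fun i j : Fin (m + 1) => T (-((i : ℤ) - (j : ℤ))) x (-t)).det) ∘
        fun t => -t) = fun y' => τ (m + 1) x y' := by
      funext t
      simp only [Function.comp, τ]
      rw [← Matrix.det_transpose]
      congr 1
      ext i j
      simp
    rw [Function.comp_def] at h3
    have h4 : HasDerivAt (fun y' => τ (m + 1) x y') _ y := h3 ▸ (show HasDerivAt (fun t => _) _ y from h2)
    rw [h4.deriv]
    rw [← Matrix.det_transpose]
    simp only [neg_smul, one_smul, neg_neg]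
    congr 2
    ext i j
    simp
  have hxx : ∀ c : Fin (m + 1) → ℤ,
      deriv (fun x' => (of fun i j : Fin (m + 1) => T (i - c j) x' y).det) x =
        (of fun i j : Fin (m + 1) => T (skipIdx m i - c j) x y).det := fun c =>
    (hasDerivAt_shift_rows m (fun t k => T k t y) x
      (fun k => hx k x y) c).deriv
  simp only [hyy]
  rw [deriv.fun_neg, hxx, hxx (fun j => j)]
  have := desnanot_int m (fun r s => T (r - s) x y)
  simp only [τ]
  linear_combination -this

/-! ### Exponential integrals over compact spaces -/

theorem integrable_of_continuous_compact {Ω : Type*} [TopologicalSpace Ω] [CompactSpace Ω]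
    [MeasurableSpace Ω] [BorelSpace Ω] (μ : Measure Ω) [IsFiniteMeasure μ] {f : Ω → ℂ}
    (hf : Continuous f) : Integrable f μ :=
  hf.integrable_of_hasCompactSupport (HasCompactSupport.of_compactSpace f)

/-- An exponential integral is determined by the mixed moments of `t` and its conjugate. -/
theorem hasSum_exp_moments {Ω : Type*} [TopologicalSpace Ω] [CompactSpace Ω]
    [MeasurableSpace Ω] [BorelSpace Ω] (μ : Measure Ω) [IsFiniteMeasure μ] {t w : Ω → ℂ}
    (ht : Continuous t) (hw : Continuous w) (x y : ℝ) :
    HasSum (fun p : ℕ × ℕ => ((x : ℂ) ^ p.1 / p.1.factorial * ((-y : ℂ) ^ p.2 / p.2.factorial)) *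
        ∫ ω, w ω * (t ω ^ p.1 * (starRingEnd ℂ) (t ω) ^ p.2) ∂μ)
      (∫ ω, w ω * Complex.exp (x * t ω - y * (starRingEnd ℂ) (t ω)) ∂μ) := by
  obtain ⟨K, hK⟩ := (isCompact_range ht.norm).bddAbove
  obtain ⟨W, hW⟩ := (isCompact_range hw.norm).bddAbove
  have hK' : ∀ ω, ‖t ω‖ ≤ K := fun ω => hK ⟨ω, rfl⟩
  have hW' : ∀ ω, ‖w ω‖ ≤ W := fun ω => hW ⟨ω, rfl⟩
  let F : ℕ × ℕ → Ω → ℂ := fun p ω => w ω * ((x * t ω) ^ p.1 / p.1.factorial *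
    ((-y * (starRingEnd ℂ) (t ω)) ^ p.2 / p.2.factorial))
  have hFc : ∀ p, Continuous (F p) := fun p => by
    simp only [F]
    have : Continuous fun ω => (starRingEnd ℂ) (t ω) := Complex.continuous_conj.comp ht
    fun_prop
  have hF := hasSum_integral_of_summable_integral_norm (μ := μ) (F := F)
    (fun p => integrable_of_continuous_compact μ (hFc p)) (by
      have hs : Summable fun p : ℕ × ℕ => (W * μ.real Set.univ) *
          ((|x| * K) ^ p.1 / p.1.factorial * ((|y| * K) ^ p.2 / p.2.factorial)) :=
        (summable_mul_of_summable_norm (Real.summable_pow_div_factorial _).norm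
          (Real.summable_pow_div_factorial _).norm).mul_left _
      refine Summable.of_nonneg_of_le (fun p => integral_nonneg fun ω => norm_nonneg _)
        (fun p => ?_) hs
      have hb : ∀ ω, ‖F p ω‖ ≤ W * ((|x| * K) ^ p.1 / p.1.factorial *
          ((|y| * K) ^ p.2 / p.2.factorial)) := by
        intro ω
        have h1 := hK' ω
        have h2 := hW' ω
        have h3 : 0 ≤ W := (norm_nonneg _).trans h2
        have h4 : 0 ≤ K := (norm_nonneg _).trans h1
        simp only [F, norm_mul, norm_div, norm_pow, norm_neg, Complex.norm_real,
          RCLike.norm_conj, Complex.norm_natCast, Real.norm_eq_abs]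
        gcongr
      calc ∫ ω, ‖F p ω‖ ∂μ ≤ ∫ _, W * ((|x| * K) ^ p.1 / p.1.factorial *
          ((|y| * K) ^ p.2 / p.2.factorial)) ∂μ :=
            integral_mono (integrable_of_continuous_compact μ (hFc p)).norm
              (integrable_const _) hb
        _ = _ := by rw [integral_const, smul_eq_mul]; ring)
  have hsum : ∀ ω, ∑' p, F p ω = w ω * Complex.exp (x * t ω - y * (starRingEnd ℂ) (t ω)) := by
    intro ω
    simp only [F]
    rw [tsum_mul_left, ← tsum_mul_tsum_of_summable_norm
      (f := fun n : ℕ => (x * t ω) ^ n / (n.factorial : ℂ))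
      (g := fun n : ℕ => (-y * (starRingEnd ℂ) (t ω)) ^ n / (n.factorial : ℂ)),
      sub_eq_add_neg, Complex.exp_add, Complex.exp_eq_exp_ℂ]
    · rw [← (NormedSpace.expSeries_div_hasSum_exp _).tsum_eq,
        ← (NormedSpace.expSeries_div_hasSum_exp _).tsum_eq, neg_mul]
    · exact NormedSpace.norm_expSeries_div_summable _
    · exact NormedSpace.norm_expSeries_div_summable _
  simp only [hsum] at hF
  refine hF.congr_fun fun p => ?_
  rw [← integral_const_mul]
  congr 1
  funext ω
  simp only [F]
  rw [mul_pow, mul_pow]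
  ring

theorem hasDerivAt_integral_exp {Ω : Type*} [TopologicalSpace Ω] [CompactSpace Ω]
    [MeasurableSpace Ω] [BorelSpace Ω] (μ : Measure Ω) [IsFiniteMeasure μ] {u v w : Ω → ℂ}
    (hu : Continuous u) (hv : Continuous v) (hw : Continuous w) (x : ℝ) :
    HasDerivAt (fun s : ℝ => ∫ ω, w ω * Complex.exp (s * u ω + v ω) ∂μ)
      (∫ ω, w ω * (u ω * Complex.exp (x * u ω + v ω)) ∂μ) x := by
  obtain ⟨B, hB⟩ : ∃ B, ∀ p : Ω × Metric.closedBall x 1,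
      ‖w p.1 * (u p.1 * Complex.exp ((p.2 : ℝ) * u p.1 + v p.1))‖ ≤ B := by
    have hc : Continuous fun p : Ω × Metric.closedBall x 1 =>
      ‖w p.1 * (u p.1 * Complex.exp ((p.2 : ℝ) * u p.1 + v p.1))‖ := by fun_prop
    have : CompactSpace (Metric.closedBall x 1) :=
      isCompact_iff_compactSpace.1 (isCompact_closedBall x 1)
    obtain ⟨B, hB⟩ := (isCompact_range hc).bddAbove
    exact ⟨B, fun p => hB ⟨p, rfl⟩⟩
  refine (hasDerivAt_integral_of_dominated_loc_of_deriv_le (μ := μ) (bound := fun _ => B)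
    (x₀ := x) (s := Metric.closedBall x 1)
    (F := fun (s : ℝ) ω => w ω * Complex.exp (s * u ω + v ω))
    (F' := fun (s : ℝ) ω => w ω * (u ω * Complex.exp (s * u ω + v ω)))
    (Metric.closedBall_mem_nhds x one_pos) ?_ ?_ ?_ ?_ (integrable_const _) ?_).2
  · exact Filter.Eventually.of_forall fun s =>
      (integrable_of_continuous_compact μ (by fun_prop)).aestronglyMeasurable
  · exact integrable_of_continuous_compact μ (by fun_prop)
  · exact (integrable_of_continuous_compact μ (by fun_prop)).aestronglyMeasurable
  · exact Filter.Eventually.of_forall fun ω s hs => hB (ω, ⟨s, hs⟩)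
  · refine Filter.Eventually.of_forall fun ω s _ => ?_
    have h1 : HasDerivAt (fun s : ℝ => (s : ℂ) * u ω + v ω) (u ω) s := by
      simpa using ((Complex.ofRealCLM.hasDerivAt (x := s)).mul_const (u ω)).add_const (v ω)
    have h2 := (h1.cexp).const_mul (w ω)
    rw [mul_comm (u ω)]
    exact h2

/-! ### The torus integral -/

/-- The Fourier coefficient `∫ zᵏ exp (x z - y z̄)` of the symbol over the unit circle, with
`z = fourier 1 θ`. -/
noncomputable def symbolCoeff (k : ℤ) (x y : ℝ) : ℂ :=
  ∫ θ : UnitAddCircle, fourier k θ * Complex.exp (x * fourier 1 θ -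
    y * (starRingEnd ℂ) (fourier 1 θ : ℂ)) ∂AddCircle.haarAddCircle

theorem hasDerivAt_symbolCoeff_left (k : ℤ) (x y : ℝ) :
    HasDerivAt (fun s => symbolCoeff k s y) (symbolCoeff (k + 1) x y) x := by
  have h := hasDerivAt_integral_exp (Ω := UnitAddCircle) AddCircle.haarAddCircle
    (u := fun θ => fourier 1 θ) (v := fun θ => -(y * (starRingEnd ℂ) (fourier 1 θ : ℂ)))
    (w := fun θ => fourier k θ) (map_continuous _)
    ((continuous_const.mul (Complex.continuous_conj.comp (map_continuous _))).neg)
    (map_continuous _) x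
  simp only [← sub_eq_add_neg] at h
  have e : symbolCoeff (k + 1) x y = _ := integral_congr_ae (Filter.Eventually.of_forall fun θ =>
    show _ = fourier k θ * (fourier 1 θ * Complex.exp (x * fourier 1 θ -
      y * (starRingEnd ℂ) (fourier 1 θ : ℂ))) by beta_reduce; rw [fourier_add]; ring)
  rw [e]
  exact h

theorem hasDerivAt_symbolCoeff_right (k : ℤ) (x y : ℝ) :
    HasDerivAt (fun s => symbolCoeff k x s) (-symbolCoeff (k - 1) x y) y := by
  have h := hasDerivAt_integral_exp (Ω := UnitAddCircle) AddCircle.haarAddCircle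
    (u := fun θ => -(starRingEnd ℂ) (fourier 1 θ : ℂ)) (v := fun θ => x * fourier 1 θ)
    (w := fun θ => fourier k θ) ((Complex.continuous_conj.comp (map_continuous _)).neg)
    (continuous_const.mul (map_continuous _)) (map_continuous _) y
  have e : ∀ (s : ℝ) (θ : UnitAddCircle), (s : ℂ) * -(starRingEnd ℂ) (fourier 1 θ : ℂ) +
      x * fourier 1 θ = x * fourier 1 θ - s * (starRingEnd ℂ) (fourier 1 θ : ℂ) := by
    intros; ring
  simp only [e] at h
  have e' : -symbolCoeff (k - 1) x y = _ := (integral_neg _).symm.trans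
    (integral_congr_ae (Filter.Eventually.of_forall fun θ =>
      show _ = fourier k θ * (-(starRingEnd ℂ) (fourier 1 θ : ℂ) * Complex.exp (x * fourier 1 θ -
        y * (starRingEnd ℂ) (fourier 1 θ : ℂ))) by
        beta_reduce
        rw [sub_eq_add_neg k, fourier_add, fourier_neg (n := 1)]; ring))
  rw [e']
  exact h

theorem integral_fourier_eq (k : ℤ) :
    ∫ θ : UnitAddCircle, (fourier k θ : ℂ) ∂AddCircle.haarAddCircle = if k = 0 then 1 else 0 := by
  have h := congrFun (fourierCoeff_fourier (T := 1) k) 0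
  simp only [fourierCoeff, neg_zero, fourier_zero, one_smul] at h
  rw [h]
  by_cases hk : k = 0
  · simp [hk]
  · simp [hk, Ne.symm hk]

/-- The number of occurrences of `i` in the word `l`. -/
def occ {n a : ℕ} (l : Fin a → Fin n) (i : Fin n) : ℕ := (Finset.univ.filter fun s => l s = i).card

theorem prod_occ {n a : ℕ} (l : Fin a → Fin n) (f : Fin n → ℂ) :
    ∏ s, f (l s) = ∏ i, f i ^ occ l i := by
  rw [← Finset.prod_fiberwise Finset.univ l]
  refine Finset.prod_congr rfl fun i _ => ?_
  rw [occ, Finset.prod_congr rfl (g := fun _ => f i) (by simp +contextual), Finset.prod_const]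

/-- The weight `∑ σ, sgn σ ∏ zᵢ ^ (σ i - i)`. Integrating against it on the torus stands in for
the Weyl integration formula. -/
noncomputable def torusWeight (n : ℕ) (θ : Fin n → UnitAddCircle) : ℂ :=
  ∑ σ : Equiv.Perm (Fin n), ((Equiv.Perm.sign σ : ℤ) : ℂ) *
    ∏ i, fourier ((σ i : ℤ) - (i : ℤ)) (θ i)

/-- Normalized Haar measure on the `n`-torus. -/
noncomputable def torusMeasure (n : ℕ) : Measure (Fin n → UnitAddCircle) :=
  Measure.pi fun _ => AddCircle.haarAddCircle

instance (n : ℕ) : IsProbabilityMeasure (torusMeasure n) := by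
  unfold torusMeasure; infer_instance

/-- The sum `z₁ + ⋯ + zₙ` on the torus, i.e. the trace of the diagonal matrix. -/
noncomputable def torusTrace (n : ℕ) (θ : Fin n → UnitAddCircle) : ℂ := ∑ i, fourier 1 (θ i)

@[fun_prop]
theorem continuous_torusTrace (n : ℕ) : Continuous (torusTrace n) :=
  continuous_finsetSum _ fun i _ => (map_continuous (fourier 1)).comp (continuous_apply i)

theorem continuous_fourier_prod {n : ℕ} (k : Fin n → ℤ) :
    Continuous fun θ : Fin n → UnitAddCircle => ∏ i, (fourier (k i) (θ i) : ℂ) :=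
  continuous_finsetProd _ fun i _ => (map_continuous (fourier (k i))).comp (continuous_apply i)

theorem continuous_torusWeight (n : ℕ) : Continuous (torusWeight n) :=
  continuous_finsetSum _ fun _ _ => continuous_const.mul (continuous_fourier_prod _)

theorem integral_torus_exp (n : ℕ) (x y : ℝ) :
    ∫ θ, torusWeight n θ * Complex.exp (x * torusTrace n θ -
      y * (starRingEnd ℂ) (torusTrace n θ)) ∂torusMeasure n =
    (of fun i j : Fin n => symbolCoeff (i - j) x y).det := by
  have hexp : ∀ θ : Fin n → UnitAddCircle, Complex.exp (x * torusTrace n θ -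
      y * (starRingEnd ℂ) (torusTrace n θ)) = ∏ i, Complex.exp (x * fourier 1 (θ i) -
        y * (starRingEnd ℂ) (fourier 1 (θ i) : ℂ)) := by
    intro θ
    rw [← Complex.exp_sum, torusTrace, map_sum, Finset.mul_sum, Finset.mul_sum,
      ← Finset.sum_sub_distrib]
  have hc : ∀ i : Fin n, Continuous fun θ : Fin n → UnitAddCircle =>
      Complex.exp (x * fourier 1 (θ i) - y * (starRingEnd ℂ) (fourier 1 (θ i) : ℂ)) := fun i => by
    have h1 : Continuous fun θ : Fin n → UnitAddCircle => (fourier 1 (θ i) : ℂ) :=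
      (map_continuous (fourier 1)).comp (continuous_apply i)
    have h2 := Complex.continuous_conj.comp h1
    simp only [Function.comp_def] at h2
    fun_prop
  simp only [hexp, torusWeight, Finset.sum_mul]
  rw [integral_finsetSum]
  · rw [Matrix.det_apply']
    refine Finset.sum_congr rfl fun σ _ => ?_
    simp only [mul_assoc]
    rw [integral_const_mul]
    congr 1
    simp only [← Finset.prod_mul_distrib]
    exact integral_fintype_prod_eq_prod (fun i (θ : UnitAddCircle) =>
      fourier ((σ i : ℤ) - (i : ℤ)) θ * Complex.exp (x * fourier 1 θ -
        y * (starRingEnd ℂ) (fourier 1 θ : ℂ)))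
  · intro σ _
    exact integrable_of_continuous_compact _ ((continuous_const.mul
      (continuous_fourier_prod _)).mul (continuous_finsetProd _ fun i _ => hc i))

theorem fourier_pow_nat (k : ℕ) (θ : UnitAddCircle) : (fourier 1 θ : ℂ) ^ k = fourier k θ := by
  induction k with
  | zero => simp
  | succ k ih => rw [pow_succ, ih, Nat.cast_succ, fourier_add]

theorem integral_torus_moment (n a b : ℕ) :
    ∫ θ, torusWeight n θ * (torusTrace n θ ^ a * (starRingEnd ℂ) (torusTrace n θ) ^ b)
      ∂torusMeasure n =
    ∑ l : Fin a → Fin n, ∑ σ : Equiv.Perm (Fin n), ((Equiv.Perm.sign σ : ℤ) : ℂ) *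
      ∑ l' : Fin b → Fin n,
        if ∀ i, (occ l' i : ℤ) = occ l i - i + σ i then 1 else 0 := by
  have hex : ∀ θ, torusWeight n θ * (torusTrace n θ ^ a * (starRingEnd ℂ) (torusTrace n θ) ^ b) =
      ∑ l : Fin a → Fin n, ∑ σ : Equiv.Perm (Fin n), ∑ l' : Fin b → Fin n,
        ((Equiv.Perm.sign σ : ℤ) : ℂ) *
          ∏ i, (fourier ((σ i : ℤ) - i + occ l i - occ l' i) (θ i) : ℂ) := by
    intro θ
    rw [torusTrace, map_sum, Fintype.sum_pow, Fintype.sum_pow, Finset.sum_mul_sum, torusWeight,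
      Finset.sum_mul_sum, Finset.sum_comm]
    refine Finset.sum_congr rfl fun l _ => Finset.sum_congr rfl fun σ _ => ?_
    rw [Finset.mul_sum]
    refine Finset.sum_congr rfl fun l' _ => ?_
    rw [mul_assoc, prod_occ l (fun i => fourier 1 (θ i)),
      prod_occ l' (fun i => (starRingEnd ℂ) (fourier 1 (θ i))), ← Finset.prod_mul_distrib,
      ← Finset.prod_mul_distrib]
    congr 1
    refine Finset.prod_congr rfl fun i _ => ?_
    rw [fourier_pow_nat, ← map_pow (starRingEnd ℂ), fourier_pow_nat, ← fourier_neg, ← fourier_add, ← fourier_add]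
    congr 1
    ring_nf
  have hint : ∀ (c : ℂ) (k : Fin n → ℤ), Integrable (fun θ : Fin n → UnitAddCircle =>
      c * ∏ i, (fourier (k i) (θ i) : ℂ)) (torusMeasure n) := fun c k =>
    integrable_of_continuous_compact _ (continuous_const.mul (continuous_fourier_prod _))
  simp only [hex]
  rw [integral_finsetSum _ fun l _ => integrable_finsetSum _ fun σ _ =>
    integrable_finsetSum _ fun l' _ => hint _ _]
  refine Finset.sum_congr rfl fun l _ => ?_
  rw [integral_finsetSum _ fun σ _ => integrable_finsetSum _ fun l' _ => hint _ _]
  refine Finset.sum_congr rfl fun σ _ => ?_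
  rw [integral_finsetSum _ fun l' _ => hint _ _, Finset.mul_sum]
  refine Finset.sum_congr rfl fun l' _ => ?_
  rw [integral_const_mul]
  congr 1
  refine (integral_fintype_prod_eq_prod (fun i (θ : UnitAddCircle) =>
      (fourier ((σ i : ℤ) - i + occ l i - occ l' i) θ : ℂ))).trans ?_
  simp only [integral_fourier_eq]
  rw [Finset.prod_ite_zero]
  simp only [Finset.mem_univ, true_imp_iff, Finset.prod_const_one]
  congr 1
  exact propext (forall_congr' fun i => by omega)

/-! ### Powers of the first power sum as sums of Jacobi–Trudi determinants -/

/-- A Pieri rule. If `h` satisfies a linear recurrence of order `m + 1` with leading coefficient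
`c 0`, raising one column index at a time multiplies the Jacobi–Trudi determinant by `c 0`. -/
theorem sum_det_shift {m : ℕ} (h : ℤ → ℂ) (c : Fin (m + 1) → ℂ)
    (hrec : ∀ k : ℤ, 1 ≤ k → h k = ∑ i : Fin (m + 1), c i * h (k - 1 - i))
    (β : Fin (m + 1) → ℤ) (hβ : ∀ j, 0 ≤ β j) :
    ∑ r, (of fun i j : Fin (m + 1) => h ((β j + if r = j then 1 else 0) - j + i)).det =
      c 0 * (of fun i j : Fin (m + 1) => h (β j - j + i)).det := by
  -- Raising an index acts as right multiplication by the companion matrix `K`, whose trace is `c 0`.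
  set A : Matrix (Fin (m + 1)) (Fin (m + 1)) ℂ := of fun j i => h (β j - j + i) with hA
  set B : Matrix (Fin (m + 1)) (Fin (m + 1)) ℂ := of fun j i => h (β j - j + i + 1) with hB
  set K : Matrix (Fin (m + 1)) (Fin (m + 1)) ℂ := of fun i' i =>
    if i = Fin.last m then c i'.rev else if (i' : ℕ) = i + 1 then 1 else 0 with hK
  have hBK : B = A * K := by
    ext j i
    rw [Matrix.mul_apply]
    rcases Fin.eq_castSucc_or_eq_last i with ⟨i, rfl⟩ | rfl
    · rw [Finset.sum_eq_single i.succ]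
      · simp only [hA, hB, hK, of_apply, Fin.castSucc_ne_last, if_false, Fin.val_succ,
          Fin.val_castSucc, if_true, mul_one]
        congr 1; push_cast; ring
      · intro b _ hb
        have : (b : ℕ) ≠ i + 1 := fun h => hb (Fin.ext (by simpa using h))
        simp [hK, Fin.castSucc_ne_last, this]
      · simp
    · simp only [hA, hB, hK, of_apply, if_true]
      have hj := j.is_lt
      rw [hrec _ (by have := hβ j; simp only [Fin.val_last]; omega), ← Equiv.sum_comp Fin.revPerm]
      refine Finset.sum_congr rfl fun i _ => ?_
      rw [mul_comm, Fin.revPerm_apply]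
      congr 2
      have := i.is_lt
      simp only [Fin.val_rev, Fin.val_last]
      omega
  have htr : K.trace = c 0 := by
    rw [Matrix.trace, Fin.sum_univ_castSucc, Finset.sum_eq_zero]
    · simp [hK]
    · intro i _
      simp [hK, Fin.castSucc_ne_last]
  have hdet : (of fun i j : Fin (m + 1) => h (β j - j + i)).det = A.det := by
    rw [← Matrix.det_transpose]; rfl
  have hrow : ∀ r, (of fun i j : Fin (m + 1) => h ((β j + if r = j then 1 else 0) - j + i)).det =
      (A.updateRow r (B r)).det := by
    intro r
    rw [← Matrix.det_transpose]
    congr 1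
    ext j i
    by_cases hj : j = r
    · subst hj
      simp only [transpose_apply, of_apply, updateRow_self, hB, if_true]
      congr 1; ring
    · simp [Matrix.updateRow_ne hj, hA, Ne.symm hj]
  rw [hdet, Finset.sum_congr rfl fun r _ => hrow r, sum_det_updateRow, hBK, Matrix.mul_assoc,
    Matrix.trace_mul_comm, Matrix.mul_assoc, Matrix.adjugate_mul, ← htr]
  simp [mul_comm]

theorem occ_cons {n a : ℕ} (r : Fin n) (l : Fin a → Fin n) (j : Fin n) :
    occ (Fin.cons r l : Fin (a + 1) → Fin n) j = occ l j + if r = j then 1 else 0 := by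
  simp only [occ, Finset.card_filter]
  rw [Fin.sum_univ_succ]
  simp [add_comm]

/-- Iterating the Pieri rule from the empty shape, whose determinant is triangular with unit
diagonal. -/
theorem pow_eq_sum_det {m : ℕ} (h : ℤ → ℂ) (c : Fin (m + 1) → ℂ) (h0 : h 0 = 1)
    (hneg : ∀ k < 0, h k = 0)
    (hrec : ∀ k : ℤ, 1 ≤ k → h k = ∑ i : Fin (m + 1), c i * h (k - 1 - i)) (a : ℕ) :
    c 0 ^ a = ∑ l : Fin a → Fin (m + 1),
      (of fun i j : Fin (m + 1) => h (occ l j - j + i)).det := by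
  induction a with
  | zero =>
    have : ∀ l : Fin 0 → Fin (m + 1), ∀ j, occ l j = 0 := by simp [occ]
    simp only [pow_zero, Fintype.sum_unique, this, Nat.cast_zero, zero_sub]
    rw [Matrix.det_of_isLowerTriangular]
    · simp [h0]
    · intro i j hij
      exact hneg _ (by
        have : (i : ℕ) < j := hij
        omega)
  | succ a ih =>
    rw [← (Fin.consEquiv fun _ => Fin (m + 1)).sum_comp, Fintype.sum_prod_type_right, pow_succ', ih,
      Finset.mul_sum]
    refine Finset.sum_congr rfl fun l _ => ?_
    rw [← sum_det_shift h c hrec (fun j => (occ l j : ℤ)) (fun j => Int.natCast_nonneg _)]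
    refine Finset.sum_congr rfl fun r _ => ?_
    simp [Fin.consEquiv, occ_cons]

/-- Extension of a sequence to `ℤ` by zero at negative indices. -/
def extendInt (f : ℕ → ℂ) (k : ℤ) : ℂ := if 0 ≤ k then f k.toNat else 0

/-- The complete homogeneous symmetric polynomial `h_k` evaluated at `z`. -/
noncomputable def hsymmAt {n : ℕ} (z : Fin n → ℂ) (k : ℕ) : ℂ :=
  ∑ α ∈ (Finset.univ : Finset (Fin n)).finsuppAntidiag k, ∏ i, z i ^ α i

theorem coeff_zero_prod_one_sub {ι : Type*} (s : Finset ι) (z : ι → ℂ) :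
    (∏ i ∈ s, (1 - Polynomial.C (z i) * Polynomial.X)).coeff 0 = 1 := by
  rw [Polynomial.coeff_zero_prod]
  simp

theorem coeff_one_prod_one_sub {ι : Type*} (s : Finset ι) (z : ι → ℂ) :
    (∏ i ∈ s, (1 - Polynomial.C (z i) * Polynomial.X)).coeff 1 = -∑ i ∈ s, z i := by
  classical
  induction s using Finset.induction_on with
  | empty => simp [Polynomial.coeff_one]
  | insert i s hi ih =>
    rw [Finset.prod_insert hi, Finset.sum_insert hi, sub_mul, one_mul, mul_assoc,
      Polynomial.coeff_sub, ih, Polynomial.coeff_C_mul, Polynomial.coeff_X_mul,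
      coeff_zero_prod_one_sub]
    ring

/-- Recurrence of the `h_k`, from `∑ h_k Xᵏ = ∏ (1 - zᵢ X)⁻¹`. -/
theorem hsymmAt_recurrence {n : ℕ} (z : Fin n → ℂ) (k : ℤ) (hk : 1 ≤ k) :
    extendInt (hsymmAt z) k = ∑ i : Fin n,
      -(∏ i, (1 - Polynomial.C (z i) * Polynomial.X)).coeff (i + 1) *
        extendInt (hsymmAt z) (k - 1 - i) := by
  obtain ⟨k, rfl⟩ := Int.eq_ofNat_of_zero_le (by omega : 0 ≤ k)
  set E : Polynomial ℂ := ∏ i, (1 - Polynomial.C (z i) * Polynomial.X) with hE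
  have hdeg : E.natDegree ≤ n := by
    refine (Polynomial.natDegree_prod_le _ _).trans ?_
    refine (Finset.sum_le_card_nsmul _ _ 1 fun i _ => ?_).trans (by simp)
    compute_degree
  have hgeom : ∀ w : ℂ, ((1 - Polynomial.C w * Polynomial.X : Polynomial ℂ) : PowerSeries ℂ) *
      PowerSeries.mk (fun k => w ^ k) = 1 := by
    intro w
    ext k
    push_cast
    rw [sub_mul, one_mul, mul_assoc, map_sub, PowerSeries.coeff_C_mul]
    cases k with
    | zero => simp
    | succ k => simp [PowerSeries.coeff_succ_X_mul, PowerSeries.coeff_one, pow_succ']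
  have hEH : (E : PowerSeries ℂ) * ∏ i, PowerSeries.mk (fun k => z i ^ k) = 1 := by
    have : (E : PowerSeries ℂ) =
        ∏ i, ((1 - Polynomial.C (z i) * Polynomial.X : Polynomial ℂ) : PowerSeries ℂ) := by
      rw [hE]
      simpa only [Polynomial.coeToPowerSeries.ringHom_apply] using
        map_prod (Polynomial.coeToPowerSeries.ringHom (R := ℂ))
          (fun i => 1 - Polynomial.C (z i) * Polynomial.X) Finset.univ
    rw [this, ← Finset.prod_mul_distrib]
    exact Finset.prod_eq_one fun i _ => hgeom (z i)
  have hH : ∀ j, PowerSeries.coeff j (∏ i, PowerSeries.mk (fun k => z i ^ k)) = hsymmAt z j := by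
    intro j
    rw [PowerSeries.coeff_prod]
    simp [hsymmAt]
  have hc := congrArg (PowerSeries.coeff k) hEH
  rw [PowerSeries.coeff_mul, Finset.Nat.sum_antidiagonal_eq_sum_range_succ_mk] at hc
  simp only [hH, Polynomial.coeff_coe, PowerSeries.coeff_one] at hc
  rw [if_neg (by omega)] at hc
  have e1 : ∑ i ∈ Finset.range (k + 1 + (n + 1)), E.coeff i * extendInt (hsymmAt z) (k - i) = 0 := by
    rw [Finset.sum_range_add, ← hc, Finset.sum_eq_zero (s := Finset.range (n + 1)), add_zero]
    · refine Finset.sum_congr rfl fun i hi => ?_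
      have := Finset.mem_range.1 hi
      rw [extendInt, if_pos (by omega)]
      congr 2
      omega
    · intro i _
      rw [extendInt, if_neg (by push_cast; omega), mul_zero]
  rw [add_comm (k + 1), Finset.sum_range_add, Finset.sum_eq_zero (s := Finset.range (k + 1)),
    add_zero, Finset.sum_range_succ', coeff_zero_prod_one_sub] at e1
  · rw [Finset.sum_range] at e1
    simp only [Nat.cast_zero, sub_zero, one_mul] at e1
    rw [eq_neg_of_add_eq_zero_right e1, ← Finset.sum_neg_distrib]
    refine Finset.sum_congr rfl fun i _ => ?_
    rw [neg_mul]
    congr 3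
    push_cast; ring
  · intro i _
    rw [Polynomial.coeff_eq_zero_of_natDegree_lt (by omega), zero_mul]

theorem sum_pow_eq_sum_det {n : ℕ} (z : Fin n → ℂ) (a : ℕ) :
    (∑ i, z i) ^ a = ∑ l : Fin a → Fin n,
      (of fun i j : Fin n => extendInt (hsymmAt z) (occ l j - j + i)).det := by
  cases n with
  | zero =>
    cases a with
    | zero => simp
    | succ a => simp
  | succ m =>
    have h := pow_eq_sum_det (extendInt (hsymmAt z)) _ (by
        simp [extendInt, hsymmAt]) (fun k hk => if_neg (by omega)) (hsymmAt_recurrence z) a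
    rw [← h]
    simp only [Fin.val_zero, zero_add, coeff_one_prod_one_sub, neg_neg]

/-! ### Traces of symmetric powers -/

/-- The action of `M` on polynomials by the linear substitution `Xᵢ ↦ ∑ⱼ Mⱼᵢ Xⱼ`, that is, on
the symmetric algebra of `ℂⁿ`. -/
noncomputable def rowSub {n : ℕ} (M : Matrix (Fin n) (Fin n) ℂ) :
    MvPolynomial (Fin n) ℂ →ₐ[ℂ] MvPolynomial (Fin n) ℂ :=
  MvPolynomial.aeval fun i => ∑ j, MvPolynomial.C (M j i) * MvPolynomial.X j

theorem rowSub_X {n : ℕ} (M : Matrix (Fin n) (Fin n) ℂ) (i : Fin n) :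
    rowSub M (MvPolynomial.X i) = ∑ j, MvPolynomial.C (M j i) * MvPolynomial.X j := by
  simp [rowSub]

theorem rowSub_mul {n : ℕ} (A B : Matrix (Fin n) (Fin n) ℂ) (p : MvPolynomial (Fin n) ℂ) :
    rowSub (A * B) p = rowSub A (rowSub B p) := by
  suffices h : rowSub (A * B) = (rowSub A).comp (rowSub B) by rw [h]; rfl
  refine MvPolynomial.algHom_ext fun i => ?_
  rw [AlgHom.comp_apply, rowSub_X, rowSub_X, map_sum]
  simp only [map_mul, rowSub_X, Matrix.mul_apply, map_sum, Finset.sum_mul, Finset.mul_sum]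
  rw [Finset.sum_comm]
  refine Finset.sum_congr rfl fun j _ => Finset.sum_congr rfl fun k _ => ?_
  rw [← MvPolynomial.algebraMap_eq, AlgHom.commutes]
  ring

theorem eval_rowSub {n : ℕ} (M : Matrix (Fin n) (Fin n) ℂ) (y : Fin n → ℂ)
    (p : MvPolynomial (Fin n) ℂ) :
    MvPolynomial.eval y (rowSub M p) = MvPolynomial.eval (y ᵥ* M) p := by
  induction p using MvPolynomial.induction_on with
  | C a => simp [rowSub]
  | add p q hp hq => simp [hp, hq]
  | mul_X p i hp =>
    rw [map_mul, map_mul, hp, rowSub_X, map_mul]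
    simp [Matrix.vecMul, dotProduct, mul_comm]

theorem degree_of_mem_finsuppAntidiag {n k : ℕ} {α : Fin n →₀ ℕ}
    (hα : α ∈ (Finset.univ : Finset (Fin n)).finsuppAntidiag k) : α.degree = k := by
  rw [Finset.mem_finsuppAntidiag] at hα
  rw [← hα.1, Finsupp.degree_eq_sum]

/-- The substitution preserves the degree, so the image of a monomial of degree `k` is a
combination of monomials of degree `k`. -/
theorem rowSub_monomial {n k : ℕ} (M : Matrix (Fin n) (Fin n) ℂ) {α : Fin n →₀ ℕ}
    (hα : α ∈ (Finset.univ : Finset (Fin n)).finsuppAntidiag k) :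
    rowSub M (MvPolynomial.monomial α 1) = ∑ γ ∈ (Finset.univ : Finset (Fin n)).finsuppAntidiag k,
      MvPolynomial.monomial γ ((rowSub M (MvPolynomial.monomial α 1)).coeff γ) := by
  have hom : (rowSub M (MvPolynomial.monomial α 1)).IsHomogeneous k := by
    have := (MvPolynomial.isHomogeneous_monomial (R := ℂ) 1
      (degree_of_mem_finsuppAntidiag hα)).aeval
      (fun i => ∑ j, MvPolynomial.C (M j i) * MvPolynomial.X j) (n := 1) fun i => by
        refine MvPolynomial.IsHomogeneous.sum _ _ _ fun j _ => ?_
        simpa using (MvPolynomial.isHomogeneous_C (Fin n) (M j i)).mul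
          (MvPolynomial.isHomogeneous_X ℂ j)
    rw [one_mul] at this
    exact this
  ext δ
  rw [MvPolynomial.coeff_sum]
  simp only [MvPolynomial.coeff_monomial]
  rw [Finset.sum_ite_eq']
  split_ifs with h
  · rfl
  · refine hom.coeff_eq_zero fun hd => h ?_
    rw [Finset.mem_finsuppAntidiag]
    exact ⟨by rw [← hd, Finsupp.degree_eq_sum], by simp⟩

/-- The trace of the `k`-th symmetric power of `M`, computed in the monomial basis. -/
noncomputable def symTr {n : ℕ} (M : Matrix (Fin n) (Fin n) ℂ) (k : ℕ) : ℂ :=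
  ∑ α ∈ (Finset.univ : Finset (Fin n)).finsuppAntidiag k,
    (rowSub M (MvPolynomial.monomial α 1)).coeff α

theorem symTr_mul_comm {n : ℕ} (A B : Matrix (Fin n) (Fin n) ℂ) (k : ℕ) :
    symTr (A * B) k = symTr (B * A) k := by
  have key : ∀ A B : Matrix (Fin n) (Fin n) ℂ, symTr (A * B) k =
      ∑ α ∈ (Finset.univ : Finset (Fin n)).finsuppAntidiag k,
        ∑ γ ∈ (Finset.univ : Finset (Fin n)).finsuppAntidiag k,
          (rowSub B (MvPolynomial.monomial α 1)).coeff γ *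
            (rowSub A (MvPolynomial.monomial γ 1)).coeff α := by
    intro A B
    refine Finset.sum_congr rfl fun α hα => ?_
    rw [rowSub_mul, rowSub_monomial B hα, map_sum, MvPolynomial.coeff_sum, ← rowSub_monomial B hα]
    refine Finset.sum_congr rfl fun γ _ => ?_
    rw [← MvPolynomial.coeff_C_mul, ← mul_one (MvPolynomial.coeff γ _), ← MvPolynomial.C_mul_monomial,
      map_mul, mul_one]
    congr 2
    rw [← MvPolynomial.algebraMap_eq, AlgHom.commutes]
  rw [key, key, Finset.sum_comm]
  simp only [mul_comm]

theorem symTr_diagonal {n : ℕ} (z : Fin n → ℂ) (k : ℕ) :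
    symTr (diagonal z) k = hsymmAt z k := by
  refine Finset.sum_congr rfl fun α _ => ?_
  have : rowSub (diagonal z) (MvPolynomial.monomial α 1) =
      MvPolynomial.C (∏ i, z i ^ α i) * MvPolynomial.monomial α 1 := by
    have hX : ∀ i, rowSub (diagonal z) (MvPolynomial.X i) =
        MvPolynomial.C (z i) * MvPolynomial.X i := by
      intro i
      rw [rowSub_X, Finset.sum_eq_single i]
      · simp
      · intro j _ hj
        simp [diagonal_apply_ne _ hj]
      · simp
    rw [MvPolynomial.monomial_eq, Finsupp.prod_fintype _ _ (by simp)]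
    simp only [map_one, one_mul, map_prod, map_pow, hX, mul_pow, Finset.prod_mul_distrib]
  rw [this, MvPolynomial.coeff_C_mul, MvPolynomial.coeff_monomial, if_pos rfl, mul_one]

/-! ### Polynomial functions on matrices and Zariski density -/

/-- Functions of a matrix that are polynomial in its entries. -/
noncomputable def polyFun (n : ℕ) : Subalgebra ℂ (Matrix (Fin n) (Fin n) ℂ → ℂ) :=
  (MvPolynomial.aeval (R := ℂ)
    (fun (p : Fin n × Fin n) (M : Matrix (Fin n) (Fin n) ℂ) => M p.1 p.2)).range

theorem mem_polyFun {n : ℕ} {f : Matrix (Fin n) (Fin n) ℂ → ℂ} :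
    f ∈ polyFun n ↔ ∃ P : MvPolynomial (Fin n × Fin n) ℂ, ∀ M,
      f M = MvPolynomial.eval (fun p => M p.1 p.2) P := by
  have key : ∀ (P : MvPolynomial (Fin n × Fin n) ℂ) (M : Matrix (Fin n) (Fin n) ℂ),
      MvPolynomial.aeval (R := ℂ)
        (fun (p : Fin n × Fin n) (M : Matrix (Fin n) (Fin n) ℂ) => M p.1 p.2) P M =
      MvPolynomial.eval (fun p => M p.1 p.2) P := by
    intro P M
    induction P using MvPolynomial.induction_on with
    | C a => simp
    | add p q hp hq => simp [hp, hq]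
    | mul_X p i hp => simp [hp]
  constructor
  · rintro ⟨P, rfl⟩
    exact ⟨P, fun M => key P M⟩
  · rintro ⟨P, hP⟩
    exact ⟨P, funext fun M => (key P M).trans (hP M).symm⟩

theorem entry_mem_polyFun {n : ℕ} (i j : Fin n) :
    (fun M : Matrix (Fin n) (Fin n) ℂ => M i j) ∈ polyFun n :=
  mem_polyFun.2 ⟨MvPolynomial.X (i, j), by simp⟩

theorem const_mem_polyFun {n : ℕ} (c : ℂ) :
    (fun _ : Matrix (Fin n) (Fin n) ℂ => c) ∈ polyFun n :=
  mem_polyFun.2 ⟨MvPolynomial.C c, by simp⟩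

theorem sum_mem_polyFun {n : ℕ} {ι : Type*} (s : Finset ι)
    (f : ι → Matrix (Fin n) (Fin n) ℂ → ℂ) (hf : ∀ i ∈ s, f i ∈ polyFun n) :
    (fun M => ∑ i ∈ s, f i M) ∈ polyFun n := by
  have := Subalgebra.sum_mem _ hf
  convert this using 1
  ext M; simp

theorem prod_mem_polyFun {n : ℕ} {ι : Type*} (s : Finset ι)
    (f : ι → Matrix (Fin n) (Fin n) ℂ → ℂ) (hf : ∀ i ∈ s, f i ∈ polyFun n) :
    (fun M => ∏ i ∈ s, f i M) ∈ polyFun n := by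
  have := Subalgebra.prod_mem _ hf
  convert this using 1
  ext M; simp

theorem mul_mem_polyFun {n : ℕ} {f g : Matrix (Fin n) (Fin n) ℂ → ℂ} (hf : f ∈ polyFun n)
    (hg : g ∈ polyFun n) : (fun M => f M * g M) ∈ polyFun n :=
  Subalgebra.mul_mem _ hf hg

theorem coeff_rowSub_mem_polyFun {n : ℕ} (p : MvPolynomial (Fin n) ℂ) (γ : Fin n →₀ ℕ) :
    (fun M => (rowSub M p).coeff γ) ∈ polyFun n := by
  induction p using MvPolynomial.induction_on generalizing γ with
  | C a =>
    simp only [← MvPolynomial.algebraMap_eq, AlgHom.commutes]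
    exact const_mem_polyFun _
  | add p q hp hq =>
    simp only [map_add, MvPolynomial.coeff_add]
    exact Subalgebra.add_mem _ (hp γ) (hq γ)
  | mul_X p i hp =>
    simp only [map_mul, rowSub_X]
    simp only [MvPolynomial.coeff_mul (rowSub _ p)]
    refine sum_mem_polyFun _ _ fun a _ => mul_mem_polyFun (hp _) ?_
    simp only [MvPolynomial.coeff_sum, MvPolynomial.coeff_C_mul]
    exact sum_mem_polyFun _ _ fun j _ => mul_mem_polyFun (entry_mem_polyFun j i)
      (const_mem_polyFun _)

theorem symTr_mem_polyFun {n : ℕ} (k : ℕ) : (fun M => symTr (n := n) M k) ∈ polyFun n :=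
  sum_mem_polyFun _ _ fun _ _ => coeff_rowSub_mem_polyFun _ _

theorem continuous_of_mem_polyFun {n : ℕ} {f : Matrix (Fin n) (Fin n) ℂ → ℂ}
    (hf : f ∈ polyFun n) : Continuous f := by
  obtain ⟨P, hP⟩ := mem_polyFun.1 hf
  rw [show f = _ from funext hP]
  exact (MvPolynomial.continuous_eval P).comp
    (continuous_pi fun p => continuous_id.matrix_elem p.1 p.2)

/-- Hermitian matrices are Zariski dense: on a line `A + s B` with `A`, `B` Hermitian the function
is a polynomial in `s` vanishing at all real `s`, hence at `s = i`. -/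
theorem polyFun_eq_zero_of_hermitian {n : ℕ} {f : Matrix (Fin n) (Fin n) ℂ → ℂ}
    (hf : f ∈ polyFun n) (h0 : ∀ H : Matrix (Fin n) (Fin n) ℂ, H.IsHermitian → f H = 0)
    (M : Matrix (Fin n) (Fin n) ℂ) : f M = 0 := by
  obtain ⟨P, hP⟩ := mem_polyFun.1 hf
  set A : Matrix (Fin n) (Fin n) ℂ := (realPart M : Matrix (Fin n) (Fin n) ℂ) with hA
  set B : Matrix (Fin n) (Fin n) ℂ := (imaginaryPart M : Matrix (Fin n) (Fin n) ℂ) with hB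
  have hM : M = A + Complex.I • B := (realPart_add_I_smul_imaginaryPart M).symm
  set q : Polynomial ℂ := MvPolynomial.aeval
    (fun p : Fin n × Fin n => Polynomial.C (A p.1 p.2) + Polynomial.X * Polynomial.C (B p.1 p.2)) P
    with hq
  have hqe : ∀ s : ℂ, q.eval s = f (A + s • B) := by
    intro s
    rw [hP, hq, ← Polynomial.coe_evalRingHom]
    have : (Polynomial.evalRingHom s : Polynomial ℂ →+* ℂ).comp
      (MvPolynomial.aeval (R := ℂ) (fun p : Fin n × Fin n => Polynomial.C (A p.1 p.2) +
        Polynomial.X * Polynomial.C (B p.1 p.2)) : MvPolynomial (Fin n × Fin n) ℂ →ₐ[ℂ] _).toRingHom =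
      MvPolynomial.eval (fun p : Fin n × Fin n => (A + s • B) p.1 p.2) := by
      refine MvPolynomial.ringHom_ext (fun r => ?_) (fun p => ?_)
      · simp
      · simp
        ring
    exact RingHom.congr_fun this P
  have hq0 : q = 0 := by
    refine Polynomial.eq_zero_of_infinite_isRoot q ?_
    refine (Set.infinite_range_of_injective Complex.ofReal_injective).mono ?_
    rintro _ ⟨s, rfl⟩
    change q.eval _ = 0
    rw [hqe]
    refine h0 _ (Matrix.IsHermitian.add (realPart M).2 ?_)
    have : (B : Matrix (Fin n) (Fin n) ℂ)ᴴ = B := (imaginaryPart M).2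
    rw [Matrix.IsHermitian, Matrix.conjTranspose_smul, this]
    simp
  rw [hM, ← hqe, hq0, Polynomial.eval_zero]

theorem hermitian_diagonalization {n : ℕ} {H : Matrix (Fin n) (Fin n) ℂ} (hH : H.IsHermitian) :
    ∃ (U : Matrix.unitaryGroup (Fin n) ℂ) (z : Fin n → ℂ),
      H = (U : Matrix (Fin n) (Fin n) ℂ) * diagonal z * star (U : Matrix (Fin n) (Fin n) ℂ) :=
  ⟨hH.eigenvectorUnitary, _, by
    conv_lhs => rw [hH.spectral_theorem, Unitary.conjStarAlgAut_apply]⟩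

theorem infinite_norm_eq_one : {w : ℂ | ‖w‖ = 1}.Infinite := by
  refine (((Set.Icc_infinite (zero_lt_one (α := ℝ))).image (f := fun t : ℝ =>
    (⟨t, Real.sqrt (1 - t ^ 2)⟩ : ℂ)) fun s _ t _ h => congrArg Complex.re h)).mono ?_
  rintro _ ⟨t, ⟨h0, h1⟩, rfl⟩
  have : 0 ≤ 1 - t ^ 2 := by nlinarith
  have hs := Real.mul_self_sqrt this
  simp only [Set.mem_ofPred_eq, Complex.norm_def, Complex.normSq_mk, hs]
  rw [show t * t + (1 - t ^ 2) = 1 by ring, Real.sqrt_one]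

/-- The unitary group is Zariski dense: for fixed unitary `U` the function
`z ↦ f (U diag(z) U*)` is a polynomial vanishing on the torus, so `f` vanishes at every Hermitian
matrix. -/
theorem polyFun_eq_zero_of_unitary {n : ℕ} {f : Matrix (Fin n) (Fin n) ℂ → ℂ}
    (hf : f ∈ polyFun n) (h0 : ∀ V : Matrix.unitaryGroup (Fin n) ℂ, f V = 0)
    (M : Matrix (Fin n) (Fin n) ℂ) : f M = 0 := by
  refine polyFun_eq_zero_of_hermitian hf (fun H hH => ?_) M
  obtain ⟨U, d, rfl⟩ := hermitian_diagonalization hH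
  obtain ⟨P, hP⟩ := mem_polyFun.1 hf
  set U' : Matrix (Fin n) (Fin n) ℂ := U.1 with hU'
  set q : MvPolynomial (Fin n) ℂ := MvPolynomial.aeval
    (fun p : Fin n × Fin n => ∑ k, MvPolynomial.C (U' p.1 k * (star U') k p.2) *
      MvPolynomial.X k) P with hq
  have hqe : ∀ z : Fin n → ℂ, MvPolynomial.eval z q = f (U' * diagonal z * star U') := by
    intro z
    rw [hP, hq]
    have : (MvPolynomial.eval z).comp
      (MvPolynomial.aeval (R := ℂ) (fun p : Fin n × Fin n => ∑ k, MvPolynomial.C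
        (U' p.1 k * (star U') k p.2) * MvPolynomial.X k) :
          MvPolynomial (Fin n × Fin n) ℂ →ₐ[ℂ] _).toRingHom =
      MvPolynomial.eval (fun p : Fin n × Fin n => (U' * diagonal z * star U') p.1 p.2) := by
      refine MvPolynomial.ringHom_ext (fun r => ?_) (fun p => ?_)
      · simp
      · simp [Matrix.mul_apply (M := U' * diagonal z), Matrix.mul_diagonal]
        exact Finset.sum_congr rfl fun k _ => by ring
    exact RingHom.congr_fun this P
  have hq0 : q = 0 := by
    refine MvPolynomial.funext_set (fun _ => {w : ℂ | ‖w‖ = 1}) (fun _ => ?_) fun z hz => ?_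
    · exact infinite_norm_eq_one
    · rw [hqe, map_zero]
      have hz' : ∀ i, ‖z i‖ = 1 := fun i => hz i trivial
      have hD : diagonal z ∈ Matrix.unitaryGroup (Fin n) ℂ := by
        rw [Matrix.mem_unitaryGroup_iff, Matrix.star_eq_conjTranspose, diagonal_conjTranspose,
          diagonal_mul_diagonal, ← diagonal_one]
        congr 1
        ext i
        simp [Complex.mul_conj, Complex.normSq_eq_norm_sq, hz']
      have h := h0 (U * ⟨_, hD⟩ * star U)
      rwa [Submonoid.coe_mul, Submonoid.coe_mul, Unitary.coe_star] at h
  rw [← hqe, hq0, map_zero]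

theorem extendInt_symTr_mem_polyFun {n : ℕ} (k : ℤ) :
    (fun M => extendInt (symTr (n := n) M) k) ∈ polyFun n := by
  unfold extendInt
  split_ifs
  · exact symTr_mem_polyFun _
  · exact const_mem_polyFun 0

/-- Both sides are polynomial in the entries and invariant under conjugation, so it suffices to
compare them at diagonal matrices. -/
theorem trace_pow_eq_sum_det {n : ℕ} (M : Matrix (Fin n) (Fin n) ℂ) (a : ℕ) :
    M.trace ^ a = ∑ l : Fin a → Fin n,
      (of fun i j : Fin n => extendInt (symTr M) (occ l j - j + i)).det := by
  rw [← sub_eq_zero]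
  refine polyFun_eq_zero_of_hermitian (f := fun M => M.trace ^ a - ∑ l : Fin a → Fin n,
      (of fun i j : Fin n => extendInt (symTr M) (occ l j - j + i)).det) ?_ ?_ M
  · refine Subalgebra.sub_mem _ (Subalgebra.pow_mem _ ?_ a) ?_
    · exact sum_mem_polyFun _ _ fun i _ => entry_mem_polyFun i i
    · refine sum_mem_polyFun _ _ fun l _ => ?_
      simp only [Matrix.det_apply', of_apply]
      exact sum_mem_polyFun _ _ fun σ _ => mul_mem_polyFun (const_mem_polyFun _)
        (prod_mem_polyFun _ _ fun i _ => extendInt_symTr_mem_polyFun _)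
  · intro H hH
    obtain ⟨U, z, rfl⟩ := hermitian_diagonalization hH
    have hU : star (U : Matrix (Fin n) (Fin n) ℂ) * (U : Matrix (Fin n) (Fin n) ℂ) = 1 :=
      Unitary.coe_star_mul_self U
    have hs : symTr ((U : Matrix (Fin n) (Fin n) ℂ) * diagonal z *
        star (U : Matrix (Fin n) (Fin n) ℂ)) = hsymmAt z := by
      ext k
      rw [symTr_mul_comm, ← mul_assoc, hU, one_mul, symTr_diagonal]
    rw [hs, Matrix.trace_mul_comm, ← mul_assoc, hU, one_mul, Matrix.trace_diagonal,
      sum_pow_eq_sum_det, sub_self]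

/-! ### Moments of the trace on the unitary group -/

instance borelSpace_unitaryGroup (n : ℕ) : BorelSpace (Matrix.unitaryGroup (Fin n) ℂ) := ⟨rfl⟩

instance compactSpace_unitaryGroup (n : ℕ) : CompactSpace (Matrix.unitaryGroup (Fin n) ℂ) := by
  refine (isCompact_iff_compactSpace (s := (Matrix.unitaryGroup (Fin n) ℂ :
    Set (Matrix (Fin n) (Fin n) ℂ)))).1 ?_
  have hK : IsCompact (Set.pi Set.univ fun _ : Fin n => Set.pi Set.univ fun _ : Fin n =>
      Metric.closedBall (0 : ℂ) 1) :=
    isCompact_univ_pi fun _ => isCompact_univ_pi fun _ => isCompact_closedBall _ _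
  refine IsCompact.of_isClosed_subset (X := Matrix (Fin n) (Fin n) ℂ) hK ?_ ?_
  · have : (↑(Matrix.unitaryGroup (Fin n) ℂ) : Set (Matrix (Fin n) (Fin n) ℂ)) =
        {M | M * star M = 1} := by
      ext M
      exact Matrix.mem_unitaryGroup_iff
    rw [this]
    exact isClosed_eq (continuous_id.matrix_mul continuous_id.matrix_conjTranspose)
      continuous_const
  · intro M hM i _ j _
    simpa using entry_norm_bound_of_unitary hM i j

theorem continuous_unitary_coe (n : ℕ) :
    Continuous fun M : Matrix.unitaryGroup (Fin n) ℂ => (M : Matrix (Fin n) (Fin n) ℂ) :=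
  continuous_subtype_val

theorem continuous_unitary_entry {n : ℕ} (i j : Fin n) :
    Continuous fun M : Matrix.unitaryGroup (Fin n) ℂ => (M : Matrix (Fin n) (Fin n) ℂ) i j :=
  (continuous_unitary_coe n).matrix_elem i j

theorem unitary_row_sum {n : ℕ} (M : Matrix.unitaryGroup (Fin n) ℂ) (i : Fin n) :
    ∑ r, (starRingEnd ℂ) (M.1 i r) * M.1 i r = 1 := by
  have h := congrFun (congrFun (Matrix.mem_unitaryGroup_iff.1 M.2) i) i
  rw [Matrix.mul_apply, Matrix.one_apply_eq] at h
  rw [← h]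
  exact Finset.sum_congr rfl fun r _ => mul_comm _ _

/-- The monomial `∏ₖ ∏ⱼ Yₖⱼ ^ (α k j)` in the entries of `Y`. -/
def entryMonomial {n : ℕ} (α : Fin n → Fin n →₀ ℕ) (Y : Matrix (Fin n) (Fin n) ℂ) : ℂ :=
  ∏ k, MvPolynomial.eval (Y k) (MvPolynomial.monomial (α k) 1)

/-- The exponent of `entryMonomial α` as a monomial in the variables indexed by pairs. -/
def entryExponent {n : ℕ} (α : Fin n → Fin n →₀ ℕ) : Fin n × Fin n →₀ ℕ :=
  Finsupp.equivFunOnFinite.symm fun p => α p.1 p.2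

theorem entryExponent_injective {n : ℕ} : Function.Injective (entryExponent (n := n)) := by
  intro α β h
  ext k j
  exact DFunLike.congr_fun h (k, j)

theorem eval_entryExponent {n : ℕ} (α : Fin n → Fin n →₀ ℕ) (Y : Matrix (Fin n) (Fin n) ℂ) :
    MvPolynomial.eval (fun p : Fin n × Fin n => Y p.1 p.2)
      (MvPolynomial.monomial (entryExponent α) 1) = entryMonomial α Y := by
  simp only [entryMonomial, MvPolynomial.eval_monomial, one_mul]
  rw [Finsupp.prod_fintype _ _ (by simp), Fintype.prod_prod_type]
  refine Finset.prod_congr rfl fun k _ => ?_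
  rw [Finsupp.prod_fintype _ _ (by simp)]
  rfl

theorem continuous_entryMonomial {n : ℕ} (α : Fin n → Fin n →₀ ℕ) :
    Continuous (entryMonomial α) := by
  refine continuous_of_mem_polyFun (mem_polyFun.2 ⟨_, fun Y => (eval_entryExponent α Y).symm⟩)

/-- The exponent of the monomial `∏ₛ Y (l s) (i s)`. -/
def pairExponent {n b : ℕ} (l i : Fin b → Fin n) : Fin n × Fin n →₀ ℕ :=
  ∑ s, Finsupp.single (l s, i s) 1

theorem eval_pairExponent {n b : ℕ} (l i : Fin b → Fin n) (Y : Matrix (Fin n) (Fin n) ℂ) :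
    MvPolynomial.eval (fun p : Fin n × Fin n => Y p.1 p.2)
      (MvPolynomial.monomial (pairExponent l i) 1) = ∏ s, Y (l s) (i s) := by
  rw [pairExponent, MvPolynomial.monomial_sum_one, map_prod]
  exact Finset.prod_congr rfl fun s _ => by simp [MvPolynomial.eval_monomial]

/-- The product of the conjugated entries `conj M (l s) (i s)`. -/
def conjEntries {n b : ℕ} (l i : Fin b → Fin n) (M : Matrix (Fin n) (Fin n) ℂ) : ℂ :=
  ∏ s, (starRingEnd ℂ) (M (l s) (i s))

theorem continuous_conjEntries {n b : ℕ} (l i : Fin b → Fin n) :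
    Continuous (conjEntries l i) :=
  continuous_finsetProd _ fun _ _ => Complex.continuous_conj.comp (continuous_id.matrix_elem _ _)

section

variable {n b : ℕ} (μ : Measure (Matrix.unitaryGroup (Fin n) ℂ)) [IsProbabilityMeasure μ]
  [μ.IsMulLeftInvariant]

/-- Left invariance of the measure, with the translation moved onto the conjugated entries. -/
theorem integral_translate (j i : Fin b → Fin n) (α : Fin n → Fin n →₀ ℕ)
    (V : Matrix.unitaryGroup (Fin n) ℂ) :
    ∫ M, conjEntries j i M.1 * entryMonomial α (V.1 * M.1) ∂μ =
      ∑ l : Fin b → Fin n, (∏ s, V.1 (l s) (j s)) *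
        ∫ M, conjEntries l i M.1 * entryMonomial α M.1 ∂μ := by
  have h := integral_mul_left_eq_self (μ := μ) (fun M : Matrix.unitaryGroup (Fin n) ℂ =>
    conjEntries j i (V⁻¹ * M).1 * entryMonomial α M.1) V
  simp only [inv_mul_cancel_left] at h
  have e : ∀ M : Matrix.unitaryGroup (Fin n) ℂ, conjEntries j i (V⁻¹ * M).1 =
      ∑ l : Fin b → Fin n, (∏ s, V.1 (l s) (j s)) * conjEntries l i M.1 := by
    intro M
    have : ∀ s, (starRingEnd ℂ) ((V⁻¹ * M).1 (j s) (i s)) =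
        ∑ r, V.1 r (j s) * (starRingEnd ℂ) (M.1 r (i s)) := by
      intro s
      have : (V⁻¹ * M).1 = star V.1 * M.1 := rfl
      rw [this, Matrix.mul_apply, map_sum]
      refine Finset.sum_congr rfl fun r _ => ?_
      rw [map_mul, Matrix.star_apply]
      simp
    simp only [conjEntries, this, Finset.prod_univ_sum, Fintype.piFinset_univ,
      Finset.prod_mul_distrib]
  rw [show (fun M : Matrix.unitaryGroup (Fin n) ℂ => conjEntries j i M.1 *
    entryMonomial α (V.1 * M.1)) = fun M => conjEntries j i M.1 * entryMonomial α (V * M).1 from rfl,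
    h]
  simp only [e, Finset.sum_mul]
  rw [integral_finsetSum]
  · refine Finset.sum_congr rfl fun l _ => ?_
    rw [← integral_const_mul]
    simp only [mul_assoc]
  · intro l _
    refine integrable_of_continuous_compact μ ?_
    exact (continuous_const.mul ((continuous_conjEntries l i).comp (continuous_unitary_coe n))).mul
      ((continuous_entryMonomial α).comp (continuous_unitary_coe n))

theorem entryMonomial_mul (β : Fin n → ℕ) (α : Fin n → Fin n →₀ ℕ)
    (hα : ∀ k, α k ∈ (Finset.univ : Finset (Fin n)).finsuppAntidiag (β k))
    (Y M : Matrix (Fin n) (Fin n) ℂ) :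
    entryMonomial α (Y * M) =
      ∑ γ ∈ Fintype.piFinset fun k => (Finset.univ : Finset (Fin n)).finsuppAntidiag (β k),
        (∏ k, (rowSub M (MvPolynomial.monomial (α k) 1)).coeff (γ k)) * entryMonomial γ Y := by
  have : ∀ k, MvPolynomial.eval ((Y * M) k) (MvPolynomial.monomial (α k) 1) =
      ∑ γ ∈ (Finset.univ : Finset (Fin n)).finsuppAntidiag (β k),
        (rowSub M (MvPolynomial.monomial (α k) 1)).coeff γ *
          MvPolynomial.eval (Y k) (MvPolynomial.monomial γ 1) := by
    intro k
    have hk : (Y * M) k = Y k ᵥ* M := by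
      ext j; simp [Matrix.mul_apply, Matrix.vecMul, dotProduct]
    rw [hk, ← eval_rowSub, rowSub_monomial M (hα k), map_sum, ← rowSub_monomial M (hα k)]
    refine Finset.sum_congr rfl fun γ _ => ?_
    simp [MvPolynomial.eval_monomial]
  simp only [entryMonomial, this]
  rw [Finset.prod_univ_sum]
  simp only [Finset.prod_mul_distrib]

theorem continuous_coeff_prod (α γ : Fin n → Fin n →₀ ℕ) :
    Continuous fun M : Matrix.unitaryGroup (Fin n) ℂ =>
      ∏ k, (rowSub M.1 (MvPolynomial.monomial (α k) 1)).coeff (γ k) :=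
  continuous_finsetProd _ fun _ _ =>
    (continuous_of_mem_polyFun (coeff_rowSub_mem_polyFun _ _)).comp (continuous_unitary_coe n)

/-- Schur orthogonality for diagonal coefficients of symmetric powers. The integral of
`conjEntries i i M * entryMonomial α (Y * M)` is a polynomial in `Y` in two ways: by expanding
`entryMonomial α (Y * M)`, and, for unitary `Y`, by left invariance. By density the two polynomials
coincide, and the claim compares their coefficients at `entryExponent α`. -/
theorem integral_coeff (i : Fin b → Fin n) (β : Fin n → ℕ) (α : Fin n → Fin n →₀ ℕ)
    (hα : α ∈ Fintype.piFinset fun k => (Finset.univ : Finset (Fin n)).finsuppAntidiag (β k)) :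
    ∫ M, conjEntries i i M.1 * ∏ k, (rowSub M.1 (MvPolynomial.monomial (α k) 1)).coeff (α k) ∂μ =
      ∑ l : Fin b → Fin n, if pairExponent l i = entryExponent α then
        ∫ M, ∏ s, ((starRingEnd ℂ) (M.1 (l s) (i s)) * M.1 (l s) (i s)) ∂μ else 0 := by
  set S := Fintype.piFinset fun k => (Finset.univ : Finset (Fin n)).finsuppAntidiag (β k) with hS
  set P : MvPolynomial (Fin n × Fin n) ℂ := ∑ γ ∈ S, MvPolynomial.monomial (entryExponent γ)
    (∫ M, conjEntries i i M.1 * ∏ k, (rowSub M.1 (MvPolynomial.monomial (α k) 1)).coeff (γ k) ∂μ)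
    with hP
  set Q : MvPolynomial (Fin n × Fin n) ℂ := ∑ l : Fin b → Fin n,
    MvPolynomial.monomial (pairExponent l i)
      (∫ M, conjEntries l i M.1 * entryMonomial α M.1 ∂μ) with hQ
  have evP : ∀ Y : Matrix (Fin n) (Fin n) ℂ, MvPolynomial.eval (fun p => Y p.1 p.2) P =
      ∫ M, conjEntries i i M.1 * entryMonomial α (Y * M.1) ∂μ := by
    intro Y
    simp only [entryMonomial_mul β α (fun k => Fintype.mem_piFinset.1 hα k), Finset.mul_sum]
    rw [integral_finsetSum, hP, map_sum]
    · refine Finset.sum_congr rfl fun γ _ => ?_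
      rw [← mul_one (∫ M, _ ∂μ), ← MvPolynomial.C_mul_monomial, map_mul, eval_entryExponent,
        MvPolynomial.eval_C, ← integral_mul_const]
      simp only [mul_assoc]
    · intro γ _
      refine integrable_of_continuous_compact μ ?_
      exact ((continuous_conjEntries i i).comp (continuous_unitary_coe n)).mul
        ((continuous_coeff_prod α γ).mul continuous_const)
  have evQ : ∀ Y : Matrix (Fin n) (Fin n) ℂ, MvPolynomial.eval (fun p => Y p.1 p.2) Q =
      ∑ l : Fin b → Fin n, (∏ s, Y (l s) (i s)) *
        ∫ M, conjEntries l i M.1 * entryMonomial α M.1 ∂μ := by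
    intro Y
    rw [hQ, map_sum]
    refine Finset.sum_congr rfl fun l _ => ?_
    rw [← mul_one (∫ M, _ ∂μ), ← MvPolynomial.C_mul_monomial, map_mul, eval_pairExponent,
        MvPolynomial.eval_C, mul_one, mul_comm]
  have hPQ : P = Q := by
    rw [← sub_eq_zero]
    refine MvPolynomial.funext fun y => ?_
    rw [map_zero]
    refine polyFun_eq_zero_of_unitary (n := n)
      (f := fun Y => MvPolynomial.eval (fun p => Y p.1 p.2) (P - Q))
      (mem_polyFun.2 ⟨P - Q, fun _ => rfl⟩) (fun V => ?_) (of fun k j => y (k, j))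
    rw [map_sub, evP, evQ, integral_translate, sub_self]
  have hc := congrArg (MvPolynomial.coeff (entryExponent α)) hPQ
  rw [hP, hQ, MvPolynomial.coeff_sum, MvPolynomial.coeff_sum] at hc
  simp only [MvPolynomial.coeff_monomial, entryExponent_injective.eq_iff] at hc
  rw [Finset.sum_ite_eq', if_pos hα] at hc
  rw [hc]
  refine Finset.sum_congr rfl fun l _ => ?_
  split_ifs with h
  · refine integral_congr_ae (.of_forall fun M => ?_)
    beta_reduce
    rw [← eval_entryExponent, ← h, eval_pairExponent, conjEntries, ← Finset.prod_mul_distrib]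
  · rfl

theorem pairExponent_eq_iff (l i : Fin b → Fin n) (α : Fin n → Fin n →₀ ℕ) :
    pairExponent l i = entryExponent α ↔
      α = fun k => Finsupp.equivFunOnFinite.symm fun j => pairExponent l i (k, j) := by
  constructor
  · intro h
    ext k j
    rw [h]; rfl
  · intro h
    ext ⟨k, j⟩
    rw [h]; rfl

theorem sum_pairExponent (l i : Fin b → Fin n) (k : Fin n) :
    ∑ j, pairExponent l i (k, j) = occ l k := by
  simp only [pairExponent, Finsupp.finsetSum_apply, Finsupp.single_apply, Prod.mk.injEq]
  rw [Finset.sum_comm, occ, Finset.card_filter]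
  refine Finset.sum_congr rfl fun s _ => ?_
  by_cases h : l s = k <;> simp [h]

/-- The pairing of `tr M ^ b` with a product of symmetric power traces counts words
of length `b` with prescribed multiplicities. The sum over `i` of the integrals in `integral_coeff`
is `1` because the rows of `M` are unit vectors. -/
theorem integral_conj_trace_pow_mul_symTr (β : Fin n → ℕ) (b : ℕ) :
    ∫ M, (starRingEnd ℂ) M.1.trace ^ b * ∏ k, symTr M.1 (β k) ∂μ =
      ∑ l : Fin b → Fin n, if ∀ k, occ l k = β k then (1 : ℂ) else 0 := by
  set S := Fintype.piFinset fun k => (Finset.univ : Finset (Fin n)).finsuppAntidiag (β k) with hS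
  have e : ∀ M : Matrix.unitaryGroup (Fin n) ℂ,
      (starRingEnd ℂ) M.1.trace ^ b * ∏ k, symTr M.1 (β k) =
      ∑ i : Fin b → Fin n, ∑ α ∈ S, conjEntries i i M.1 *
        ∏ k, (rowSub M.1 (MvPolynomial.monomial (α k) 1)).coeff (α k) := by
    intro M
    rw [← Finset.sum_mul_sum, hS, ← Finset.prod_univ_sum
      (fun k => (Finset.univ : Finset (Fin n)).finsuppAntidiag (β k))
      (fun _ γ => (rowSub M.1 (MvPolynomial.monomial γ 1)).coeff γ), Matrix.trace, map_sum,
      Fintype.sum_pow]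
    rfl
  have hint : ∀ (i : Fin b → Fin n) (α : Fin n → Fin n →₀ ℕ),
      Integrable (fun M : Matrix.unitaryGroup (Fin n) ℂ => conjEntries i i M.1 *
        ∏ k, (rowSub M.1 (MvPolynomial.monomial (α k) 1)).coeff (α k)) μ := fun i α =>
    integrable_of_continuous_compact μ
      (((continuous_conjEntries i i).comp (continuous_unitary_coe n)).mul
        (continuous_coeff_prod α α))
  simp only [e]
  rw [integral_finsetSum _ fun i _ => integrable_finsetSum _ fun α _ => hint i α]
  have e2 : ∀ i : Fin b → Fin n, ∫ M, ∑ α ∈ S, conjEntries i i M.1 *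
        ∏ k, (rowSub M.1 (MvPolynomial.monomial (α k) 1)).coeff (α k) ∂μ =
      ∑ l : Fin b → Fin n, if ∀ k, occ l k = β k then
        ∫ M, ∏ s, ((starRingEnd ℂ) (M.1 (l s) (i s)) * M.1 (l s) (i s)) ∂μ else 0 := by
    intro i
    rw [integral_finsetSum _ fun α _ => hint i α,
      Finset.sum_congr rfl fun α hα => integral_coeff μ i β α hα, Finset.sum_comm]
    refine Finset.sum_congr rfl fun l _ => ?_
    simp only [pairExponent_eq_iff]
    rw [Finset.sum_ite_eq']
    refine if_congr ?_ rfl rfl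
    rw [Fintype.mem_piFinset]
    refine forall_congr' fun k => ?_
    rw [Finset.mem_finsuppAntidiag, ← sum_pairExponent l i k]
    simp
  rw [Finset.sum_congr rfl fun i _ => e2 i, Finset.sum_comm]
  refine Finset.sum_congr rfl fun l _ => ?_
  split_ifs with h
  · rw [← integral_finsetSum]
    · have : ∀ M : Matrix.unitaryGroup (Fin n) ℂ, ∑ i : Fin b → Fin n,
          ∏ s, ((starRingEnd ℂ) (M.1 (l s) (i s)) * M.1 (l s) (i s)) = 1 := by
        intro M
        rw [← Fintype.piFinset_univ, ← Finset.prod_univ_sum (fun _ : Fin b => Finset.univ)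
          (fun s r => (starRingEnd ℂ) (M.1 (l s) r) * M.1 (l s) r)]
        exact Finset.prod_eq_one fun s _ => unitary_row_sum M (l s)
      simp only [this]
      simp
    · intro i _
      refine integrable_of_continuous_compact μ (continuous_finsetProd _ fun s _ => ?_)
      exact (Complex.continuous_conj.comp (continuous_unitary_entry _ _)).mul
        (continuous_unitary_entry _ _)
  · simp

theorem integral_conj_trace_pow_mul_extendInt (β : Fin n → ℤ) (b : ℕ) :
    ∫ M, (starRingEnd ℂ) M.1.trace ^ b * ∏ k, extendInt (symTr M.1) (β k) ∂μ =
      ∑ l : Fin b → Fin n, if ∀ k, (occ l k : ℤ) = β k then (1 : ℂ) else 0 := by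
  by_cases hβ : ∀ k, 0 ≤ β k
  · have h := integral_conj_trace_pow_mul_symTr μ (fun k => (β k).toNat) b
    simp only [extendInt, hβ, if_true]
    rw [h]
    refine Finset.sum_congr rfl fun l _ => if_congr (forall_congr' fun k => ?_) rfl rfl
    have := hβ k
    omega
  · obtain ⟨k, hk⟩ := not_forall.1 hβ
    have h0 : ∀ M : Matrix.unitaryGroup (Fin n) ℂ,
        (starRingEnd ℂ) M.1.trace ^ b * ∏ k, extendInt (symTr M.1) (β k) = 0 := fun M => by
      rw [Finset.prod_eq_zero (Finset.mem_univ k) (by rw [extendInt, if_neg hk]), mul_zero]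
    simp only [h0, integral_zero]
    refine (Finset.sum_eq_zero fun l _ => if_neg fun h => hk ?_).symm
    rw [← h k]
    exact Int.natCast_nonneg _

/-- The mixed moments of the trace, in the same form as for the weighted torus. -/
theorem integral_unitary_moment (a b : ℕ) :
    ∫ M, M.1.trace ^ a * (starRingEnd ℂ) M.1.trace ^ b ∂μ =
    ∑ l : Fin a → Fin n, ∑ σ : Equiv.Perm (Fin n), ((Equiv.Perm.sign σ : ℤ) : ℂ) *
      ∑ l' : Fin b → Fin n,
        if ∀ i, (occ l' i : ℤ) = occ l i - i + σ i then 1 else 0 := by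
  have e : ∀ M : Matrix.unitaryGroup (Fin n) ℂ,
      M.1.trace ^ a * (starRingEnd ℂ) M.1.trace ^ b =
      ∑ l : Fin a → Fin n, ∑ σ : Equiv.Perm (Fin n), ((Equiv.Perm.sign σ : ℤ) : ℂ) *
        ((starRingEnd ℂ) M.1.trace ^ b *
          ∏ i, extendInt (symTr M.1) (occ l i - i + σ i)) := by
    intro M
    rw [trace_pow_eq_sum_det, Finset.sum_mul]
    refine Finset.sum_congr rfl fun l _ => ?_
    rw [Matrix.det_apply', Finset.sum_mul]
    refine Finset.sum_congr rfl fun σ _ => ?_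
    simp only [of_apply]
    ring
  have hint : ∀ (l : Fin a → Fin n) (σ : Equiv.Perm (Fin n)),
      Integrable (fun M : Matrix.unitaryGroup (Fin n) ℂ => ((Equiv.Perm.sign σ : ℤ) : ℂ) *
        ((starRingEnd ℂ) M.1.trace ^ b *
          ∏ i, extendInt (symTr M.1) (occ l i - i + σ i))) μ := fun l σ =>
    integrable_of_continuous_compact μ (continuous_const.mul
      (((Complex.continuous_conj.comp (continuous_unitary_coe n).matrix_trace).pow b).mul
        (continuous_finsetProd _ fun _ _ => (continuous_of_mem_polyFun
          (extendInt_symTr_mem_polyFun _)).comp (continuous_unitary_coe n))))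
  simp only [e]
  rw [integral_finsetSum _ fun l _ => integrable_finsetSum _ fun σ _ => hint l σ]
  refine Finset.sum_congr rfl fun l _ => ?_
  rw [integral_finsetSum _ fun σ _ => hint l σ]
  refine Finset.sum_congr rfl fun σ _ => ?_
  rw [integral_const_mul, integral_conj_trace_pow_mul_extendInt]

/-- The Haar integral over the unitary group is a Toeplitz determinant (Heine–Szegő). -/
theorem integral_unitary_exp (x y : ℝ) :
    ∫ M : Matrix.unitaryGroup (Fin n) ℂ,
      Complex.exp ((x : ℂ) * M.1.trace - (y : ℂ) * (starRingEnd ℂ) M.1.trace) ∂μ =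
    (of fun i j : Fin n => symbolCoeff (i - j) x y).det := by
  have h1 := hasSum_exp_moments μ (t := fun M => M.1.trace) (w := fun _ => 1)
    (continuous_unitary_coe n).matrix_trace continuous_const x y
  have h2 := hasSum_exp_moments (torusMeasure n) (continuous_torusTrace n)
    (continuous_torusWeight n) x y
  simp only [one_mul, integral_unitary_moment] at h1
  simp only [integral_torus_moment] at h2
  rw [h1.unique h2, integral_torus_exp]

end

theorem unitary_integrals_toda_identity
    (μ : ∀ m : ℕ, Measure (Matrix.unitaryGroup (Fin m) ℂ))
    (hprob : ∀ m, IsProbabilityMeasure (μ m))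
    (hinv : ∀ m, (μ m).IsMulLeftInvariant)
    (I : ℕ → ℝ → ℝ → ℂ)
    (hI : ∀ m (x y : ℝ), I m x y = ∫ M : Matrix.unitaryGroup (Fin m) ℂ,
      Complex.exp ((x : ℂ) * Matrix.trace (M : Matrix (Fin m) (Fin m) ℂ) -
        (y : ℂ) * (starRingEnd ℂ) (Matrix.trace (M : Matrix (Fin m) (Fin m) ℂ))) ∂(μ m))
    (ℓ : ℕ) (hℓ : 1 ≤ ℓ) (x y : ℝ) :
    I ℓ x y * deriv (fun x' => deriv (fun y' => I ℓ x' y') y) x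
      - deriv (fun x' => I ℓ x' y) x * deriv (fun y' => I ℓ x y') y
    = -(I (ℓ + 1) x y * I (ℓ - 1) x y) := by
  obtain ⟨m, rfl⟩ := Nat.exists_eq_add_of_le' hℓ
  have hdet : I = fun n x y => (of fun i j : Fin n => symbolCoeff (i - j) x y).det := by
    ext n x y
    have := hprob n
    have := hinv n
    rw [hI, integral_unitary_exp]
  subst hdet
  exact toda_toeplitz m symbolCoeff hasDerivAt_symbolCoeff_left hasDerivAt_symbolCoeff_right x y
end
end

section
/- Let ρ : ℝ → ℝ be continuous with ρ ≥ 0 on [−1, 1] and ∫_{−1}^{1} ρ(z) dz > 0. Define the moments μ_k(x) := ∫_{−1}^{1} z^k e^{xz} ρ(z) dz for k ≥ 0 and the Hänkel determinants τ_n(x) := det( μ_{i+j}(x) )_{0 ≤ i,j ≤ n−1}, with τ₀ ≡ 1. Then τ_n(x) > 0 for all n ≥ 0 and x ∈ ℝ, and for every n ≥ 1 the Toda-type identity τ_n(x)·τ_n′′(x) − (τ_n′(x))² = τ_{n+1}(x)·τ_{n−1}(x) holds; consequently d²/dx² log( τ_{n+1}(x)/τ_n(x) ) = τ_n τ_{n+2}/τ_{n+1}²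 − τ_{n−1} τ_{n+1}/τ_n². -/
/-!
Positivity: `vᵀ H v = ∫ (∑ vᵢ zⁱ)² e^{xz} ρ(z) dz` for the Hankel matrix `H` of the moments, and a
nonzero polynomial has only finitely many roots, so `H` is positive definite
(`hankelMatrix_posDef`).

Toda identity: differentiation under the integral gives `μ_k' = μ_{k+1}`. Let `D(a, b)`
(`borderedTau m a b`) be the Hankel determinant of size `m + 1` whose last row index is replaced
by `a` and whose last column index is replaced by `b`, so that `D(m, m) = τ_{m+1}`. Differentiating
column by column, every column but the last turns into its right neighbour, so only one term
survives and `D(a, m)' = D(a, m + 1)`. By symmetry `τ_{m+1}' = D(m, m + 1) = D(m + 1, m)` and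
`τ_{m+1}'' = D(m + 1, m + 1)`. The identity is then the Desnanot–Jacobi identity for the
Hankel matrix of size `m + 2`, which follows by taking Schur complements of the block of size `m`
(`det_hankel_schur`), invertible by positivity.

The statement on `log (τ_{n+1} / τ_n)` follows from `(log τ)'' = (τ τ'' - τ'²) / τ²`.
-/

open MeasureTheory

/-- The exponentially deformed moments `μ_k(x) = ∫_{-1}^{1} z^k e^{xz} ρ(z) dz`. -/
noncomputable def hankelMoment (ρ : ℝ → ℝ) (x : ℝ) (k : ℕ) : ℝ :=
  ∫ z in (-1 : ℝ)..1, z ^ k * Real.exp (x * z) * ρ z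

/-- The Hänkel determinants `τ_n(x) = det(μ_{i+j}(x))_{0 ≤ i,j ≤ n-1}` (with `τ₀ ≡ 1`). -/
noncomputable def hankelTau (ρ : ℝ → ℝ) (n : ℕ) (x : ℝ) : ℝ :=
  Matrix.det (Matrix.of fun i j : Fin n => hankelMoment ρ x ((i : ℕ) + (j : ℕ)))

/-! ### Positivity of the Hankel determinants -/

lemma exists_weight_pos_poly_ne_zero (ρ : ℝ → ℝ)
    (hρ0 : ∀ z ∈ Set.Icc (-1 : ℝ) 1, 0 ≤ ρ z)
    (hρpos : 0 < ∫ z in (-1 : ℝ)..1, ρ z) (p : Polynomial ℝ) (hp : p ≠ 0) :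
    ∃ c ∈ Set.Icc (-1 : ℝ) 1, 0 < ρ c ∧ p.eval c ≠ 0 := by
  by_contra! hcon
  -- Otherwise the weight vanishes on `[-1, 1]` off the finite set of roots of `p`.
  have hz : ∫ z in (-1 : ℝ)..1, ρ z = ∫ z in (-1 : ℝ)..1, (0 : ℝ) := by
    refine intervalIntegral.integral_congr_ae ?_
    have hfin : (p.roots.toFinset : Set ℝ).Finite := Finset.finite_toSet _
    filter_upwards [hfin.countable.ae_notMem volume] with z hz hzI
    rw [Set.uIoc_of_le (by norm_num)] at hzI
    have hzI' : z ∈ Set.Icc (-1 : ℝ) 1 := ⟨hzI.1.le, hzI.2⟩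
    by_contra hne
    have h := hcon z hzI' (lt_of_le_of_ne (hρ0 z hzI') (Ne.symm hne))
    exact hz (by simp [hp, h])
  simp [hz] at hρpos

lemma hankelMoment_intervalIntegrable (ρ : ℝ → ℝ) (hρ : Continuous ρ) (x : ℝ) (k : ℕ) :
    IntervalIntegrable (fun z => z ^ k * Real.exp (x * z) * ρ z) volume (-1) 1 :=
  Continuous.intervalIntegrable (by fun_prop) _ _

/-- The Hankel matrix of the moments, of size `n`. -/
noncomputable def hankelMatrix (ρ : ℝ → ℝ) (n : ℕ) (x : ℝ) : Matrix (Fin n) (Fin n) ℝ :=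
  Matrix.of fun i j : Fin n => hankelMoment ρ x ((i : ℕ) + (j : ℕ))

lemma hankelMatrix_quadForm (ρ : ℝ → ℝ) (hρ : Continuous ρ) (n : ℕ) (x : ℝ) (v : Fin n → ℝ) :
    v ⬝ᵥ (hankelMatrix ρ n x).mulVec v
      = ∫ z in (-1 : ℝ)..1, (∑ i, v i * z ^ (i : ℕ)) ^ 2 * Real.exp (x * z) * ρ z := by
  have h : ∀ z : ℝ, (∑ i, v i * z ^ (i : ℕ)) ^ 2 * Real.exp (x * z) * ρ z
      = ∑ i, ∑ j, (v i * v j) * (z ^ ((i : ℕ) + (j : ℕ)) * Real.exp (x * z) * ρ z) := by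
    intro z
    rw [sq, Finset.sum_mul_sum, Finset.sum_mul, Finset.sum_mul]
    refine Finset.sum_congr rfl fun i _ => ?_
    rw [Finset.sum_mul, Finset.sum_mul]
    refine Finset.sum_congr rfl fun j _ => ?_
    ring
  have hI : ∀ i j : Fin n, IntervalIntegrable
      (fun z => (v i * v j) * (z ^ ((i : ℕ) + (j : ℕ)) * Real.exp (x * z) * ρ z)) volume (-1) 1 :=
    fun i j => (hankelMoment_intervalIntegrable ρ hρ x _).const_mul _
  simp_rw [h]
  rw [intervalIntegral.integral_finsetSum
    (fun i _ => Continuous.intervalIntegrable (by fun_prop) _ _)]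
  simp only [dotProduct, Matrix.mulVec]
  refine Finset.sum_congr rfl fun i _ => ?_
  rw [intervalIntegral.integral_finsetSum (fun j _ => hI i j), Finset.mul_sum]
  refine Finset.sum_congr rfl fun j _ => ?_
  rw [intervalIntegral.integral_const_mul]
  simp only [hankelMatrix, Matrix.of_apply, hankelMoment]
  ring

lemma hankelMatrix_posDef (ρ : ℝ → ℝ) (hρ : Continuous ρ)
    (hρ0 : ∀ z ∈ Set.Icc (-1 : ℝ) 1, 0 ≤ ρ z)
    (hρpos : 0 < ∫ z in (-1 : ℝ)..1, ρ z) (n : ℕ) (x : ℝ) :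
    (hankelMatrix ρ n x).PosDef := by
  refine Matrix.PosDef.of_dotProduct_mulVec_pos ?_ ?_
  · ext i j
    simp [hankelMatrix, add_comm]
  · intro v hv
    rw [star_trivial, hankelMatrix_quadForm ρ hρ]
    have heval : ∀ z : ℝ, (Polynomial.ofFn n v).eval z = ∑ i, v i * z ^ (i : ℕ) := by
      intro z
      simp [Polynomial.ofFn_eq_sum_monomial, Polynomial.eval_finsetSum]
    have hp : Polynomial.ofFn n v ≠ 0 := by
      intro h0
      apply hv
      funext i
      have := Polynomial.ofFn_coeff_eq_val_of_lt v i.2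
      rw [h0] at this
      simpa using this.symm
    obtain ⟨c, hc, hρc, hpc⟩ := exists_weight_pos_poly_ne_zero ρ hρ0 hρpos _ hp
    rw [heval] at hpc
    refine intervalIntegral.integral_pos (by norm_num) (Continuous.continuousOn (by fun_prop))
      (fun z hz => ?_) ⟨c, hc, ?_⟩
    · have := hρ0 z ⟨hz.1.le, hz.2⟩
      positivity
    · positivity

lemma hankelTau_pos (ρ : ℝ → ℝ) (hρ : Continuous ρ)
    (hρ0 : ∀ z ∈ Set.Icc (-1 : ℝ) 1, 0 ≤ ρ z)
    (hρpos : 0 < ∫ z in (-1 : ℝ)..1, ρ z) (n : ℕ) (x : ℝ) : 0 < hankelTau ρ n x :=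
  (hankelMatrix_posDef ρ hρ hρ0 hρpos n x).det_pos

/-! ### Derivatives -/

lemma hasDerivAt_hankelMoment (ρ : ℝ → ℝ) (hρ : Continuous ρ) (k : ℕ) (x : ℝ) :
    HasDerivAt (fun y => hankelMoment ρ y k) (hankelMoment ρ x (k + 1)) x := by
  refine (intervalIntegral.hasDerivAt_integral_of_dominated_loc_of_deriv_le
    (F := fun y z => z ^ k * Real.exp (y * z) * ρ z)
    (F' := fun y z => z ^ (k + 1) * Real.exp (y * z) * ρ z)
    (bound := fun z => Real.exp (|x| + 1) * |ρ z|)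
    (Metric.ball_mem_nhds x one_pos) ?_ ?_ ?_ ?_ ?_ ?_).2
  · exact Filter.Eventually.of_forall fun y => Continuous.aestronglyMeasurable (by fun_prop)
  · exact hankelMoment_intervalIntegrable ρ hρ x k
  · exact Continuous.aestronglyMeasurable (by fun_prop)
  · refine Filter.Eventually.of_forall fun z hz y hy => ?_
    rw [Set.uIoc_of_le (by norm_num)] at hz
    have hz1 : |z| ≤ 1 := abs_le.2 ⟨hz.1.le, hz.2⟩
    have hy1 : |y| ≤ |x| + 1 := by
      rw [Metric.mem_ball, Real.dist_eq] at hy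
      have := abs_add_le (y - x) x
      rw [sub_add_cancel] at this
      linarith
    have hyz : y * z ≤ |x| + 1 := by
      calc y * z ≤ |y * z| := le_abs_self _
        _ = |y| * |z| := abs_mul _ _
        _ ≤ |y| * 1 := by gcongr
        _ ≤ |x| + 1 := by linarith
    rw [norm_mul, norm_mul, norm_pow, Real.norm_eq_abs, Real.norm_eq_abs, Real.norm_eq_abs,
      Real.abs_exp]
    have h1 : |z| ^ (k + 1) ≤ 1 := pow_le_one₀ (abs_nonneg _) hz1
    calc |z| ^ (k + 1) * Real.exp (y * z) * |ρ z| ≤ 1 * Real.exp (|x| + 1) * |ρ z| := by gcongr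
      _ = _ := by ring
  · exact Continuous.intervalIntegrable (by fun_prop) _ _
  · refine Filter.Eventually.of_forall fun z _ y _ => ?_
    have h : HasDerivAt (fun y : ℝ => Real.exp (y * z)) (Real.exp (y * z) * (1 * z)) y :=
      ((hasDerivAt_id y).mul_const z).exp
    refine ((h.const_mul (z ^ k)).mul_const (ρ z)).congr_deriv ?_
    ring

lemma hasDerivAt_det {n : ℕ} (M : ℝ → Matrix (Fin n) (Fin n) ℝ) (M' : Matrix (Fin n) (Fin n) ℝ)
    (x : ℝ) (h : ∀ i j, HasDerivAt (fun y => M y i j) (M' i j) x) :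
    HasDerivAt (fun y => (M y).det)
      (∑ j, ((M x).updateCol j (fun i => M' i j)).det) x := by
  simp only [Matrix.det_apply']
  rw [Finset.sum_comm]
  refine HasDerivAt.fun_sum fun σ _ => ?_
  have hprod := HasDerivAt.fun_finsetProd (u := Finset.univ) (x := x)
    (f := fun i y => M y (σ i) i) (f' := fun i => M' (σ i) i) (fun i _ => h (σ i) i)
  refine (hprod.const_mul _).congr_deriv ?_
  rw [Finset.mul_sum]
  refine Finset.sum_congr rfl fun j _ => ?_
  congr 1
  rw [← Finset.prod_erase_mul _ _ (Finset.mem_univ j), smul_eq_mul]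
  congr 1
  · refine Finset.prod_congr rfl fun i hi => ?_
    rw [Matrix.updateCol_ne (Finset.ne_of_mem_erase hi)]
  · rw [Matrix.updateCol_self]

/-- The index map `0, 1, …, m - 1, a` on `Fin (m + 1)`. -/
def borderIdx (m a : ℕ) (i : Fin (m + 1)) : ℕ := if i = Fin.last m then a else i

/-- The minor of the infinite Hankel matrix with row indices `0, …, m - 1, a` and column indices
`0, …, m - 1, b`. -/
noncomputable def borderedTau (ρ : ℝ → ℝ) (m a b : ℕ) (x : ℝ) : ℝ :=
  Matrix.det (Matrix.of fun i j : Fin (m + 1) =>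
    hankelMoment ρ x (borderIdx m a i + borderIdx m b j))

lemma borderIdx_self (m : ℕ) (i : Fin (m + 1)) : borderIdx m m i = i := by
  unfold borderIdx
  split_ifs with h
  · simp [h]
  · rfl

lemma borderedTau_self (ρ : ℝ → ℝ) (m : ℕ) : borderedTau ρ m m m = hankelTau ρ (m + 1) := by
  funext x
  simp only [borderedTau, borderIdx_self, hankelTau]

lemma borderedTau_symm (ρ : ℝ → ℝ) (m a b : ℕ) : borderedTau ρ m a b = borderedTau ρ m b a := by
  funext x
  unfold borderedTau
  rw [← Matrix.det_transpose]
  congr 1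
  ext i j
  simp [add_comm]

/-- Only the last column contributes: the derivative of any other column is the column to its
right. -/
lemma hasDerivAt_borderedTau (ρ : ℝ → ℝ) (hρ : Continuous ρ) (m a : ℕ) (x : ℝ) :
    HasDerivAt (borderedTau ρ m a m) (borderedTau ρ m a (m + 1) x) x := by
  have h := hasDerivAt_det
    (fun y => Matrix.of fun i j : Fin (m + 1) =>
      hankelMoment ρ y (borderIdx m a i + borderIdx m m j))
    (Matrix.of fun i j : Fin (m + 1) => hankelMoment ρ x (borderIdx m a i + borderIdx m m j + 1)) x
    (fun i j => hasDerivAt_hankelMoment ρ hρ _ x)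
  refine h.congr_deriv ?_
  rw [Finset.sum_eq_single (Fin.last m)]
  · unfold borderedTau
    congr 1
    ext i j
    by_cases hj : j = Fin.last m
    · subst hj
      simp [borderIdx, add_assoc]
    · rw [Matrix.updateCol_ne hj]
      simp [borderIdx, hj]
  · intro j _ hj
    have hlt : (j : ℕ) < m := Fin.val_lt_last hj
    have hne : (⟨j + 1, by omega⟩ : Fin (m + 1)) ≠ j := by
      intro h
      have := congrArg Fin.val h
      simp at this
    refine Matrix.det_zero_of_column_eq hne fun k => ?_
    rw [Matrix.updateCol_ne hne, Matrix.updateCol_self]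
    simp [borderIdx_self, add_assoc]
  · simp

/-! ### The Desnanot–Jacobi identity -/

/-- The determinant of a bordered Hankel matrix is `τ_m` times the determinant of the Schur
complement of the leading block of size `m`, whose entry attached to the border indices `a`, `b` is
`S a b`, the same function for every choice and number of border indices. -/
lemma det_hankel_schur (ρ : ℝ → ℝ) (m : ℕ) (x : ℝ) (hm : hankelTau ρ m x ≠ 0) :
    ∃ S : ℕ → ℕ → ℝ, ∀ (k : ℕ) (f g : Fin k → ℕ) (r s : Fin (m + k) → ℕ),
      (∀ i : Fin m, r (Fin.castAdd k i) = i) → (∀ i, r (Fin.natAdd m i) = f i) →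
      (∀ i : Fin m, s (Fin.castAdd k i) = i) → (∀ i, s (Fin.natAdd m i) = g i) →
      (Matrix.of fun i j => hankelMoment ρ x (r i + s j)).det
        = hankelTau ρ m x * (Matrix.of fun p q => S (f p) (g q)).det := by
  have hdet : IsUnit (hankelMatrix ρ m x).det := isUnit_iff_ne_zero.2 hm
  let _ := Matrix.invertibleOfIsUnitDet _ hdet
  refine ⟨fun a b => hankelMoment ρ x (a + b)
    - ∑ j : Fin m, (∑ i : Fin m, hankelMoment ρ x (a + i) * (⅟(hankelMatrix ρ m x)) i j)
      * hankelMoment ρ x (j + b), fun k f g r s hr hr' hs hs' => ?_⟩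
  rw [← Matrix.det_submatrix_equiv_self finSumFinEquiv]
  have hblock : (Matrix.of fun i j => hankelMoment ρ x (r i + s j)).submatrix
      (finSumFinEquiv : Fin m ⊕ Fin k ≃ _) finSumFinEquiv
      = Matrix.fromBlocks (hankelMatrix ρ m x)
          (Matrix.of fun i q => hankelMoment ρ x (i + g q))
          (Matrix.of fun p j => hankelMoment ρ x (f p + j))
          (Matrix.of fun p q => hankelMoment ρ x (f p + g q)) := by
    ext (i | i) (j | j) <;> simp [hankelMatrix, hr, hr', hs, hs']
  rw [hblock, Matrix.det_fromBlocks₁₁]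
  rfl

lemma hankel_desnanot_jacobi (ρ : ℝ → ℝ) (m : ℕ) (x : ℝ) (hm : hankelTau ρ m x ≠ 0) :
    borderedTau ρ m m m x * borderedTau ρ m (m + 1) (m + 1) x
      - borderedTau ρ m m (m + 1) x * borderedTau ρ m (m + 1) m x
      = hankelTau ρ (m + 2) x * hankelTau ρ m x := by
  obtain ⟨S, hS⟩ := det_hankel_schur ρ m x hm
  have hcast : ∀ (a : ℕ) (i : Fin m), borderIdx m a (Fin.castAdd 1 i) = i := by
    intro a i
    have : Fin.castAdd 1 i ≠ Fin.last m := (Fin.castSucc_lt_last i).ne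
    simp [borderIdx, this]
  have hnat : ∀ (a : ℕ) (i : Fin 1), borderIdx m a (Fin.natAdd m i) = a := by
    intro a i
    have : Fin.natAdd m i = Fin.last m := by
      ext
      simp
    simp [borderIdx, this]
  have h1 : ∀ a b, borderedTau ρ m a b x = hankelTau ρ m x * S a b := by
    intro a b
    have := hS 1 (fun _ => a) (fun _ => b) (borderIdx m a) (borderIdx m b)
      (hcast a) (hnat a) (hcast b) (hnat b)
    rw [Matrix.det_fin_one] at this
    exact this
  have h2 : hankelTau ρ (m + 2) x
      = hankelTau ρ m x * (S m m * S (m + 1) (m + 1) - S m (m + 1) * S (m + 1) m) := by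
    have := hS 2 (fun i => m + i) (fun i => m + i) (fun i => i) (fun i => i)
      (fun _ => rfl) (fun _ => rfl) (fun _ => rfl) (fun _ => rfl)
    rw [Matrix.det_fin_two] at this
    simpa [hankelTau] using this
  simp only [h1, h2]
  ring

/-! ### Toda identity and its logarithmic form -/

lemma deriv_hankelTau (ρ : ℝ → ℝ) (hρ : Continuous ρ) (m : ℕ) :
    deriv (hankelTau ρ (m + 1)) = borderedTau ρ m (m + 1) m := by
  funext x
  rw [← borderedTau_self, (hasDerivAt_borderedTau ρ hρ m m x).deriv, borderedTau_symm]

lemma hankelTau_toda (ρ : ℝ → ℝ) (hρ : Continuous ρ) (m : ℕ) (x : ℝ)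
    (hm : hankelTau ρ m x ≠ 0) :
    hankelTau ρ (m + 1) x * iteratedDeriv 2 (hankelTau ρ (m + 1)) x
        - (deriv (hankelTau ρ (m + 1)) x) ^ 2
      = hankelTau ρ (m + 2) x * hankelTau ρ m x := by
  rw [iteratedDeriv_succ, iteratedDeriv_one, deriv_hankelTau ρ hρ,
    (hasDerivAt_borderedTau ρ hρ m (m + 1) x).deriv, ← hankel_desnanot_jacobi ρ m x hm,
    borderedTau_symm ρ m m (m + 1), borderedTau_self]
  ring

lemma differentiable_hankelTau (ρ : ℝ → ℝ) (hρ : Continuous ρ) (m : ℕ) :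
    Differentiable ℝ (hankelTau ρ (m + 1)) := fun x => by
  rw [← borderedTau_self]
  exact (hasDerivAt_borderedTau ρ hρ m m x).differentiableAt

lemma hasDerivAt_logDeriv_hankelTau (ρ : ℝ → ℝ) (hρ : Continuous ρ) (m : ℕ) (x : ℝ)
    (hm : hankelTau ρ m x ≠ 0) (hm1 : hankelTau ρ (m + 1) x ≠ 0) :
    HasDerivAt (fun y => deriv (hankelTau ρ (m + 1)) y / hankelTau ρ (m + 1) y)
      (hankelTau ρ m x * hankelTau ρ (m + 2) x / hankelTau ρ (m + 1) x ^ 2) x := by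
  have hd2 : HasDerivAt (deriv (hankelTau ρ (m + 1)))
      (iteratedDeriv 2 (hankelTau ρ (m + 1)) x) x := by
    rw [iteratedDeriv_succ, iteratedDeriv_one]
    rw [deriv_hankelTau ρ hρ]
    exact (hasDerivAt_borderedTau ρ hρ m (m + 1) x).differentiableAt.hasDerivAt
  refine (hd2.fun_div (differentiable_hankelTau ρ hρ m x).hasDerivAt hm1).congr_deriv ?_
  congr 1
  linear_combination hankelTau_toda ρ hρ m x hm

theorem hankel_toda_identity (ρ : ℝ → ℝ) (hρ : Continuous ρ)
    (hρ0 : ∀ z ∈ Set.Icc (-1 : ℝ) 1, 0 ≤ ρ z)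
    (hρpos : 0 < ∫ z in (-1 : ℝ)..1, ρ z) :
    (∀ (n : ℕ) (x : ℝ), 0 < hankelTau ρ n x) ∧
    ∀ (n : ℕ), 1 ≤ n → ∀ x : ℝ,
      (hankelTau ρ n x * iteratedDeriv 2 (hankelTau ρ n) x
          - (deriv (hankelTau ρ n) x) ^ 2
        = hankelTau ρ (n + 1) x * hankelTau ρ (n - 1) x) ∧
      iteratedDeriv 2 (fun y => Real.log (hankelTau ρ (n + 1) y / hankelTau ρ n y)) x
        = hankelTau ρ n x * hankelTau ρ (n + 2) x / (hankelTau ρ (n + 1) x) ^ 2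
          - hankelTau ρ (n - 1) x * hankelTau ρ (n + 1) x / (hankelTau ρ n x) ^ 2 := by
  have hpos := hankelTau_pos ρ hρ hρ0 hρpos
  refine ⟨hpos, fun n hn x => ?_⟩
  obtain ⟨m, rfl⟩ : ∃ m, n = m + 1 := ⟨n - 1, by omega⟩
  have hne : ∀ k y, hankelTau ρ k y ≠ 0 := fun k y => (hpos k y).ne'
  refine ⟨hankelTau_toda ρ hρ m x (hne m x), ?_⟩
  have hlog : ∀ k y, HasDerivAt (fun y => Real.log (hankelTau ρ (k + 1) y))
      (deriv (hankelTau ρ (k + 1)) y / hankelTau ρ (k + 1) y) y := fun k y =>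
    (differentiable_hankelTau ρ hρ k y).hasDerivAt.log (hne _ _)
  have hfun : (fun y => Real.log (hankelTau ρ (m + 1 + 1) y / hankelTau ρ (m + 1) y))
      = fun y => Real.log (hankelTau ρ (m + 1 + 1) y) - Real.log (hankelTau ρ (m + 1) y) := by
    funext y
    exact Real.log_div (hne _ _) (hne _ _)
  have hd1 : deriv (fun y => Real.log (hankelTau ρ (m + 1 + 1) y / hankelTau ρ (m + 1) y))
      = fun y => deriv (hankelTau ρ (m + 1 + 1)) y / hankelTau ρ (m + 1 + 1) y
        - deriv (hankelTau ρ (m + 1)) y / hankelTau ρ (m + 1) y := by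
    rw [hfun]
    funext y
    exact ((hlog (m + 1) y).fun_sub (hlog m y)).deriv
  rw [iteratedDeriv_succ, iteratedDeriv_one, hd1]
  exact ((hasDerivAt_logDeriv_hankelTau ρ hρ (m + 1) x (hne _ _) (hne _ _)).fun_sub
    (hasDerivAt_logDeriv_hankelTau ρ hρ m x (hne _ _) (hne _ _))).deriv
end

section
/- For j ∈ ℤ and (t, s₁, s₂) ∈ ℝ³ define the Toeplitz moments μ_j(t, s₁, s₂) := (1/2π) ∫₀^{2π} e^{ijθ} exp( t e^{iθ} − s₁ e^{−iθ} − s₂ e^{−2iθ} ) dθ, and the Toeplitz determinants τ_n(t, s₁, s₂) := det( μ_{k−l}(t, s₁, s₂) )_{0 ≤ k,l ≤ n−1} (complex-valued, analytic in (t, s₁, s₂)), with τ₀ ≡ 1. Fix n ≥ 1 and a point (t, s₁, s₂) at which τ_n ≠ 0 and τ_{n−1} ≠ 0, and on a neighborhood of this point set G := (∂τ_n/∂t)/τ_n. Then at this point ∂G/∂s₂ = −2·( (∂τ_n/∂s₁)/τ_n − (∂τ_{n−1}/∂s₁)/τ_{n−1} )·(∂G/∂s₁) − ∂²G/∂s₁²,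 i.e. ∂²(log τ_n)/∂s₂∂t = −2·∂/∂s₁[log(τ_n/τ_{n−1})]·∂²(log τ_n)/∂s₁∂t − ∂³(log τ_n)/∂s₁²∂t. -/
/-!
Write `n = m + 1`, let `T` be the Toeplitz matrix of size `n`, `r` its next row, `c` and `d` its next
two columns (all cut to size `n`), and `e` the last unit vector. Differentiating the moments in `t`
moves each row of `T` to the next one, so in `∂τ_n/∂t` only the last row contributes and
`G = r T⁻¹ e` (`deriv_tau_t_div`). Differentiating in `s₁` moves each column to the next one with a
sign: `∂T/∂s₁ = -(T S + c eᵀ)` with `S` the nilpotent shift, and `r`, `c` behave in the same way.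

With the Schur complement `σ = μ₀ - r T⁻¹ c`, the corner entry `p = eᵀ T⁻¹ e`, the entry `q` of `T⁻¹`
just above that corner and `κ = eᵀ T⁻¹ c`, the rule `(T⁻¹)' = -T⁻¹ T' T⁻¹` gives
* `∂G/∂s₁ = -σ p` (`hasDerivAt_G_s₁`),
* `∂p/∂s₁ = q + κ p` (`hasDerivAt_p_s₁`),
* `∂σ/∂s₁ = -(μ₋₁ - r T⁻¹ d) + σ κ` (`hasDerivAt_schur_s₁`),
* `∂G/∂s₂ = -σ q - (μ₋₁ - r T⁻¹ d) p` (`hasDerivAt_G_s₂`).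

Hence `∂G/∂s₂ = p ∂σ/∂s₁ - σ ∂p/∂s₁`. By Cramer's rule `p = τ_{n-1}/τ_n` (`tau_ratio`), so
`∂ log(τ_n/τ_{n-1})/∂s₁ = -(∂p/∂s₁)/p`, and the right-hand side of the identity is
`-2 σ ∂p/∂s₁ + ∂(σ p)/∂s₁`, the same expression.
-/

open MeasureTheory

/-- The Toeplitz moments
`μ_j(t,s₁,s₂) = (1/2π) ∫₀^{2π} e^{ijθ} exp(t e^{iθ} − s₁ e^{−iθ} − s₂ e^{−2iθ}) dθ`. -/
noncomputable def toeplitzMoment (j : ℤ) (t s₁ s₂ : ℝ) : ℂ :=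
  (1 / (2 * (Real.pi : ℂ))) *
    ∫ θ in (0 : ℝ)..(2 * Real.pi),
      Complex.exp ((j : ℂ) * θ * Complex.I) *
        Complex.exp ((t : ℂ) * Complex.exp (θ * Complex.I)
          - (s₁ : ℂ) * Complex.exp (-(θ * Complex.I))
          - (s₂ : ℂ) * Complex.exp (-(2 * θ * Complex.I)))

/-- The Toeplitz determinants `τ_n(t,s₁,s₂) = det(μ_{k−l}(t,s₁,s₂))_{0 ≤ k,l ≤ n−1}`
(with `τ₀ ≡ 1`). -/
noncomputable def toeplitzTau (n : ℕ) (t s₁ s₂ : ℝ) : ℂ :=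
  Matrix.det (Matrix.of fun k l : Fin n => toeplitzMoment ((k : ℤ) - (l : ℤ)) t s₁ s₂)

open Matrix

/-! ### Derivatives of the moments -/

/-- Differentiation under the integral sign for an integrand that is exponential in the parameter;
the derivative is dominated by a constant, by compactness. -/
lemma hasDerivAt_integral_exp_s14 (a b c : ℝ → ℂ) (ha : Continuous a) (hb : Continuous b)
    (hc : Continuous c) (A B u₀ : ℝ) :
    HasDerivAt (fun u : ℝ => ∫ θ in A..B, a θ * Complex.exp (b θ + u * c θ))
      (∫ θ in A..B, a θ * (Complex.exp (b θ + u₀ * c θ) * c θ)) u₀ := by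
  obtain ⟨C, hC⟩ := (isCompact_Icc.prod isCompact_uIcc :
      IsCompact (Set.Icc (u₀ - 1) (u₀ + 1) ×ˢ Set.uIcc A B)).exists_bound_of_continuousOn
    (f := fun p : ℝ × ℝ => a p.2 * (Complex.exp (b p.2 + (p.1 : ℂ) * c p.2) * c p.2))
    (by fun_prop)
  refine (intervalIntegral.hasDerivAt_integral_of_dominated_loc_of_deriv_le
    (F := fun (u : ℝ) θ => a θ * Complex.exp (b θ + u * c θ))
    (F' := fun (u : ℝ) θ => a θ * (Complex.exp (b θ + u * c θ) * c θ))
    (bound := fun _ => C) (s := Set.Icc (u₀ - 1) (u₀ + 1))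
    (Icc_mem_nhds (by linarith) (by linarith)) ?_ ?_ ?_ ?_ ?_ ?_).2
  · refine Filter.Eventually.of_forall fun u => Continuous.aestronglyMeasurable ?_
    fun_prop
  · exact Continuous.intervalIntegrable (by fun_prop) _ _
  · exact Continuous.aestronglyMeasurable (by fun_prop)
  · refine Filter.Eventually.of_forall fun θ hθ u hu => ?_
    exact hC (u, θ) ⟨hu, Set.uIoc_subset_uIcc hθ⟩
  · exact intervalIntegrable_const
  · refine Filter.Eventually.of_forall fun θ _ u _ => ?_
    have h : HasDerivAt (fun u : ℝ => b θ + (u : ℂ) * c θ) (c θ) u := by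
      simpa using ((Complex.ofRealCLM.hasDerivAt (x := u)).mul_const (c θ)).const_add (b θ)
    exact h.cexp.const_mul (a θ)

lemma hasDerivAt_moment_t (j : ℤ) (t s₁ s₂ : ℝ) :
    HasDerivAt (fun u => toeplitzMoment j u s₁ s₂) (toeplitzMoment (j + 1) t s₁ s₂) t := by
  have h := (hasDerivAt_integral_exp_s14
    (fun θ => Complex.exp ((j : ℂ) * θ * Complex.I))
    (fun θ => - (s₁ : ℂ) * Complex.exp (-(θ * Complex.I))
          - (s₂ : ℂ) * Complex.exp (-(2 * θ * Complex.I)))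
    (fun θ => Complex.exp (θ * Complex.I)) (by fun_prop) (by fun_prop) (by fun_prop)
    0 (2 * Real.pi) t).const_mul (1 / (2 * (Real.pi : ℂ)))
  refine (h.congr_deriv ?_).congr_of_eventuallyEq (.of_forall fun u => ?_)
  rotate_left
  · unfold toeplitzMoment
    beta_reduce
    congr! 5 with θ
    ring
  · symm
    unfold toeplitzMoment
    congr! 3 with θ
    rw [← Complex.exp_add, ← Complex.exp_add, ← Complex.exp_add]
    congr 1
    push_cast
    ring

lemma hasDerivAt_moment_s₁ (j : ℤ) (t s₁ s₂ : ℝ) :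
    HasDerivAt (fun u => toeplitzMoment j t u s₂) (-toeplitzMoment (j - 1) t s₁ s₂) s₁ := by
  have h := (hasDerivAt_integral_exp_s14
    (fun θ => Complex.exp ((j : ℂ) * θ * Complex.I))
    (fun θ => (t : ℂ) * Complex.exp (θ * Complex.I)
          - (s₂ : ℂ) * Complex.exp (-(2 * θ * Complex.I)))
    (fun θ => -Complex.exp (-(θ * Complex.I))) (by fun_prop) (by fun_prop) (by fun_prop)
    0 (2 * Real.pi) s₁).const_mul (1 / (2 * (Real.pi : ℂ)))
  refine (h.congr_deriv ?_).congr_of_eventuallyEq (.of_forall fun u => ?_)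
  rotate_left
  · unfold toeplitzMoment
    beta_reduce
    congr! 5 with θ
    ring
  · symm
    unfold toeplitzMoment
    rw [← mul_neg, ← intervalIntegral.integral_neg]
    congr! 3 with θ
    rw [mul_neg, mul_neg, neg_inj, ← Complex.exp_add, ← Complex.exp_add, ← Complex.exp_add]
    congr 1
    push_cast
    ring

lemma hasDerivAt_moment_s₂ (j : ℤ) (t s₁ s₂ : ℝ) :
    HasDerivAt (fun u => toeplitzMoment j t s₁ u) (-toeplitzMoment (j - 2) t s₁ s₂) s₂ := by
  have h := (hasDerivAt_integral_exp_s14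
    (fun θ => Complex.exp ((j : ℂ) * θ * Complex.I))
    (fun θ => (t : ℂ) * Complex.exp (θ * Complex.I)
          - (s₁ : ℂ) * Complex.exp (-(θ * Complex.I)))
    (fun θ => -Complex.exp (-(2 * θ * Complex.I))) (by fun_prop) (by fun_prop) (by fun_prop)
    0 (2 * Real.pi) s₂).const_mul (1 / (2 * (Real.pi : ℂ)))
  refine (h.congr_deriv ?_).congr_of_eventuallyEq (.of_forall fun u => ?_)
  rotate_left
  · unfold toeplitzMoment
    beta_reduce
    congr! 5 with θ
    ring
  · symm
    unfold toeplitzMoment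
    rw [← mul_neg, ← intervalIntegral.integral_neg]
    congr! 3 with θ
    rw [mul_neg, mul_neg, neg_inj, ← Complex.exp_add, ← Complex.exp_add, ← Complex.exp_add]
    congr 1
    push_cast
    ring

/-! ### Calculus of determinants and inverse matrices -/

section calculus

variable {ι : Type*} [Fintype ι]

lemma hasDerivAt_dotProduct {x y : ℝ → ι → ℂ} {x' y' : ι → ℂ} {u : ℝ}
    (hx : ∀ i, HasDerivAt (fun v => x v i) (x' i) u)
    (hy : ∀ i, HasDerivAt (fun v => y v i) (y' i) u) :
    HasDerivAt (fun v => x v ⬝ᵥ y v) (x' ⬝ᵥ y u + x u ⬝ᵥ y') u := by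
  simp only [dotProduct, ← Finset.sum_add_distrib]
  exact HasDerivAt.fun_sum fun i _ => (hx i).mul (hy i)

lemma hasDerivAt_mulVec {A : ℝ → Matrix ι ι ℂ} {A' : Matrix ι ι ℂ} {y : ℝ → ι → ℂ} {y' : ι → ℂ}
    {u : ℝ} (hA : ∀ i j, HasDerivAt (fun v => A v i j) (A' i j) u)
    (hy : ∀ i, HasDerivAt (fun v => y v i) (y' i) u) (i : ι) :
    HasDerivAt (fun v => (A v *ᵥ y v) i) ((A' *ᵥ y u + A u *ᵥ y') i) u :=
  hasDerivAt_dotProduct (fun j => hA i j) hy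

variable [DecidableEq ι]

/-- The determinant is multilinear in the rows, so its derivative is the sum over the rows of the
determinants with that one row differentiated. -/
lemma hasDerivAt_det_s14 {T : ℝ → Matrix ι ι ℂ} {T' : Matrix ι ι ℂ} {u : ℝ}
    (hT : ∀ i j, HasDerivAt (fun v => T v i j) (T' i j) u) :
    HasDerivAt (fun v => (T v).det) (∑ i, ((T u).updateRow i (T' i)).det) u := by
  let f : ContinuousMultilinearMap ℂ (fun _ : ι => ι → ℂ) ℂ :=
    ⟨(detRowAlternating (R := ℂ) (n := ι)).toMultilinearMap, by
      exact Continuous.matrix_det (A := fun M : ι → ι → ℂ => (M : Matrix ι ι ℂ)) continuous_id⟩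
  have hT2 : HasDerivAt (fun v => (T v : ι → ι → ℂ)) (T' : ι → ι → ℂ) u :=
    hasDerivAt_pi.2 fun i => hasDerivAt_pi.2 fun j => hT i j
  have h := ((f.hasFDerivAt (T u : ι → ι → ℂ)).restrictScalars ℝ).comp_hasDerivAt u hT2
  refine h.congr_deriv ?_
  rw [ContinuousLinearMap.coe_restrictScalars']
  exact f.linearDeriv_apply _ _

lemma differentiableAt_inv_apply {T : ℝ → Matrix ι ι ℂ} {u : ℝ}
    (hT : ∀ i j, DifferentiableAt ℝ (fun v => T v i j) u) (h0 : (T u).det ≠ 0) (i j : ι) :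
    DifferentiableAt ℝ (fun v => (T v)⁻¹ i j) u := by
  simp only [Matrix.inv_def, Matrix.smul_apply, smul_eq_mul, Ring.inverse_eq_inv', adjugate_apply]
  refine DifferentiableAt.mul (DifferentiableAt.inv ?_ h0) ?_
  · exact (hasDerivAt_det_s14 fun i j => (hT i j).hasDerivAt).differentiableAt
  · refine (hasDerivAt_det_s14 (T' := fun k l => if k = j then 0 else deriv (fun v => T v k l) u)
      fun k l => ?_).differentiableAt
    by_cases hk : k = j
    · subst hk
      simpa using hasDerivAt_const u _
    · simpa [hk, Matrix.updateRow_ne hk] using (hT k l).hasDerivAt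

lemma eventually_det_ne_zero {T : ℝ → Matrix ι ι ℂ} {u : ℝ}
    (hT : ∀ i j, DifferentiableAt ℝ (fun v => T v i j) u) (h0 : (T u).det ≠ 0) :
    ∀ᶠ v in nhds u, (T v).det ≠ 0 :=
  (hasDerivAt_det_s14 fun i j => (hT i j).hasDerivAt).continuousAt.eventually_ne h0

lemma hasDerivAt_inv_apply {T : ℝ → Matrix ι ι ℂ} {T' : Matrix ι ι ℂ} {u : ℝ}
    (hT : ∀ i j, HasDerivAt (fun v => T v i j) (T' i j) u) (h0 : (T u).det ≠ 0) (i j : ι) :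
    HasDerivAt (fun v => (T v)⁻¹ i j) ((-((T u)⁻¹ * T' * (T u)⁻¹)) i j) u := by
  have hd := fun i j => (differentiableAt_inv_apply
    (fun i j => (hT i j).differentiableAt) h0 i j).hasDerivAt
  set D : Matrix ι ι ℂ := fun i j => deriv (fun v => (T v)⁻¹ i j) u with hD
  -- Differentiate `T T⁻¹ = 1`, which holds near `u`.
  have key : T' * (T u)⁻¹ + T u * D = 0 := by
    ext k l
    have h1 : HasDerivAt (fun v => (T v * (T v)⁻¹) k l) ((T' * (T u)⁻¹ + T u * D) k l) u :=
      hasDerivAt_dotProduct (fun j => hT k j) (fun j => hd j l)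
    have h2 : (fun v => (T v * (T v)⁻¹) k l) =ᶠ[nhds u] fun _ => (1 : Matrix ι ι ℂ) k l := by
      filter_upwards [eventually_det_ne_zero (fun i j => (hT i j).differentiableAt) h0] with v hv
      rw [Matrix.mul_nonsing_inv _ (isUnit_iff_ne_zero.2 hv)]
    exact h1.unique ((hasDerivAt_const u _).congr_of_eventuallyEq h2)
  have hDeq : D = -((T u)⁻¹ * T' * (T u)⁻¹) := by
    have := congrArg (fun M => (T u)⁻¹ * M) key
    simp only [mul_add, mul_zero, ← mul_assoc,
      Matrix.nonsing_inv_mul _ (isUnit_iff_ne_zero.2 h0), one_mul] at this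
    exact eq_neg_of_add_eq_zero_right this
  rw [← hDeq]
  exact hd i j

lemma hasDerivAt_dotProduct_inv_mulVec {T : ℝ → Matrix ι ι ℂ} {T' : Matrix ι ι ℂ}
    {x y : ℝ → ι → ℂ} {x' y' : ι → ℂ} {u : ℝ}
    (hT : ∀ i j, HasDerivAt (fun v => T v i j) (T' i j) u) (h0 : (T u).det ≠ 0)
    (hx : ∀ i, HasDerivAt (fun v => x v i) (x' i) u)
    (hy : ∀ i, HasDerivAt (fun v => y v i) (y' i) u) :
    HasDerivAt (fun v => x v ⬝ᵥ ((T v)⁻¹ *ᵥ y v))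
      (x' ⬝ᵥ ((T u)⁻¹ *ᵥ y u) + x u ⬝ᵥ ((T u)⁻¹ *ᵥ y')
        - x u ⬝ᵥ (((T u)⁻¹ * T' * (T u)⁻¹) *ᵥ y u)) u := by
  refine (hasDerivAt_dotProduct hx
    (hasDerivAt_mulVec (hasDerivAt_inv_apply hT h0) hy)).congr_deriv ?_
  rw [dotProduct_add, neg_mulVec, dotProduct_neg]
  ring

/-- In `r T⁻¹ (T S + c eᵀ) T⁻¹ x` the shift term loses its left inverse and the rank-one term
factors. -/
lemma dotProduct_inv_mul_inv_mulVec {T : Matrix ι ι ℂ} (h0 : T.det ≠ 0) (S : Matrix ι ι ℂ)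
    (r c e x : ι → ℂ) :
    r ⬝ᵥ ((T⁻¹ * (T * S + vecMulVec c e) * T⁻¹) *ᵥ x) =
      (r ᵥ* S) ⬝ᵥ (T⁻¹ *ᵥ x) + (r ⬝ᵥ (T⁻¹ *ᵥ c)) * (e ⬝ᵥ (T⁻¹ *ᵥ x)) := by
  rw [mul_add, ← mul_assoc, Matrix.nonsing_inv_mul _ (isUnit_iff_ne_zero.2 h0), one_mul, add_mul,
    add_mulVec, dotProduct_add, ← mulVec_mulVec, dotProduct_mulVec r S, mul_vecMulVec,
    ← mulVec_mulVec, vecMulVec_mulVec]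
  simp [mul_comm]

end calculus

/-! ### Toeplitz matrices and their shifts -/

section Toeplitz

variable (m : ℕ) (t s₁ s₂ : ℝ)

/-- The Toeplitz matrix of size `m + 1`, whose determinant is `τ_{m+1}`. -/
noncomputable def toeMat : Matrix (Fin (m + 1)) (Fin (m + 1)) ℂ :=
  Matrix.of fun k l => toeplitzMoment ((k : ℤ) - (l : ℤ)) t s₁ s₂

/-- The row of index `m + 1` of the infinite Toeplitz matrix, cut to the columns `0, …, m`. -/
noncomputable def toeRow (l : Fin (m + 1)) : ℂ :=
  toeplitzMoment ((m : ℤ) + 1 - (l : ℤ)) t s₁ s₂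

/-- The column of index `m + j` of the infinite Toeplitz matrix, cut to the rows `0, …, m`. -/
noncomputable def toeCol (j : ℤ) (k : Fin (m + 1)) : ℂ :=
  toeplitzMoment ((k : ℤ) - ((m : ℤ) + j)) t s₁ s₂

/-- The indicator vector of the index `m - j` in `Fin (m + 1)`; it is zero if `m < j`. -/
def lastVec (j : ℕ) (l : Fin (m + 1)) : ℂ := if (l : ℕ) + j = m then 1 else 0

/-- The shift matrix; multiplying by it on the right moves column `l + j` to column `l`, and column
`l` becomes zero if `l + j > m`. -/
def shiftMat (j : ℕ) : Matrix (Fin (m + 1)) (Fin (m + 1)) ℂ :=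
  Matrix.of fun i l => if (i : ℕ) = (l : ℕ) + j then 1 else 0

lemma sum_mul_shiftMat (g : ℤ → ℂ) (j : ℕ) (l : Fin (m + 1)) :
    ∑ i : Fin (m + 1), g (i : ℤ) * shiftMat m j i l
      = if (l : ℕ) + j ≤ m then g ((l : ℤ) + j) else 0 := by
  split_ifs with h
  · rw [Finset.sum_eq_single (⟨(l : ℕ) + j, by omega⟩ : Fin (m + 1))]
    · simp [shiftMat]
    · intro b _ hb
      have : (b : ℕ) ≠ l + j := fun h' => hb (Fin.ext h')
      simp [shiftMat, this]
    · simp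
  · refine Finset.sum_eq_zero fun b _ => ?_
    have : (b : ℕ) ≠ l + j := by omega
    simp [shiftMat, this]

/-- Shifting by one the values of `g` on `0, …, m`: the value at `m + 1`, which the shift matrix
misses, is supplied by a correction in the last place. -/
lemma shift_one (g : ℤ → ℂ) (l : Fin (m + 1)) :
    ∑ i : Fin (m + 1), g (i : ℤ) * shiftMat m 1 i l + g ((m : ℤ) + 1) * lastVec m 0 l
      = g ((l : ℤ) + 1) := by
  rw [sum_mul_shiftMat]
  by_cases h : (l : ℕ) = m
  · simp [lastVec, h]
  · have : (l : ℕ) + 1 ≤ m := by omega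
    simp [lastVec, h, this]

lemma shift_two (g : ℤ → ℂ) (l : Fin (m + 1)) :
    ∑ i : Fin (m + 1), g (i : ℤ) * shiftMat m 2 i l + g ((m : ℤ) + 1) * lastVec m 1 l
      + g ((m : ℤ) + 2) * lastVec m 0 l = g ((l : ℤ) + 2) := by
  rw [sum_mul_shiftMat]
  by_cases h : (l : ℕ) = m
  · simp [lastVec, h]
  · by_cases h1 : (l : ℕ) + 1 = m
    · have h2 : ¬ (l : ℕ) + 2 ≤ m := by omega
      have h3 : (l : ℤ) + 2 = m + 1 := by omega
      simp [lastVec, h, h1, h2, h3]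
    · have h2 : (l : ℕ) + 2 ≤ m := by omega
      simp [lastVec, h, h1, h2]

lemma toeMat_mul_shift_one (k l : Fin (m + 1)) :
    (toeMat m t s₁ s₂ * shiftMat m 1 + vecMulVec (toeCol m t s₁ s₂ 1) (lastVec m 0)) k l
      = toeplitzMoment ((k : ℤ) - l - 1) t s₁ s₂ := by
  rw [sub_sub, ← shift_one m (fun x => toeplitzMoment ((k : ℤ) - x) t s₁ s₂) l]
  rfl

lemma toeRow_shift_one (l : Fin (m + 1)) :
    (toeRow m t s₁ s₂ ᵥ* shiftMat m 1 + toeplitzMoment 0 t s₁ s₂ • lastVec m 0) l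
      = toeplitzMoment ((m : ℤ) + 1 - l - 1) t s₁ s₂ := by
  rw [sub_sub, ← shift_one m (fun x => toeplitzMoment ((m : ℤ) + 1 - x) t s₁ s₂) l, sub_self]
  rfl

lemma toeMat_mul_shift_two (k l : Fin (m + 1)) :
    (toeMat m t s₁ s₂ * shiftMat m 2 + vecMulVec (toeCol m t s₁ s₂ 1) (lastVec m 1)
      + vecMulVec (toeCol m t s₁ s₂ 2) (lastVec m 0)) k l
      = toeplitzMoment ((k : ℤ) - l - 2) t s₁ s₂ := by
  rw [sub_sub, ← shift_two m (fun x => toeplitzMoment ((k : ℤ) - x) t s₁ s₂) l]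
  rfl

lemma toeRow_shift_two (l : Fin (m + 1)) :
    (toeRow m t s₁ s₂ ᵥ* shiftMat m 2 + toeplitzMoment 0 t s₁ s₂ • lastVec m 1
      + toeplitzMoment (-1) t s₁ s₂ • lastVec m 0) l
      = toeplitzMoment ((m : ℤ) + 1 - l - 2) t s₁ s₂ := by
  rw [sub_sub, ← shift_two m (fun x => toeplitzMoment ((m : ℤ) + 1 - x) t s₁ s₂) l, sub_self,
    show (m : ℤ) + 1 - (m + 2) = -1 by ring]
  rfl

lemma lastVec_vecMul_shift : lastVec m 0 ᵥ* shiftMat m 1 = lastVec m 1 := by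
  ext l
  have h := sum_mul_shiftMat m (fun x => if x = (m : ℤ) then 1 else 0) 1 l
  have h2 : (lastVec m 0 ᵥ* shiftMat m 1) l
      = ∑ i : Fin (m + 1), (if (i : ℤ) = (m : ℤ) then 1 else 0) * shiftMat m 1 i l := by
    simp [vecMul, dotProduct, lastVec]
  rw [h2, h, lastVec]
  split_ifs <;> first | rfl | omega

lemma lastVec_zero : lastVec m 0 = Pi.single (Fin.last m) 1 := by
  ext l
  simp [lastVec, Pi.single_apply, Fin.ext_iff]

lemma toeplitzTau_succ : toeplitzTau (m + 1) t s₁ s₂ = (toeMat m t s₁ s₂).det := rfl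

/-- Only the last row survives in the row expansion of `∂τ_{m+1}/∂t`, since differentiating any
other row produces the row below it. -/
lemma hasDerivAt_tau_t :
    HasDerivAt (fun u => toeplitzTau (m + 1) u s₁ s₂)
      (((toeMat m t s₁ s₂).updateRow (Fin.last m) (toeRow m t s₁ s₂)).det) t := by
  have h := hasDerivAt_det_s14 (T := fun u => toeMat m u s₁ s₂)
    (T' := fun k l => toeplitzMoment ((k : ℤ) - l + 1) t s₁ s₂)
    (u := t) (fun k l => hasDerivAt_moment_t _ _ _ _)
  refine h.congr_deriv ?_
  rw [Finset.sum_eq_single (Fin.last m)]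
  · congr 2
    ext l
    simp only [toeRow, Fin.val_last]
    congr 1
    ring
  · intro k _ hk
    have hk' : (k : ℕ) < m := by
      have := Fin.val_lt_last hk
      simpa using this
    have hne : k ≠ ⟨(k : ℕ) + 1, by omega⟩ := fun h' => by
      have := congrArg Fin.val h'
      simp at this
    refine Matrix.det_zero_of_row_eq hne ?_
    rw [Matrix.updateRow_self, Matrix.updateRow_ne hne.symm]
    ext l
    simp only [toeMat, Matrix.of_apply]
    congr 1
    push_cast
    ring
  · simp

/-- `(∂τ_{m+1}/∂t)/τ_{m+1} = r T⁻¹ e`. If `τ_{m+1} = 0`, both sides are zero, by the conventions for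
division by zero and for the inverse of a singular matrix. -/
lemma deriv_tau_t_div :
    deriv (fun u => toeplitzTau (m + 1) u s₁ s₂) t / toeplitzTau (m + 1) t s₁ s₂
      = toeRow m t s₁ s₂ ⬝ᵥ ((toeMat m t s₁ s₂)⁻¹ *ᵥ lastVec m 0) := by
  rw [(hasDerivAt_tau_t m t s₁ s₂).deriv, ← Matrix.cramer_transpose_apply,
    Matrix.cramer_eq_adjugate_mulVec, ← Matrix.adjugate_transpose, Matrix.mulVec_transpose,
    dotProduct_mulVec, lastVec_zero, dotProduct_single_one, toeplitzTau_succ, Matrix.inv_def,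
    Matrix.vecMul_smul, Ring.inverse_eq_inv', Pi.smul_apply, smul_eq_mul, div_eq_inv_mul]

/-- Cramer's rule for the corner entry of `T⁻¹`; the minor of a Toeplitz matrix is again Toeplitz. -/
lemma tau_ratio :
    toeplitzTau m t s₁ s₂ / toeplitzTau (m + 1) t s₁ s₂
      = lastVec m 0 ⬝ᵥ ((toeMat m t s₁ s₂)⁻¹ *ᵥ lastVec m 0) := by
  rw [lastVec_zero, single_one_dotProduct, Matrix.mulVec_single_one, Matrix.col_apply,
    Matrix.inv_def, Matrix.smul_apply, Matrix.adjugate_fin_succ_eq_det_submatrix,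
    Ring.inverse_eq_inv', smul_eq_mul, toeplitzTau_succ, div_eq_inv_mul]
  have h : (toeMat m t s₁ s₂).submatrix (Fin.last m).succAbove (Fin.last m).succAbove
      = Matrix.of fun k l : Fin m => toeplitzMoment ((k : ℤ) - (l : ℤ)) t s₁ s₂ := by
    ext k l
    simp [toeMat]
  rw [h, Even.neg_one_pow ⟨_, rfl⟩, one_mul]
  rfl

/-! ### Derivatives of `G`, of the Schur complement and of the corner entry -/

/-- `B(x, y) = xᵀ T⁻¹ y` for the Toeplitz matrix `T` of size `m + 1`. -/
noncomputable def toeB (x y : Fin (m + 1) → ℂ) : ℂ := x ⬝ᵥ ((toeMat m t s₁ s₂)⁻¹ *ᵥ y)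

/-- The Schur complement `μ₀ - r T⁻¹ c` (which equals `τ_{m+2} / τ_{m+1}`). -/
noncomputable def toeSchur : ℂ :=
  toeplitzMoment 0 t s₁ s₂ - toeB m t s₁ s₂ (toeRow m t s₁ s₂) (toeCol m t s₁ s₂ 1)

variable {m t s₁ s₂}

lemma toeB_add_left (x x' y : Fin (m + 1) → ℂ) :
    toeB m t s₁ s₂ (x + x') y = toeB m t s₁ s₂ x y + toeB m t s₁ s₂ x' y := add_dotProduct _ _ _

lemma toeB_smul_left (a : ℂ) (x y : Fin (m + 1) → ℂ) :
    toeB m t s₁ s₂ (a • x) y = a * toeB m t s₁ s₂ x y := smul_dotProduct _ _ _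

lemma toeB_neg_left (x y : Fin (m + 1) → ℂ) :
    toeB m t s₁ s₂ (-x) y = -toeB m t s₁ s₂ x y := neg_dotProduct _ _

lemma toeB_neg_right (x y : Fin (m + 1) → ℂ) :
    toeB m t s₁ s₂ x (-y) = -toeB m t s₁ s₂ x y := by
  simp [toeB, mulVec_neg]

lemma toeB_zero_left (y : Fin (m + 1) → ℂ) : toeB m t s₁ s₂ 0 y = 0 := zero_dotProduct _

lemma toeB_zero_right (x : Fin (m + 1) → ℂ) : toeB m t s₁ s₂ x 0 = 0 := by
  simp [toeB]

/-- Derivative of `B(x, y)` in `s₁`. The part of `∂T/∂s₁` of the form `-T S` is multiplied by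
`T⁻¹` on the left, so no inverse is left between `x` and `S`. -/
lemma hasDerivAt_toeB_s₁ (h0 : toeplitzTau (m + 1) t s₁ s₂ ≠ 0)
    {x y : ℝ → Fin (m + 1) → ℂ} {x' y' : Fin (m + 1) → ℂ}
    (hx : ∀ i, HasDerivAt (fun v => x v i) (x' i) s₁)
    (hy : ∀ i, HasDerivAt (fun v => y v i) (y' i) s₁) :
    HasDerivAt (fun u => toeB m t u s₂ (x u) (y u))
      (toeB m t s₁ s₂ x' (y s₁) + toeB m t s₁ s₂ (x s₁) y'
        + toeB m t s₁ s₂ (x s₁ ᵥ* shiftMat m 1) (y s₁)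
        + toeB m t s₁ s₂ (x s₁) (toeCol m t s₁ s₂ 1) * toeB m t s₁ s₂ (lastVec m 0) (y s₁)) s₁ := by
  have hd : (toeMat m t s₁ s₂).det ≠ 0 := h0
  refine (hasDerivAt_dotProduct_inv_mulVec (T := fun u => toeMat m t u s₂)
    (T' := -(toeMat m t s₁ s₂ * shiftMat m 1 + vecMulVec (toeCol m t s₁ s₂ 1) (lastVec m 0)))
    (fun k l => ?_) hd hx hy).congr_deriv ?_
  · rw [Matrix.neg_apply, toeMat_mul_shift_one]
    exact hasDerivAt_moment_s₁ _ _ _ _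
  · rw [mul_neg, neg_mul, neg_mulVec, dotProduct_neg, dotProduct_inv_mul_inv_mulVec hd]
    simp only [toeB]
    ring

lemma hasDerivAt_toeRow_s₁ (l : Fin (m + 1)) :
    HasDerivAt (fun u => toeRow m t u s₂ l)
      ((-(toeRow m t s₁ s₂ ᵥ* shiftMat m 1 + toeplitzMoment 0 t s₁ s₂ • lastVec m 0)) l) s₁ := by
  rw [Pi.neg_apply, toeRow_shift_one]
  exact hasDerivAt_moment_s₁ _ _ _ _

lemma hasDerivAt_toeRow_s₂ (l : Fin (m + 1)) :
    HasDerivAt (fun u => toeRow m t s₁ u l)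
      ((-(toeRow m t s₁ s₂ ᵥ* shiftMat m 2 + toeplitzMoment 0 t s₁ s₂ • lastVec m 1
      + toeplitzMoment (-1) t s₁ s₂ • lastVec m 0)) l) s₂ := by
  rw [Pi.neg_apply, toeRow_shift_two]
  exact hasDerivAt_moment_s₂ _ _ _ _

lemma hasDerivAt_toeCol_s₁ (k : Fin (m + 1)) :
    HasDerivAt (fun u => toeCol m t u s₂ 1 k) ((-toeCol m t s₁ s₂ 2) k) s₁ := by
  refine (hasDerivAt_moment_s₁ _ _ _ _).congr_deriv ?_
  rw [Pi.neg_apply, toeCol, sub_sub, add_assoc]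
  rfl

/-- `∂G/∂s₁ = -σ p`, with `σ` the Schur complement and `p` the corner entry of `T⁻¹`. -/
lemma hasDerivAt_G_s₁ (h0 : toeplitzTau (m + 1) t s₁ s₂ ≠ 0) :
    HasDerivAt (fun u => toeB m t u s₂ (toeRow m t u s₂) (lastVec m 0))
      (-(toeSchur m t s₁ s₂ * toeB m t s₁ s₂ (lastVec m 0) (lastVec m 0))) s₁ := by
  refine (hasDerivAt_toeB_s₁ h0 (y := fun _ => lastVec m 0) (y' := 0)
    hasDerivAt_toeRow_s₁ (fun i => hasDerivAt_const _ _)).congr_deriv ?_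
  rw [toeB_neg_left, toeB_add_left, toeB_smul_left, toeB_zero_right, toeSchur]
  ring

lemma hasDerivAt_p_s₁ (h0 : toeplitzTau (m + 1) t s₁ s₂ ≠ 0) :
    HasDerivAt (fun u => toeB m t u s₂ (lastVec m 0) (lastVec m 0))
      (toeB m t s₁ s₂ (lastVec m 1) (lastVec m 0)
        + toeB m t s₁ s₂ (lastVec m 0) (toeCol m t s₁ s₂ 1)
          * toeB m t s₁ s₂ (lastVec m 0) (lastVec m 0)) s₁ := by
  refine (hasDerivAt_toeB_s₁ h0 (x := fun _ => lastVec m 0) (y := fun _ => lastVec m 0)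
    (x' := 0) (y' := 0)
    (fun i => hasDerivAt_const _ _) (fun i => hasDerivAt_const _ _)).congr_deriv ?_
  rw [toeB_zero_left, toeB_zero_right, lastVec_vecMul_shift]
  ring

lemma hasDerivAt_schur_s₁ (h0 : toeplitzTau (m + 1) t s₁ s₂ ≠ 0) :
    HasDerivAt (fun u => toeSchur m t u s₂)
      (-(toeplitzMoment (-1) t s₁ s₂
          - toeB m t s₁ s₂ (toeRow m t s₁ s₂) (toeCol m t s₁ s₂ 2))
        + toeSchur m t s₁ s₂ * toeB m t s₁ s₂ (lastVec m 0) (toeCol m t s₁ s₂ 1)) s₁ := by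
  refine ((hasDerivAt_moment_s₁ 0 t s₁ s₂).sub
    (hasDerivAt_toeB_s₁ h0 hasDerivAt_toeRow_s₁ hasDerivAt_toeCol_s₁)).congr_deriv ?_
  rw [toeB_neg_left, toeB_add_left, toeB_smul_left, toeB_neg_right, toeSchur, zero_sub]
  ring

lemma hasDerivAt_G_s₂ (h0 : toeplitzTau (m + 1) t s₁ s₂ ≠ 0) :
    HasDerivAt (fun u => toeB m t s₁ u (toeRow m t s₁ u) (lastVec m 0))
      (-(toeSchur m t s₁ s₂ * toeB m t s₁ s₂ (lastVec m 1) (lastVec m 0)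
        + (toeplitzMoment (-1) t s₁ s₂
          - toeB m t s₁ s₂ (toeRow m t s₁ s₂) (toeCol m t s₁ s₂ 2))
          * toeB m t s₁ s₂ (lastVec m 0) (lastVec m 0))) s₂ := by
  have hd : (toeMat m t s₁ s₂).det ≠ 0 := h0
  refine (hasDerivAt_dotProduct_inv_mulVec (T := fun u => toeMat m t s₁ u)
    (T' := -(toeMat m t s₁ s₂ * shiftMat m 2 + vecMulVec (toeCol m t s₁ s₂ 1) (lastVec m 1)
      + vecMulVec (toeCol m t s₁ s₂ 2) (lastVec m 0)))
    (x := fun u => toeRow m t s₁ u) (y := fun _ => lastVec m 0) (y' := 0)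
    (fun k l => ?_) hd hasDerivAt_toeRow_s₂ (fun i => hasDerivAt_const _ _)).congr_deriv ?_
  · rw [Matrix.neg_apply, toeMat_mul_shift_two]
    exact hasDerivAt_moment_s₂ _ _ _ _
  · have h2 : toeRow m t s₁ s₂ ⬝ᵥ (((toeMat m t s₁ s₂)⁻¹ *
        vecMulVec (toeCol m t s₁ s₂ 2) (lastVec m 0) * (toeMat m t s₁ s₂)⁻¹) *ᵥ lastVec m 0)
        = toeB m t s₁ s₂ (toeRow m t s₁ s₂) (toeCol m t s₁ s₂ 2)
          * toeB m t s₁ s₂ (lastVec m 0) (lastVec m 0) := by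
      have := dotProduct_inv_mul_inv_mulVec hd 0 (toeRow m t s₁ s₂) (toeCol m t s₁ s₂ 2)
        (lastVec m 0) (lastVec m 0)
      simpa [toeB] using this
    rw [mul_neg, neg_mul, neg_mulVec, dotProduct_neg, mul_add, add_mul, add_mulVec,
      dotProduct_add, dotProduct_inv_mul_inv_mulVec hd, h2]
    simp only [toeSchur, toeB, neg_dotProduct, add_dotProduct, smul_dotProduct, mulVec_zero,
      dotProduct_zero, smul_eq_mul]
    ring

lemma eventually_tau_ne_zero_s₁ (h0 : toeplitzTau (m + 1) t s₁ s₂ ≠ 0) :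
    ∀ᶠ u in nhds s₁, toeplitzTau (m + 1) t u s₂ ≠ 0 :=
  eventually_det_ne_zero (T := fun u => toeMat m t u s₂)
    (fun _ _ => (hasDerivAt_moment_s₁ _ _ _ _).differentiableAt) h0

lemma differentiableAt_tau_s₁ (n : ℕ) :
    DifferentiableAt ℝ (fun u => toeplitzTau n t u s₂) s₁ :=
  (hasDerivAt_det_s14 (T := fun u => Matrix.of fun k l : Fin n =>
      toeplitzMoment ((k : ℤ) - (l : ℤ)) t u s₂)
    (fun _ _ => hasDerivAt_moment_s₁ _ _ _ _)).differentiableAt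

/-- The logarithmic derivative of `τ_{m+1} / τ_m` is `-p'/p`, since `p = τ_m / τ_{m+1}`. -/
lemma deriv_log_ratio (h0 : toeplitzTau (m + 1) t s₁ s₂ ≠ 0) (h1 : toeplitzTau m t s₁ s₂ ≠ 0)
    {p' : ℂ}
    (hp : HasDerivAt (fun u => toeB m t u s₂ (lastVec m 0) (lastVec m 0)) p' s₁) :
    (deriv (fun u => toeplitzTau (m + 1) t u s₂) s₁ / toeplitzTau (m + 1) t s₁ s₂
        - deriv (fun u => toeplitzTau m t u s₂) s₁ / toeplitzTau m t s₁ s₂)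
      * toeB m t s₁ s₂ (lastVec m 0) (lastVec m 0) = -p' := by
  have hq := ((differentiableAt_tau_s₁ (t := t) (s₂ := s₂) m).hasDerivAt).fun_div
    ((differentiableAt_tau_s₁ (t := t) (s₁ := s₁) (s₂ := s₂) (m + 1)).hasDerivAt) h0
  have hp2 : HasDerivAt (fun u => toeplitzTau m t u s₂ / toeplitzTau (m + 1) t u s₂) p' s₁ := by
    simpa only [tau_ratio, toeB] using hp
  rw [hp2.unique hq, toeB, ← tau_ratio]
  field_simp
  ring

end Toeplitz

/-! ### The identity -/

theorem toeplitz_two_toda_identity (n : ℕ) (hn : 1 ≤ n) (t s₁ s₂ : ℝ)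
    (hτn : toeplitzTau n t s₁ s₂ ≠ 0) (hτn1 : toeplitzTau (n - 1) t s₁ s₂ ≠ 0)
    (G : ℝ → ℝ → ℝ → ℂ)
    (hG : ∀ t' s₁' s₂', G t' s₁' s₂' =
      deriv (fun u => toeplitzTau n u s₁' s₂') t' / toeplitzTau n t' s₁' s₂') :
    deriv (fun v => G t s₁ v) s₂ =
      -2 * (deriv (fun u => toeplitzTau n t u s₂) s₁ / toeplitzTau n t s₁ s₂
              - deriv (fun u => toeplitzTau (n - 1) t u s₂) s₁ / toeplitzTau (n - 1) t s₁ s₂) *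
          deriv (fun u => G t u s₂) s₁
        - iteratedDeriv 2 (fun u => G t u s₂) s₁ := by
  obtain ⟨m, rfl⟩ : ∃ m, n = m + 1 := ⟨n - 1, by omega⟩
  rw [Nat.add_sub_cancel] at hτn1 ⊢
  have hGB : ∀ a b, G t a b = toeB m t a b (toeRow m t a b) (lastVec m 0) := fun a b => by
    rw [hG, deriv_tau_t_div, toeB]
  have hG2 : deriv (fun v => G t s₁ v) s₂ = _ :=
    ((hasDerivAt_G_s₂ hτn).congr_of_eventuallyEq (.of_forall fun v => hGB s₁ v)).deriv
  have hG1 : ∀ a, toeplitzTau (m + 1) t a s₂ ≠ 0 → deriv (fun u => G t u s₂) a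
      = -(toeSchur m t a s₂ * toeB m t a s₂ (lastVec m 0) (lastVec m 0)) := fun a ha =>
    ((hasDerivAt_G_s₁ ha).congr_of_eventuallyEq (.of_forall fun u => hGB u s₂)).deriv
  have hG11 : deriv (deriv fun u => G t u s₂) s₁ = _ :=
    ((((hasDerivAt_schur_s₁ hτn).fun_mul (hasDerivAt_p_s₁ hτn)).fun_neg).congr_of_eventuallyEq
      ((eventually_tau_ne_zero_s₁ hτn).mono fun u hu => hG1 u hu)).deriv
  have hlog := deriv_log_ratio hτn hτn1 (hasDerivAt_p_s₁ hτn)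
  rw [hG2, iteratedDeriv_succ, iteratedDeriv_one, hG11, hG1 s₁ hτn]
  linear_combination (-2 * toeSchur m t s₁ s₂) * hlog
end
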